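/- Let k ≥ 2, n > 5, and suppose L_n^{(k)} = b·10^{d} with integers 1 ≤ b ≤ 9 and d ≥ 2. Then n < 2.1·10^{17}·k^4·(log k)^4. -/

import Mathlib

/-- Shifted `k`-generalized Lucas sequence: `genLucas k m` equals `L^{(k)}_{m - (k-2)}`,
so that index `m = 0` corresponds to `n = 2 - k`.  The initial values are
`L^{(k)}_{2-k} = ⋯ = L^{(k)}_{-1} = 0`, `L^{(k)}_0 = 2`, `L^{(k)}_1 = 1`, and each term
afterwards is the sum of the `k` preceding terms. -/
def genLucas (k : ℕ) : ℕ → ℤ := fun m =>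
  if h1 : m < k - 2 then 0
  else if h2 : m = k - 2 then 2
  else if h3 : m = k - 1 then 1
  else ∑ i ∈ Finset.range k, genLucas k (m - 1 - i)
decreasing_by omega

/-- The `k`-generalized Lucas number `L^{(k)}_n` for `n ≥ 0`. -/
def lucasL (k n : ℕ) : ℤ := genLucas k (n + k - 2)

/-!
For `k = 2` no term of the sequence is divisible by `5`. For `k ≥ 3` let `α` be the dominant root
of the characteristic polynomial. Then `L_n^{(k)} = b * 10 ^ d` makes the linear form
`n log α - d log 10 - log γ` exponentially small, where `γ = b * lucasDen k α / lucasNum α`. If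
moreover `16 * k ≤ n`, then `L_n^{(k)}` is divisible by `2 ^ (2 * k)`, which bounds `2 ^ (k + 1)` by
`6 * n ^ 3`, so that `k` is at most logarithmic in `n`.

For `n ≥ 2 ^ 512` the smallness of the form contradicts the method of Gelfond and Baker: Siegel's
lemma gives a function `∑ p(λ) * (α ^ λ₁ * 10 ^ λ₂ * γ ^ λ₃) ^ z` that almost vanishes to high order
at many integers `z`, since replacing `log γ` by `n log α - d log 10` hardly changes its
derivatives. Extrapolation, which trades order of vanishing for twice as many zeros, is iterated
until a Vandermonde argument shows that all the `p(λ)` vanish. For `n < 2 ^ 512` only `k < 1538`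
remain, and for each of them fixed-point approximations of the logarithms and a convergent of
`log α / log 10` exclude solutions, as in the reduction method of Baker and Davenport.
-/

open Finset Polynomial

section Recurrence

variable {k : ℕ}

lemma genLucas_of_lt {m : ℕ} (h : m < k - 2) : genLucas k m = 0 := by
  rw [genLucas, dif_pos h]

lemma genLucas_sub_two (k : ℕ) : genLucas k (k - 2) = 2 := by
  rw [genLucas, dif_neg (lt_irrefl _), dif_pos rfl]

lemma genLucas_sub_one (hk : 2 ≤ k) : genLucas k (k - 1) = 1 := by
  rw [genLucas, dif_neg (by lia), dif_neg (by lia), dif_pos rfl]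

lemma genLucas_add_order (hk : 2 ≤ k) (m : ℕ) :
    genLucas k (m + k) = ∑ j ∈ range k, genLucas k (m + j) := by
  rw [genLucas, dif_neg (by lia), dif_neg (by lia), dif_neg (by lia), ← sum_range_reflect]
  exact sum_congr rfl fun i hi => congrArg _ (by have := mem_range.1 hi; lia)

lemma genLucas_order (hk : 2 ≤ k) : genLucas k k = 3 := by
  have hsum := genLucas_add_order hk 0
  obtain ⟨j, rfl⟩ := Nat.exists_eq_add_of_le' hk
  simp only [zero_add] at hsum
  rw [hsum, sum_range_succ, sum_range_succ,
    sum_eq_zero fun i hi => genLucas_of_lt (by simpa using hi)]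
  have h2 := genLucas_sub_two (j + 2)
  have h1 := genLucas_sub_one hk
  simp only [Nat.add_sub_cancel, Nat.reduceSubDiff] at h1 h2
  rw [h1, h2]
  norm_num

/-- Subtracting two consecutive instances of the defining recurrence leaves three terms. -/
lemma genLucas_add_order_add_one (hk : 2 ≤ k) (m : ℕ) :
    genLucas k (m + k + 1) = 2 * genLucas k (m + k) - genLucas k m := by
  have hsucc := genLucas_add_order hk (m + 1)
  simp only [add_right_comm m 1, add_assoc m _ 1] at hsucc
  have htop := sum_range_succ (fun j => genLucas k (m + j)) k
  rw [sum_range_succ', add_zero] at htop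
  rw [← add_assoc] at hsucc
  linarith [genLucas_add_order hk m]

lemma lucasL_zero (k : ℕ) : lucasL k 0 = 2 := by
  rw [lucasL, zero_add, genLucas_sub_two]

lemma lucasL_one (hk : 2 ≤ k) : lucasL k 1 = 1 := by
  rw [lucasL, show 1 + k - 2 = k - 1 by lia, genLucas_sub_one hk]

lemma lucasL_add_order_add_one (hk : 2 ≤ k) (n : ℕ) :
    lucasL k (n + k + 1) = 2 * lucasL k (n + k) - lucasL k n := by
  have h := genLucas_add_order_add_one hk (n + k - 2)
  simpa only [lucasL, show n + k + 1 + k - 2 = n + k - 2 + k + 1 by lia,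
    show n + k + k - 2 = n + k - 2 + k by lia] using h

lemma lucasL_add_two_of_le {s : ℕ} (hs : s + 2 ≤ k) : lucasL k (s + 2) = 2 ^ s * 3 := by
  have hk : 2 ≤ k := by lia
  rw [lucasL, show s + 2 + k - 2 = s + k by lia]
  induction s with
  | zero => simp [genLucas_order hk]
  | succ s ih =>
    rw [show s + 1 + k = s + k + 1 by ring, genLucas_add_order_add_one hk, ih (by lia),
      genLucas_of_lt (by lia)]
    ring

end Recurrence

section OrderTwo

lemma lucasL_two_add_two (n : ℕ) : lucasL 2 (n + 2) = lucasL 2 n + lucasL 2 (n + 1) := by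
  have h := genLucas_add_order le_rfl n
  simpa [lucasL, sum_range_succ] using h

lemma five_dvd_lucasL_two_succ_sub (n : ℕ) : (5 : ℤ) ∣ lucasL 2 (n + 1) - 3 * lucasL 2 n := by
  induction n with
  | zero => norm_num [lucasL_zero, lucasL_one]
  | succ n ih => have := lucasL_two_add_two n; lia

lemma not_five_dvd_lucasL_two (n : ℕ) : ¬ (5 : ℤ) ∣ lucasL 2 n := by
  induction n with
  | zero => norm_num [lucasL_zero]
  | succ n ih =>
    intro h
    have h3 : (5 : ℤ) ∣ 3 * lucasL 2 n :=
      (dvd_sub_right h).1 (five_dvd_lucasL_two_succ_sub n)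
    exact ih (IsCoprime.dvd_of_dvd_mul_left (by norm_num) h3)

end OrderTwo

section TwoAdic

/-- The odd-part coefficient of the main term of the 2-adic expansion of
`L^{(k)}_{(k+1)m+s+2}`; it does not depend on `k`. -/
def twoAdicCoeff (m s : ℕ) : ℤ :=
  (m + s).choose s - 6 * (m + s + 1).choose (s + 1) + 8 * (m + s + 2).choose (s + 2)

lemma twoAdicCoeff_zero_left (s : ℕ) : twoAdicCoeff 0 s = 3 := by simp [twoAdicCoeff]

lemma twoAdicCoeff_succ_succ (m s : ℕ) :
    twoAdicCoeff (m + 1) (s + 1) = twoAdicCoeff (m + 1) s + twoAdicCoeff m (s + 1) := by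
  have pascal : ∀ i, (m + 1 + (s + 1) + i).choose (s + 1 + i) =
      (m + 1 + s + i).choose (s + i) + (m + (s + 1) + i).choose (s + 1 + i) := by
    intro i
    rw [show m + 1 + (s + 1) + i = (m + 1 + s + i) + 1 by ring, show s + 1 + i = s + i + 1 by ring,
      Nat.choose_succ_succ, show m + 1 + s + i = m + (s + 1) + i by ring]
  have h0 := pascal 0
  have h1 := pascal 1
  have h2 := pascal 2
  zify at h0 h1 h2
  simp only [add_zero] at h0
  simp only [twoAdicCoeff]
  linear_combination h0 - 6 * h1 + 8 * h2

lemma succ_mul_add_two_mul_twoAdicCoeff (m s : ℕ) :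
    (s + 1) * (s + 2) * twoAdicCoeff m s =
      (m + s).choose s * (8 * m ^ 2 + (10 * s + 12) * m + 3 * (s + 1) * (s + 2)) := by
  have h1 := Nat.add_one_mul_choose_eq (m + s) s
  have h2 := Nat.add_one_mul_choose_eq (m + s + 1) (s + 1)
  zify at h1 h2
  simp only [twoAdicCoeff]
  linear_combination (6 * (s + 2) - 8 * (m + s + 2) : ℤ) * h1 - 8 * (s + 1) * h2

lemma twoAdicCoeff_zero_right (m : ℕ) : twoAdicCoeff m 0 = 4 * m ^ 2 + 6 * m + 3 := by
  have h := succ_mul_add_two_mul_twoAdicCoeff m 0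
  simp only [add_zero, Nat.choose_zero_right] at h
  push_cast at h
  linarith

/-- The main term of `(-1)^m L^{(k)}_{(k+1)m+r}` modulo `2^(k-1+r)`. -/
def twoAdicMain (m : ℕ) : ℕ → ℤ
  | 0 => 2
  | 1 => 1 + 4 * m
  | s + 2 => 2 ^ s * twoAdicCoeff m s

lemma twoAdicMain_succ_succ (m r : ℕ) :
    twoAdicMain (m + 1) (r + 1) = 2 * twoAdicMain (m + 1) r + twoAdicMain m (r + 1) := by
  match r with
  | 0 => simp only [twoAdicMain]; push_cast; ring
  | 1 => simp only [twoAdicMain, twoAdicCoeff_zero_right]; push_cast; ring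
  | s + 2 => simp only [twoAdicMain, twoAdicCoeff_succ_succ]; ring

lemma lucasL_eq_twoAdicMain_zero {k r : ℕ} (hk : 2 ≤ k) (hr : r ≤ k) :
    lucasL k r = twoAdicMain 0 r := by
  match r with
  | 0 => exact lucasL_zero k
  | 1 => simp [lucasL_one hk, twoAdicMain]
  | s + 2 => rw [lucasL_add_two_of_le hr, twoAdicMain, twoAdicCoeff_zero_left]

lemma two_pow_dvd_lucasL_sub {k : ℕ} (hk : 2 ≤ k) (m : ℕ) {r : ℕ} (hr : r ≤ k) :
    (2 : ℤ) ^ (k - 1 + r) ∣ lucasL k ((k + 1) * m + r) - (-1) ^ m * twoAdicMain m r := by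
  induction m generalizing r with
  | zero => simp [lucasL_eq_twoAdicMain_zero hk hr]
  | succ m ihm =>
    induction r with
    | zero =>
      obtain ⟨x, hx⟩ := ihm (Nat.zero_le k)
      obtain ⟨y, hy⟩ := ihm le_rfl
      have hrec := lucasL_add_order_add_one hk ((k + 1) * m)
      obtain ⟨j, rfl⟩ := Nat.exists_eq_add_of_le' hk
      rw [show j + 2 - 1 = j + 1 by lia] at *
      simp only [twoAdicMain, add_zero] at hx hy ⊢
      rw [show (j + 2 + 1) * (m + 1) = (j + 2 + 1) * m + (j + 2) + 1 by ring, hrec]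
      refine ⟨(-1) ^ m * twoAdicCoeff m j + 2 ^ (j + 3) * y - x, ?_⟩
      linear_combination 2 * hy - hx
    | succ r ihr =>
      obtain ⟨x, hx⟩ := ihr (by lia)
      obtain ⟨y, hy⟩ := ihm hr
      have hrec := lucasL_add_order_add_one hk ((k + 1) * m + (r + 1))
      rw [show (k + 1) * m + (r + 1) + k = (k + 1) * (m + 1) + r by ring] at hrec
      rw [twoAdicMain_succ_succ, ← add_assoc ((k + 1) * (m + 1)), hrec]
      refine ⟨x - y, ?_⟩
      linear_combination 2 * hx - hy

/-- Kummer's theorem: the 2-part of a binomial coefficient is at most its upper index, so the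
2-part of `twoAdicCoeff m s` is polynomially bounded. -/
lemma two_pow_le_of_dvd_twoAdicCoeff {e m s : ℕ} (hms : 0 < m + s)
    (h : (2 : ℤ) ^ e ∣ twoAdicCoeff m s) :
    2 ^ e ≤ (m + s) * (8 * m ^ 2 + (10 * s + 12) * m + 3 * (s + 1) * (s + 2)) := by
  set Q := 8 * m ^ 2 + (10 * s + 12) * m + 3 * (s + 1) * (s + 2)
  have hdvd : 2 ^ e ∣ (m + s).choose s * Q := by
    have := h.mul_left ((s + 1) * (s + 2))
    rw [succ_mul_add_two_mul_twoAdicCoeff] at this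
    exact_mod_cast this
  have hC0 : (m + s).choose s ≠ 0 := (Nat.choose_pos (Nat.le_add_left s m)).ne'
  have hQ0 : Q ≠ 0 := by positivity
  have hval := (Nat.prime_two.pow_dvd_iff_le_factorization (mul_ne_zero hC0 hQ0)).1 hdvd
  rw [Nat.factorization_mul hC0 hQ0, Finsupp.add_apply] at hval
  calc 2 ^ e ≤ 2 ^ ((m + s).choose s).factorization 2 * 2 ^ Q.factorization 2 := by
        rw [← pow_add]
        exact Nat.pow_le_pow_right two_pos hval
    _ ≤ (m + s) * Q :=
        Nat.mul_le_mul (Nat.pow_factorization_choose_le hms) (Nat.ordProj_le 2 hQ0)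

lemma exists_two_pow_dvd_twoAdicCoeff {k n : ℕ} (hk : 3 ≤ k)
    (h : (2 : ℤ) ^ (2 * k) ∣ lucasL k n) :
    ∃ m s, n = (k + 1) * m + (s + 2) ∧ (2 : ℤ) ^ (k + 1) ∣ twoAdicCoeff m s := by
  obtain ⟨m, r, hr, rfl⟩ : ∃ m r, r ≤ k ∧ n = (k + 1) * m + r :=
    ⟨n / (k + 1), n % (k + 1), Nat.le_of_lt_succ (Nat.mod_lt n k.succ_pos),
      (Nat.div_add_mod n (k + 1)).symm⟩
  have hmain : (2 : ℤ) ^ (k - 1 + r) ∣ twoAdicMain m r := by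
    have := (dvd_sub_right ((pow_dvd_pow 2 (by lia)).trans h)).1
      (two_pow_dvd_lucasL_sub (by lia) m hr)
    rcases neg_one_pow_eq_or ℤ m with e | e <;> rw [e] at this <;> simpa using this
  match r with
  | 0 =>
    have : (2 : ℤ) ^ 2 ∣ 2 := (pow_dvd_pow 2 (by lia)).trans hmain
    norm_num at this
  | 1 =>
    have : (2 : ℤ) ^ 1 ∣ 1 + 4 * m := (pow_dvd_pow 2 (by lia)).trans hmain
    lia
  | s + 2 =>
    refine ⟨m, s, rfl, ?_⟩
    rw [twoAdicMain, show k - 1 + (s + 2) = s + (k + 1) by lia, pow_add] at hmain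
    exact (mul_dvd_mul_iff_left (by positivity)).1 hmain

theorem two_pow_succ_le_of_two_pow_dvd_lucasL {k n : ℕ} (hk : 3 ≤ k) (hn : 2 < n)
    (h : (2 : ℤ) ^ (2 * k) ∣ lucasL k n) : 2 ^ (k + 1) ≤ 6 * n ^ 3 := by
  obtain ⟨m, s, rfl, hdvd⟩ := exists_two_pow_dvd_twoAdicCoeff hk h
  have hms : 0 < m + s := by
    rcases Nat.eq_zero_or_pos m with rfl | _ <;> lia
  have hle : 4 * m + (s + 2) ≤ (k + 1) * m + (s + 2) := by gcongr; lia
  have hquad : 8 * m ^ 2 + (10 * s + 12) * m + 3 * (s + 1) * (s + 2) ≤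
      6 * (4 * m + (s + 2)) ^ 2 := by nlinarith [sq_nonneg m, sq_nonneg s]
  calc 2 ^ (k + 1) ≤ _ := two_pow_le_of_dvd_twoAdicCoeff hms hdvd
    _ ≤ (4 * m + (s + 2)) * (6 * (4 * m + (s + 2)) ^ 2) := Nat.mul_le_mul (by lia) hquad
    _ = 6 * (4 * m + (s + 2)) ^ 3 := by ring
    _ ≤ 6 * ((k + 1) * m + (s + 2)) ^ 3 := by gcongr

end TwoAdic

section DominantRoot

/-- `α` is the real root in `(9/5, 2)` of `x ^ k * (2 - x) = 1`, that is, the dominant root of the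
characteristic polynomial `x ^ k - x ^ (k - 1) - ⋯ - 1` of the `k`-generalized Lucas sequence. -/
structure IsDominantRoot (k : ℕ) (α : ℝ) : Prop where
  lower : 9 / 5 < α
  upper : α < 2
  root : α ^ k * (2 - α) = 1

/-- Numerator of the coefficient of `α ^ n` in the Binet-type formula for `L_n^{(k)}`. -/
def lucasNum {R : Type*} [CommRing R] (x : R) : R := (2 * x - 1) * (x - 1)

/-- Denominator of the coefficient of `α ^ n` in the Binet-type formula for `L_n^{(k)}`. -/
def lucasDen {R : Type*} [CommRing R] (k : ℕ) (x : R) : R := x * ((k + 1) * x - 2 * k)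

lemma map_lucasNum {R S : Type*} [CommRing R] [CommRing S] (f : R →+* S) (x : R) :
    f (lucasNum x) = lucasNum (f x) := by
  simp only [lucasNum, map_mul, map_sub, map_one, map_ofNat]

lemma map_lucasDen {R S : Type*} [CommRing R] [CommRing S] (f : R →+* S) (k : ℕ) (x : R) :
    f (lucasDen k x) = lucasDen k (f x) := by
  simp only [lucasDen, map_mul, map_sub, map_add, map_one, map_natCast, map_ofNat]

variable {k : ℕ} {α : ℝ}

lemma add_one_lt_nine_fifths_pow (hk : 3 ≤ k) : (k : ℝ) + 1 < (9 / 5) ^ k := by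
  induction k, hk using Nat.le_induction with
  | base => norm_num
  | succ k hk ih =>
    have : (3 : ℝ) ≤ k := by exact_mod_cast hk
    rw [pow_succ]
    push_cast
    linarith

lemma exists_isDominantRoot (hk : 3 ≤ k) : ∃ α, IsDominantRoot k α := by
  have h5 : (5 : ℝ) < (9 / 5) ^ k :=
    calc (5 : ℝ) < (9 / 5) ^ 3 := by norm_num
      _ ≤ (9 / 5) ^ k := pow_le_pow_right₀ (by norm_num) hk
  have hc : ContinuousOn (fun x : ℝ => x ^ k * (2 - x)) (Set.Icc (9 / 5) 2) := by fun_prop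
  obtain ⟨α, ⟨hlower, hupper⟩, hroot⟩ := intermediate_value_Ioo' (by norm_num) hc
    (show (1 : ℝ) ∈ _ from ⟨by norm_num, by norm_num; linarith⟩)
  exact ⟨α, hlower, hupper, hroot⟩

namespace IsDominantRoot

lemma pos (h : IsDominantRoot k α) : 0 < α := by linarith [h.lower]

lemma one_lt (h : IsDominantRoot k α) : 1 < α := by linarith [h.lower]

lemma three_le (h : IsDominantRoot k α) : 3 ≤ k := by
  by_contra! hk
  have hlt := h.lower
  have hroot := h.root
  have hpow : α ^ k ≤ α ^ 2 := pow_le_pow_right₀ h.one_lt.le (by lia)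
  nlinarith [mul_le_mul_of_nonneg_right hpow (sub_nonneg.2 h.upper.le), sq_nonneg (α - 9 / 5)]

lemma add_one_mul_two_sub_le (h : IsDominantRoot k α) : ((k : ℝ) + 1) * (2 - α) ≤ 1 := by
  have hpow : (9 / 5 : ℝ) ^ k ≤ α ^ k := pow_le_pow_left₀ (by norm_num) h.lower.le k
  calc ((k : ℝ) + 1) * (2 - α) ≤ α ^ k * (2 - α) :=
        mul_le_mul_of_nonneg_right ((add_one_lt_nine_fifths_pow h.three_le).le.trans hpow)
          (sub_nonneg.2 h.upper.le)
    _ = 1 := h.root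

lemma two_sub_mul_geom_sum (h : IsDominantRoot k α) : (2 - α) * ∑ i ∈ range k, α ^ i = 1 := by
  refine mul_right_cancel₀ (sub_ne_zero.2 h.one_lt.ne') ?_
  rw [mul_assoc, geom_sum_mul]
  linear_combination h.root

lemma pow_eq_geom_sum (h : IsDominantRoot k α) : α ^ k = ∑ i ∈ range k, α ^ i :=
  mul_right_cancel₀ (sub_ne_zero.2 h.upper.ne')
    (by rw [h.root, ← h.two_sub_mul_geom_sum, mul_comm])

lemma one_le_linear (h : IsDominantRoot k α) : 1 ≤ (k + 1) * α - 2 * k := by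
  linarith [h.add_one_mul_two_sub_le]

lemma linear_le_two (h : IsDominantRoot k α) : (k + 1) * α - 2 * k ≤ 2 := by
  have : 0 ≤ ((k : ℝ) + 1) * (2 - α) := mul_nonneg (by positivity) (sub_nonneg.2 h.upper.le)
  linarith

lemma two_lt_lucasNum (h : IsDominantRoot k α) : 2 < lucasNum α := by
  unfold lucasNum
  nlinarith [h.lower]

lemma lucasNum_pos (h : IsDominantRoot k α) : 0 < lucasNum α := zero_lt_two.trans h.two_lt_lucasNum

lemma lucasNum_le_three (h : IsDominantRoot k α) : lucasNum α ≤ 3 := by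
  unfold lucasNum
  nlinarith [h.lower, h.upper]

lemma one_le_lucasDen (h : IsDominantRoot k α) : 1 ≤ lucasDen k α :=
  one_le_mul_of_one_le_of_one_le h.one_lt.le h.one_le_linear

lemma lucasDen_le_four (h : IsDominantRoot k α) : lucasDen k α ≤ 4 := by
  have := mul_le_mul h.upper.le h.linear_le_two (by linarith [h.one_le_linear]) zero_le_two
  unfold lucasDen
  linarith

lemma genLucas_add_order_sub (h : IsDominantRoot k α) (m : ℕ) :
    (genLucas k (m + k) : ℝ) - (2 - α) * ∑ j ∈ range k, α ^ (k - 1 - j) * genLucas k (m + j) =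
      lucasNum α * α ^ m := by
  have hk := h.three_le
  induction m with
  | zero =>
    have hsum : ∑ j ∈ range k, α ^ (k - 1 - j) * (genLucas k j : ℝ) = 2 * α + 1 := by
      have h2 := genLucas_sub_two k
      have h1 := genLucas_sub_one (show 2 ≤ k by lia)
      obtain ⟨j, rfl⟩ := Nat.exists_eq_add_of_le' (show 2 ≤ k by lia)
      rw [sum_range_succ, sum_range_succ, sum_eq_zero fun i hi => by
        rw [genLucas_of_lt (by simpa using hi), Int.cast_zero, mul_zero]]
      simp only [Nat.add_sub_cancel, Nat.reduceSubDiff] at h1 h2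
      rw [h1, h2]
      simp [mul_comm]
    simp only [zero_add]
    rw [hsum, genLucas_order (by lia), lucasNum]
    push_cast
    ring
  | succ m ih =>
    have hshift : ∑ j ∈ range k, α ^ (k - 1 - j) * (genLucas k (m + 1 + j) : ℝ) =
        α * ∑ j ∈ range k, α ^ (k - 1 - j) * (genLucas k (m + j) : ℝ) -
          α ^ k * genLucas k m + genLucas k (m + k) := by
      obtain ⟨j, rfl⟩ : ∃ j, k = j + 1 := ⟨k - 1, by lia⟩
      rw [sum_range_succ, sum_range_succ' (fun i => α ^ (j + 1 - 1 - i) * _) j, mul_add, mul_sum]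
      have hterm : ∀ i ∈ range j, α ^ (j + 1 - 1 - i) * (genLucas (j + 1) (m + 1 + i) : ℝ) =
          α * (α ^ (j + 1 - 1 - (i + 1)) * genLucas (j + 1) (m + (i + 1))) := fun i hi => by
        have := mem_range.1 hi
        rw [show j + 1 - 1 - i = j + 1 - 1 - (i + 1) + 1 by lia, pow_succ,
          show m + 1 + i = m + (i + 1) by ring]
        ring
      rw [sum_congr rfl hterm, show m + 1 + j = m + (j + 1) by ring]
      simp only [Nat.add_sub_cancel, Nat.sub_self, pow_zero, add_zero, Nat.sub_zero]
      ring
    have hrec : (genLucas k (m + 1 + k) : ℝ) = 2 * genLucas k (m + k) - genLucas k m := by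
      rw [add_right_comm, genLucas_add_order_add_one (by lia)]
      push_cast
      ring
    rw [hshift, hrec, pow_succ, ← mul_assoc, ← ih]
    linear_combination (genLucas k m : ℝ) * h.root

end IsDominantRoot

/-- The coefficient `φ` of the dominant term `φ * α ^ m` of `genLucas k m`. -/
noncomputable def binetCoeff (k : ℕ) (α : ℝ) : ℝ :=
  lucasNum α / (α ^ (k - 1) * ((k + 1) * α - 2 * k))

namespace IsDominantRoot

lemma binetCoeff_mul (h : IsDominantRoot k α) :
    binetCoeff k α * (α ^ (k - 1) * ((k + 1) * α - 2 * k)) = lucasNum α :=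
  div_mul_cancel₀ _ (mul_pos (pow_pos h.pos _) (by linarith [h.one_le_linear])).ne'

lemma binetCoeff_nonneg (h : IsDominantRoot k α) : 0 ≤ binetCoeff k α :=
  div_nonneg (by linarith [h.two_lt_lucasNum])
    (mul_nonneg (pow_nonneg h.pos.le _) (by linarith [h.one_le_linear]))

lemma abs_genLucas_sub_le_of_lt (h : IsDominantRoot k α) {m : ℕ} (hm : m < k) :
    |(genLucas k m : ℝ) - binetCoeff k α * α ^ m| ≤ 3 := by
  have hupper : binetCoeff k α * α ^ m ≤ 3 :=
    calc binetCoeff k α * α ^ m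
        ≤ binetCoeff k α * (α ^ (k - 1) * ((k + 1) * α - 2 * k)) := by
          refine mul_le_mul_of_nonneg_left ?_ h.binetCoeff_nonneg
          exact (pow_le_pow_right₀ h.one_lt.le (by lia)).trans
            (le_mul_of_one_le_right (pow_nonneg h.pos.le _) h.one_le_linear)
      _ ≤ 3 := h.binetCoeff_mul.trans_le h.lucasNum_le_three
  have hlower : 0 ≤ binetCoeff k α * α ^ m :=
    mul_nonneg h.binetCoeff_nonneg (pow_nonneg h.pos.le _)
  have hval : (genLucas k m : ℝ) = 0 ∨ (genLucas k m : ℝ) = 2 ∨ (genLucas k m : ℝ) = 1 := by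
    rcases lt_trichotomy m (k - 2) with hlt | rfl | hgt
    · simp [genLucas_of_lt hlt]
    · simp [genLucas_sub_two]
    · rw [show m = k - 1 by lia, genLucas_sub_one (by lia)]
      simp
  rw [abs_le]
  rcases hval with e | e | e <;> rw [e] <;> constructor <;> linarith

/-- The error is, at each index from `k` on, a convex combination of the preceding `k` errors, so
it never exceeds the largest initial one. -/
lemma abs_genLucas_sub_le (h : IsDominantRoot k α) (m : ℕ) :
    |(genLucas k m : ℝ) - binetCoeff k α * α ^ m| ≤ 3 := by
  induction m using Nat.strong_induction_on with
  | _ m ih =>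
  rcases Nat.lt_or_ge m k with hm | hm
  · exact h.abs_genLucas_sub_le_of_lt hm
  obtain ⟨m, rfl⟩ := Nat.exists_eq_add_of_le' hm
  have hweight : ∀ j, 0 ≤ (2 - α) * α ^ (k - 1 - j) := fun j =>
    mul_nonneg (sub_nonneg.2 h.upper.le) (pow_nonneg h.pos.le _)
  have hconvex : (genLucas k (m + k) : ℝ) - binetCoeff k α * α ^ (m + k) =
      ∑ j ∈ range k, (2 - α) * α ^ (k - 1 - j) *
        (genLucas k (m + j) - binetCoeff k α * α ^ (m + j)) := by
    have hterm : ∀ j ∈ range k, (2 - α) * α ^ (k - 1 - j) *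
        (genLucas k (m + j) - binetCoeff k α * α ^ (m + j)) =
        (2 - α) * (α ^ (k - 1 - j) * genLucas k (m + j)) -
          (2 - α) * binetCoeff k α * (α ^ m * α ^ (k - 1)) := fun j hj => by
      have := mem_range.1 hj
      rw [← pow_add, show m + (k - 1) = (k - 1 - j) + (m + j) by lia, pow_add]
      ring
    have hsucc : α ^ k = α ^ (k - 1) * α := by
      rw [← pow_succ, Nat.sub_add_cancel (by linarith [h.three_le])]
    rw [sum_congr rfl hterm, sum_sub_distrib, ← mul_sum, sum_const, card_range, nsmul_eq_mul,
      pow_add, hsucc]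
    linear_combination h.genLucas_add_order_sub m - α ^ m * h.binetCoeff_mul
  calc _ ≤ ∑ j ∈ range k, |(2 - α) * α ^ (k - 1 - j) *
          (genLucas k (m + j) - binetCoeff k α * α ^ (m + j))| := by
        rw [hconvex]
        exact abs_sum_le_sum_abs _ _
    _ ≤ ∑ j ∈ range k, (2 - α) * α ^ (k - 1 - j) * 3 := sum_le_sum fun j hj => by
        rw [abs_mul, abs_of_nonneg (hweight j)]
        exact mul_le_mul_of_nonneg_left (ih _ (by have := mem_range.1 hj; lia)) (hweight j)
    _ = 3 := by
        rw [← sum_mul, ← mul_sum, sum_range_reflect (fun i => α ^ i), h.two_sub_mul_geom_sum,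
          one_mul]

theorem abs_lucasDen_mul_lucasL_sub_le (h : IsDominantRoot k α) (n : ℕ) :
    |lucasDen k α * lucasL k n - lucasNum α * α ^ n| ≤ 12 := by
  have hpow : α ^ (n + k - 2) * α = α ^ n * α ^ (k - 1) := by
    rw [← pow_succ, ← pow_add]
    exact congrArg _ (by have := h.three_le; lia)
  have heq : lucasDen k α * lucasL k n - lucasNum α * α ^ n =
      lucasDen k α * (genLucas k (n + k - 2) - binetCoeff k α * α ^ (n + k - 2)) := by
    rw [lucasDen, lucasL]
    linear_combination ((k + 1) * α - 2 * k) * binetCoeff k α * hpow + α ^ n * h.binetCoeff_mul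
  rw [heq, abs_mul, abs_of_pos (by linarith [h.one_le_lucasDen])]
  calc _ ≤ (4 : ℝ) * 3 :=
        mul_le_mul h.lucasDen_le_four (h.abs_genLucas_sub_le _) (abs_nonneg _) (by norm_num)
    _ = 12 := by norm_num

end IsDominantRoot

end DominantRoot

section Interpolation

/-- The `j`-th Taylor coefficient of `f` at `z`. -/
noncomputable def taylorCoeff (j : ℕ) (f : ℂ → ℂ) (z : ℂ) : ℂ :=
  iteratedDeriv j f z / (j.factorial : ℂ)

variable {f : ℂ → ℂ}

lemma taylorCoeff_zero (f : ℂ → ℂ) (z : ℂ) : taylorCoeff 0 f z = f z := by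
  simp [taylorCoeff]

lemma differentiable_dslope (hf : Differentiable ℂ f) (a : ℂ) : Differentiable ℂ (dslope f a) :=
  differentiableOn_univ.1 ((Complex.differentiableOn_dslope Filter.univ_mem).2 hf.differentiableOn)

lemma sub_mul_dslope (f : ℂ → ℂ) (a z : ℂ) : (z - a) * dslope f a z = f z - f a :=
  sub_smul_dslope f a z

lemma iteratedDeriv_succ_eq_dslope (hf : Differentiable ℂ f) (a : ℂ) (j : ℕ) (z : ℂ) :
    iteratedDeriv (j + 1) f z = (z - a) * iteratedDeriv (j + 1) (dslope f a) z +
      (j + 1) * iteratedDeriv j (dslope f a) z := by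
  have hg := differentiable_dslope hf a
  have hderiv : ∀ i z, HasDerivAt (iteratedDeriv i (dslope f a))
      (iteratedDeriv (i + 1) (dslope f a) z) z := fun i z => by
    rw [iteratedDeriv_succ]
    exact ((hg.contDiff (n := (⊤ : ℕ∞))).differentiable_iteratedDeriv i
      (by exact_mod_cast WithTop.coe_lt_top _) z).hasDerivAt
  have hlin : ∀ z, HasDerivAt (fun z => z - a) 1 z := fun z => (hasDerivAt_id z).sub_const a
  induction j generalizing z with
  | zero =>
    have hd : HasDerivAt f _ z :=
      (((hlin z).mul (hderiv 0 z)).add_const (f a)).congr_of_eventuallyEq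
        (.of_forall fun w => by simp [sub_mul_dslope])
    rw [zero_add, iteratedDeriv_one, hd.deriv]
    push_cast
    ring
  | succ j ih =>
    have hd := ((hlin z).mul (hderiv (j + 1) z)).add ((hderiv j z).const_mul ((j : ℂ) + 1))
    rw [iteratedDeriv_succ (n := j + 1), funext ih]
    refine hd.deriv.trans ?_
    push_cast
    ring

lemma taylorCoeff_succ_eq_dslope (hf : Differentiable ℂ f) (a : ℂ) (j : ℕ) (z : ℂ) :
    taylorCoeff (j + 1) f z =
      (z - a) * taylorCoeff (j + 1) (dslope f a) z + taylorCoeff j (dslope f a) z := by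
  have hfact : (j.factorial : ℂ) ≠ 0 := Nat.cast_ne_zero.2 j.factorial_ne_zero
  have hsucc : (j : ℂ) + 1 ≠ 0 := Nat.cast_add_one_ne_zero j
  simp only [taylorCoeff, iteratedDeriv_succ_eq_dslope hf a, Nat.factorial_succ]
  push_cast
  field_simp

lemma norm_dslope_le {a w : ℂ} {r ρ M : ℝ} (hf : Differentiable ℂ f) (ha : ‖a‖ ≤ r) (hr : r < ρ)
    (hM : ∀ w, ‖w‖ ≤ ρ → ‖f w‖ ≤ M) (hw : ‖w‖ ≤ ρ) : ‖dslope f a w‖ ≤ 2 * M / (ρ - r) := by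
  have hρ : ρ ≠ 0 := ((norm_nonneg a).trans_lt (ha.trans_lt hr)).ne'
  refine Complex.norm_le_of_forall_mem_frontier_norm_le Metric.isBounded_ball
    (differentiable_dslope hf a).diffContOnCl (fun z hz => ?_)
    (by rwa [closure_ball 0 hρ, mem_closedBall_zero_iff])
  rw [frontier_ball 0 hρ, mem_sphere_zero_iff_norm] at hz
  have hdist : ρ - r ≤ ‖z - a‖ := by linarith [norm_sub_norm_le z a]
  have hmul : ‖z - a‖ * ‖dslope f a z‖ ≤ 2 * M := by
    rw [← norm_mul, sub_mul_dslope]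
    linarith [norm_sub_le (f z) (f a), hM z hz.le, hM a (ha.trans hr.le)]
  rw [le_div_iff₀ (sub_pos.2 hr), mul_comm]
  exact (mul_le_mul_of_nonneg_right hdist (norm_nonneg _)).trans hmul

lemma norm_taylorCoeff_dslope_le {a z : ℂ} {δ : ℝ} {m : ℕ} (hf : Differentiable ℂ f)
    (hdist : 1 ≤ ‖z - a‖) (ha : ‖f a‖ ≤ δ) (hz : ∀ j < m, ‖taylorCoeff j f z‖ ≤ δ) {j : ℕ}
    (hj : j < m) : ‖taylorCoeff j (dslope f a) z‖ ≤ (j + 2) * δ := by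
  have hcancel : ∀ x : ℂ, ‖x‖ ≤ ‖(z - a) * x‖ := fun x => by
    rw [norm_mul]
    exact le_mul_of_one_le_left (norm_nonneg x) hdist
  induction j with
  | zero =>
    refine (hcancel _).trans ?_
    rw [taylorCoeff_zero, sub_mul_dslope, ← taylorCoeff_zero f z]
    push_cast
    linarith [norm_sub_le (taylorCoeff 0 f z) (f a), hz 0 hj]
  | succ j ih =>
    refine (hcancel _).trans ?_
    rw [eq_sub_of_add_eq (taylorCoeff_succ_eq_dslope hf a j z).symm]
    push_cast
    linarith [norm_sub_le (taylorCoeff (j + 1) f z) (taylorCoeff j (dslope f a) z), hz _ hj,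
      ih (by lia)]

theorem norm_taylorCoeff_dslope_le_of_update {nodes : Finset ℂ} {s : ℕ}
    (hsep : ∀ a ∈ nodes, ∀ b ∈ nodes, a ≠ b → 1 ≤ ‖a - b‖) {f : ℂ → ℂ} {δ : ℝ} {mult : ℂ → ℕ}
    (hf : Differentiable ℂ f) (hδ : 0 ≤ δ) (hs : ∀ a, mult a ≤ s) {a : ℂ} (ha : a ∈ nodes)
    (hmult : 0 < mult a) (hsmall : ∀ a ∈ nodes, ∀ j < mult a, ‖taylorCoeff j f a‖ ≤ δ) :
    ∀ z ∈ nodes, ∀ j < Function.update mult a (mult a - 1) z,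
      ‖taylorCoeff j (dslope f a) z‖ ≤ (s + 1) * δ := by
  have hfa : ‖f a‖ ≤ δ := by simpa only [taylorCoeff_zero] using hsmall a ha 0 hmult
  intro z hz j hj
  rcases eq_or_ne z a with rfl | hza
  · rw [Function.update_self] at hj
    have hsucc := taylorCoeff_succ_eq_dslope hf z j z
    rw [sub_self, zero_mul, zero_add] at hsucc
    rw [← hsucc]
    exact (hsmall z hz (j + 1) (by lia)).trans (le_mul_of_one_le_left hδ (by simp))
  · rw [Function.update_of_ne hza] at hj
    have hjs : (j : ℝ) + 1 ≤ s := by exact_mod_cast hj.trans_le (hs z)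
    exact (norm_taylorCoeff_dslope_le hf (hsep z hz a ha hza) hfa (hsmall z hz) hj).trans
      (mul_le_mul_of_nonneg_right (by linarith) hδ)

/-- Dividing out one node at a time: passing from `f` to `dslope f a` lowers the multiplicity at
`a` by one, multiplies the Taylor coefficients at the nodes by at most `s + 1`, and multiplies the
maximum on the large disc by at most `2 / (ρ - r)`. -/
theorem norm_le_of_taylorCoeff_le {nodes : Finset ℂ} {s : ℕ} {r r' ρ : ℝ}
    (hnodes : ∀ a ∈ nodes, ‖a‖ ≤ r) (hsep : ∀ a ∈ nodes, ∀ b ∈ nodes, a ≠ b → 1 ≤ ‖a - b‖)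
    (hr : r ≤ r') (hρ : r' < ρ) {N : ℕ} {f : ℂ → ℂ} {δ M : ℝ} {mult : ℂ → ℕ}
    (hf : Differentiable ℂ f) (hδ : 0 ≤ δ) (hN : ∑ a ∈ nodes, mult a = N) (hs : ∀ a, mult a ≤ s)
    (hM : ∀ w, ‖w‖ ≤ ρ → ‖f w‖ ≤ M)
    (hsmall : ∀ a ∈ nodes, ∀ j < mult a, ‖taylorCoeff j f a‖ ≤ δ) {w : ℂ} (hw : ‖w‖ ≤ r') :
    ‖f w‖ ≤ δ * ∑ i ∈ range N, (2 * r' * (s + 1)) ^ i + M * (4 * r' / (ρ - r)) ^ N := by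
  classical
  induction N generalizing f δ M mult with
  | zero => simpa using hM w (hw.trans hρ.le)
  | succ N ih =>
    obtain ⟨a, ha, hmult⟩ : ∃ a ∈ nodes, 0 < mult a := by
      by_contra! h
      rw [sum_eq_zero fun a ha => Nat.le_zero.1 (h a ha)] at hN
      lia
    have hfa : ‖f a‖ ≤ δ := by simpa only [taylorCoeff_zero] using hsmall a ha 0 hmult
    have hsmall' := norm_taylorCoeff_dslope_le_of_update hsep hf hδ hs ha hmult hsmall
    have hsum : ∑ z ∈ nodes, Function.update mult a (mult a - 1) z = N := by
      have := add_sum_erase nodes mult ha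
      rw [sum_update_of_mem ha, sdiff_singleton_eq_erase]
      lia
    have hs' : ∀ z, Function.update mult a (mult a - 1) z ≤ s := fun z => by
      rcases eq_or_ne z a with rfl | hza
      · rw [Function.update_self]
        exact (Nat.sub_le _ _).trans (hs z)
      · rw [Function.update_of_ne hza]
        exact hs z
    have hg := ih (differentiable_dslope hf a) (by positivity) hsum hs'
      (fun w hw => norm_dslope_le hf (hnodes a ha) (hr.trans_lt hρ) hM hw) hsmall'
    have hwa : ‖w - a‖ ≤ 2 * r' := by linarith [norm_sub_le w a, hnodes a ha]
    calc ‖f w‖ ≤ ‖f a‖ + ‖w - a‖ * ‖dslope f a w‖ := by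
          rw [← norm_mul, sub_mul_dslope, add_comm]
          exact norm_le_norm_sub_add _ _
      _ ≤ δ + 2 * r' * ((s + 1) * δ * ∑ i ∈ range N, (2 * r' * (s + 1)) ^ i +
            2 * M / (ρ - r) * (4 * r' / (ρ - r)) ^ N) :=
          add_le_add hfa (mul_le_mul hwa hg (norm_nonneg _) ((norm_nonneg _).trans hwa))
      _ = _ := by
          rw [sum_range_succ', pow_succ (4 * r' / (ρ - r))]
          simp only [pow_succ, pow_zero]
          rw [← sum_mul]
          ring

end Interpolation


section ExponentialSums

variable {ι : Type*} [Fintype ι] {p x y w Z : ι → ℝ} {m₁ m₂ : ℕ}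

/-- The exponential sum with frequencies `w` and coefficients `p * x ^ m₁ * y ^ m₂`. When
`w = a x + c y`, raising `m₁` and `m₂` amounts to differentiating, see `iteratedDeriv_expSum`. -/
noncomputable def expSum (p x y w : ι → ℝ) (m₁ m₂ : ℕ) (z : ℂ) : ℂ :=
  ∑ l, ((p l * x l ^ m₁ * y l ^ m₂ : ℝ) : ℂ) * Complex.exp (w l * z)

/-- The sum `expSum` at a natural number, with `exp (w l)` replaced by a real number `Z l` close
to it. -/
def powSum (p x y Z : ι → ℝ) (m₁ m₂ z : ℕ) : ℝ :=
  ∑ l, p l * x l ^ m₁ * y l ^ m₂ * Z l ^ z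

lemma differentiable_expSum : Differentiable ℂ (expSum p x y w m₁ m₂) := by
  unfold expSum
  fun_prop

lemma iteratedDeriv_expSum {a c : ℝ} (hw : ∀ l, w l = x l * a + y l * c) (j : ℕ) (z : ℂ) :
    iteratedDeriv j (expSum p x y w m₁ m₂) z = ∑ i ∈ range (j + 1),
      ((a ^ i * c ^ (j - i) * j.choose i : ℝ) : ℂ) * expSum p x y w (m₁ + i) (m₂ + (j - i)) z := by
  have hderiv : iteratedDeriv j (expSum p x y w m₁ m₂) z = ∑ l,
      ((p l * x l ^ m₁ * y l ^ m₂ : ℝ) : ℂ) * ((w l : ℂ) ^ j * Complex.exp (w l * z)) := by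
    unfold expSum
    rw [iteratedDeriv_fun_sum fun l _ => by fun_prop]
    refine sum_congr rfl fun l _ => ?_
    rw [iteratedDeriv_const_mul_field, iteratedDeriv_cexp_const_mul]
  simp only [hderiv, expSum, mul_sum]
  rw [sum_comm]
  refine sum_congr rfl fun l _ => ?_
  rw [hw l]
  push_cast
  rw [add_pow, sum_mul, mul_sum]
  exact sum_congr rfl fun i _ => by ring

lemma norm_taylorCoeff_expSum_le {a c E : ℝ} (hw : ∀ l, w l = x l * a + y l * c) (ha : 0 ≤ a)
    (hc : 0 ≤ c) {j : ℕ} {z : ℂ}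
    (hE : ∀ i ≤ j, ‖expSum p x y w (m₁ + i) (m₂ + (j - i)) z‖ ≤ E) :
    ‖taylorCoeff j (expSum p x y w m₁ m₂) z‖ ≤ (a + c) ^ j * E := by
  have hderiv : ‖iteratedDeriv j (expSum p x y w m₁ m₂) z‖ ≤ (a + c) ^ j * E := by
    rw [iteratedDeriv_expSum hw, add_pow, sum_mul]
    refine norm_sum_le_of_le _ fun i hi => ?_
    rw [norm_mul, Complex.norm_real, Real.norm_of_nonneg (by positivity)]
    gcongr
    exact hE i (by grind)
  rw [taylorCoeff, norm_div, Complex.norm_natCast]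
  exact (div_le_self (norm_nonneg _) (mod_cast j.factorial_pos)).trans hderiv

variable {P X : ℝ}

lemma abs_mul_pow_mul_pow_le {p x y : ℝ} {S : ℕ} (hX : 1 ≤ X) (hp : |p| ≤ P) (hx : |x| ≤ X)
    (hy : |y| ≤ X) (hm : m₁ + m₂ ≤ S) : |p * x ^ m₁ * y ^ m₂| ≤ P * X ^ S := by
  have hP : 0 ≤ P := (abs_nonneg p).trans hp
  calc |p * x ^ m₁ * y ^ m₂| = |p| * (|x| ^ m₁ * |y| ^ m₂) := by
        rw [abs_mul, abs_mul, abs_pow, abs_pow, mul_assoc]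
    _ ≤ P * (X ^ m₁ * X ^ m₂) := by gcongr
    _ = P * X ^ (m₁ + m₂) := by rw [pow_add]
    _ ≤ P * X ^ S := by gcongr

lemma norm_expSum_sub_powSum_le {S z : ℕ} {η : ℝ} (hX : 1 ≤ X) (hp : ∀ l, |p l| ≤ P)
    (hx : ∀ l, |x l| ≤ X) (hy : ∀ l, |y l| ≤ X) (hZ : ∀ l, |Real.exp (w l * z) - Z l ^ z| ≤ η)
    (hm : m₁ + m₂ ≤ S) :
    ‖expSum p x y w m₁ m₂ z - powSum p x y Z m₁ m₂ z‖ ≤ Fintype.card ι * P * X ^ S * η := by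
  have hsub : expSum p x y w m₁ m₂ z - powSum p x y Z m₁ m₂ z =
      ((∑ l, p l * x l ^ m₁ * y l ^ m₂ * (Real.exp (w l * z) - Z l ^ z) : ℝ) : ℂ) := by
    simp only [expSum, powSum, mul_sub, sum_sub_distrib]
    push_cast
    rfl
  rw [hsub, Complex.norm_real]
  calc _ ≤ ∑ _l : ι, P * X ^ S * η := norm_sum_le_of_le _ fun l _ => by
        have hcoeff := abs_mul_pow_mul_pow_le hX (hp l) (hx l) (hy l) hm
        rw [norm_mul]
        exact mul_le_mul hcoeff (hZ l) (norm_nonneg _) ((abs_nonneg _).trans hcoeff)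
    _ = _ := by
        rw [sum_const, card_univ, nsmul_eq_mul]
        ring

lemma norm_expSum_le {S : ℕ} {W ρ : ℝ} (hX : 1 ≤ X) (hp : ∀ l, |p l| ≤ P) (hx : ∀ l, |x l| ≤ X)
    (hy : ∀ l, |y l| ≤ X) (hw : ∀ l, |w l| ≤ W) (hm : m₁ + m₂ ≤ S) {z : ℂ} (hz : ‖z‖ ≤ ρ) :
    ‖expSum p x y w m₁ m₂ z‖ ≤ Fintype.card ι * P * X ^ S * Real.exp (W * ρ) := by
  calc _ ≤ ∑ _l : ι, P * X ^ S * Real.exp (W * ρ) := norm_sum_le_of_le _ fun l _ => by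
        have hcoeff := abs_mul_pow_mul_pow_le hX (hp l) (hx l) (hy l) hm
        have hexp : ‖Complex.exp (w l * z)‖ ≤ Real.exp (W * ρ) := by
          rw [Complex.norm_exp, Real.exp_le_exp]
          refine (Complex.re_le_norm _).trans ?_
          rw [norm_mul, Complex.norm_real]
          exact mul_le_mul (hw l) hz (norm_nonneg _) ((abs_nonneg _).trans (hw l))
        rw [norm_mul, Complex.norm_real]
        exact mul_le_mul hcoeff hexp (norm_nonneg _) ((abs_nonneg _).trans hcoeff)
    _ = _ := by
        rw [sum_const, card_univ, nsmul_eq_mul]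
        ring

lemma one_le_norm_natCast_sub_natCast {a b : ℕ} (hab : a ≠ b) : 1 ≤ ‖(a : ℂ) - b‖ := by
  have hne : ((a : ℤ) - (b : ℤ) : ℤ) ≠ 0 := sub_ne_zero.2 (by exact_mod_cast hab)
  have hone : (1 : ℝ) ≤ |(((a : ℤ) - (b : ℤ) : ℤ) : ℝ)| := by exact_mod_cast Int.one_le_abs hne
  rw [← Complex.norm_intCast] at hone
  simpa only [Int.cast_sub, Int.cast_natCast] using hone

lemma norm_le_of_taylorCoeff_natCast_le {f : ℂ → ℂ} {R s : ℕ} {δ M : ℝ} (hR : 1 ≤ R)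
    (hf : Differentiable ℂ f) (hδ : 0 ≤ δ) (hM : ∀ w, ‖w‖ ≤ 2049 * R → ‖f w‖ ≤ M)
    (hsmall : ∀ z < R, ∀ j < s, ‖taylorCoeff j f (z : ℂ)‖ ≤ δ) {w : ℂ} (hw : ‖w‖ ≤ 2 * R) :
    ‖f w‖ ≤ δ * ∑ i ∈ range (s * R), (4 * R * (s + 1) : ℝ) ^ i + M * (1 / 256) ^ (s * R) := by
  have hR' : (1 : ℝ) ≤ R := mod_cast hR
  have hratio : 4 * (2 * R) / (2049 * R - R) = (1 / 256 : ℝ) := by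
    field_simp
    ring
  have hinterp := norm_le_of_taylorCoeff_le (nodes := (range R).map Nat.castEmbedding) (r := R)
    (mult := fun _ => s) (N := s * R) (s := s) (by simpa using fun a ha => ha.le)
    (by simpa using fun a _ b _ hab => one_le_norm_natCast_sub_natCast hab) (by linarith)
    (by linarith) hf hδ (by simp [mul_comm]) (fun _ => le_rfl) hM (by simpa using hsmall) hw
  rwa [hratio, ← mul_assoc 2 2 (R : ℝ), show (2 * 2 : ℝ) = 4 by norm_num] at hinterp

/-- The vanishing of `powSum` makes the exponential sum and its derivatives up to order `s` small
at the integers below `R`; interpolating at these nodes, with the disc of radius `2049 R` as the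
large one, bounds it at the integers below `2 R`. -/
theorem abs_powSum_le_of_powSum_eq_zero {a c W η : ℝ} {R s S S₁ : ℕ}
    (hw : ∀ l, w l = x l * a + y l * c) (ha : 0 ≤ a) (hc : 0 ≤ c) (hac : a + c ≤ 4) (hP : 0 ≤ P)
    (hX : 1 ≤ X) (hη : 0 ≤ η) (hp : ∀ l, |p l| ≤ P) (hx : ∀ l, |x l| ≤ X) (hy : ∀ l, |y l| ≤ X)
    (hW : ∀ l, |w l| ≤ W) (hR : 1 ≤ R) (hS : S₁ ≤ S)
    (hZ : ∀ l, ∀ z < 2 * R, |Real.exp (w l * z) - Z l ^ z| ≤ η)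
    (hzero : ∀ m₁ m₂, m₁ + m₂ < S₁ → ∀ z < R, powSum p x y Z m₁ m₂ z = 0)
    (hm : m₁ + m₂ + s ≤ S₁) {z : ℕ} (hz : z < 2 * R) :
    |powSum p x y Z m₁ m₂ z| ≤ Fintype.card ι * P * X ^ S * η +
      4 ^ s * (Fintype.card ι * P * X ^ S * η) * ∑ i ∈ range (s * R), (4 * R * (s + 1) : ℝ) ^ i +
      Fintype.card ι * P * X ^ S * Real.exp (W * (2049 * R)) * (1 / 256) ^ (s * R) := by
  set E := Fintype.card ι * P * X ^ S * η
  have hE : 0 ≤ E := by positivity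
  have hdiff : ∀ n₁ n₂, n₁ + n₂ ≤ S → ∀ z < 2 * R,
      ‖expSum p x y w n₁ n₂ z - powSum p x y Z n₁ n₂ z‖ ≤ E := fun n₁ n₂ hn z hz =>
    norm_expSum_sub_powSum_le hX hp hx hy (fun l => hZ l z hz) hn
  have hnode : ∀ ζ < R, ∀ j < s, ‖taylorCoeff j (expSum p x y w m₁ m₂) (ζ : ℂ)‖ ≤ 4 ^ s * E :=
    fun ζ hζ j hj => by
      refine (norm_taylorCoeff_expSum_le hw ha hc fun i hi => ?_).trans <|
        mul_le_mul_of_nonneg_right ((pow_le_pow_left₀ (by positivity) hac j).trans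
          (pow_le_pow_right₀ (by norm_num) hj.le)) hE
      have hsub := hdiff (m₁ + i) (m₂ + (j - i)) (by lia) ζ (by lia)
      rwa [hzero _ _ (by lia) ζ hζ, Complex.ofReal_zero, sub_zero] at hsub
  have hinterp := norm_le_of_taylorCoeff_natCast_le (w := z) hR differentiable_expSum
    (by positivity) (fun v hv => norm_expSum_le (S := S) hX hp hx hy hW (by lia) hv) hnode
    (by rw [Complex.norm_natCast]; exact_mod_cast hz.le)
  have hz' := (norm_sub_rev _ _).trans_le (hdiff m₁ m₂ (by lia) z hz)
  calc |powSum p x y Z m₁ m₂ z| = ‖(powSum p x y Z m₁ m₂ z : ℂ)‖ := (Complex.norm_real _).symm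
    _ ≤ ‖powSum p x y Z m₁ m₂ z - expSum p x y w m₁ m₂ z‖ + ‖expSum p x y w m₁ m₂ z‖ :=
        norm_le_norm_sub_add _ _
    _ ≤ _ := by
        rw [add_assoc]
        exact add_le_add hz' hinterp

end ExponentialSums


section Liouville

lemma one_le_norm_mul_pow_of_isIntegral {K : Type*} [Field K] [NumberField K] {ξ : K}
    (hint : IsIntegral ℤ ξ) (hξ : ξ ≠ 0) {B : ℝ} (hB : 1 ≤ B) (hbound : ∀ σ : K →ₐ[ℚ] ℂ, ‖σ ξ‖ ≤ B)
    (σ : K →ₐ[ℚ] ℂ) : 1 ≤ ‖σ ξ‖ * B ^ Module.finrank ℚ K := by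
  classical
  obtain ⟨N, hN⟩ := IsIntegrallyClosed.isIntegral_iff.1 (Algebra.isIntegral_norm ℚ hint)
  have hN0 : N ≠ 0 := by
    rintro rfl
    exact hξ (Algebra.norm_eq_zero_iff.1 (by rw [← hN, map_zero]))
  calc (1 : ℝ) ≤ ‖(N : ℂ)‖ := by
        rw [Complex.norm_intCast]
        exact_mod_cast Int.one_le_abs hN0
    _ = ∏ τ : K →ₐ[ℚ] ℂ, ‖τ ξ‖ := by
        rw [← norm_prod, ← Algebra.norm_eq_prod_embeddings ℚ ℂ ξ, ← hN]
        simp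
    _ = ‖σ ξ‖ * ∏ τ ∈ univ.erase σ, ‖τ ξ‖ := (mul_prod_erase _ _ (mem_univ σ)).symm
    _ ≤ ‖σ ξ‖ * ∏ _τ ∈ univ.erase σ, B := by
        gcongr
        exact hbound _
    _ ≤ ‖σ ξ‖ * B ^ Module.finrank ℚ K := by
        rw [prod_const, ← AlgHom.card ℚ K ℂ]
        gcongr
        exact card_erase_le

theorem one_le_abs_aeval_mul_pow {h : ℤ[X]} (hmonic : h.Monic) {α : ℝ} (hα : aeval α h = 0)
    {Q : ℤ[X]} {B : ℝ} (hB : 1 ≤ B) (hbound : ∀ z : ℂ, aeval z h = 0 → ‖aeval z Q‖ ≤ B)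
    (hQ : aeval α Q ≠ 0) : 1 ≤ |aeval α Q| * B ^ h.natDegree := by
  have hint : IsIntegral ℚ α := IsIntegral.tower_top (R := ℤ) ⟨h, hmonic, hα⟩
  let K := IntermediateField.adjoin ℚ {α}
  have : FiniteDimensional ℚ K := IntermediateField.adjoin.finiteDimensional hint
  have : NumberField K := ⟨⟩
  let g : K := IntermediateField.AdjoinSimple.gen ℚ α
  have hg : algebraMap K ℝ g = α := IntermediateField.AdjoinSimple.algebraMap_gen ℚ α
  have hroot : aeval g h = 0 := (algebraMap K ℝ).injective <| by
    rw [← aeval_algebraMap_apply, hg, hα, map_zero]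
  have hgint : IsIntegral ℤ g := ⟨h, hmonic, hroot⟩
  have hQα : algebraMap K ℝ (aeval g Q) = aeval α Q := by rw [← hg, aeval_algebraMap_apply]
  have hconj : ∀ σ : K →ₐ[ℚ] ℂ, ‖σ (aeval g Q)‖ ≤ B := fun σ => by
    have hσ : ∀ P : ℤ[X], aeval (σ g) P = σ (aeval g P) :=
      aeval_algHom_apply (σ.restrictScalars ℤ) g
    rw [← hσ]
    exact hbound _ (by rw [hσ, hroot, map_zero])
  have hdeg : Module.finrank ℚ K ≤ h.natDegree := by
    rw [IntermediateField.adjoin.finrank hint, ← hmonic.natDegree_map (algebraMap ℤ ℚ)]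
    exact natDegree_le_of_dvd (minpoly.dvd _ _ (by rwa [aeval_map_algebraMap]))
      (hmonic.map _).ne_zero
  let σ : K →ₐ[ℚ] ℂ := (Complex.ofRealAm.restrictScalars ℚ).comp K.val
  have hnorm := one_le_norm_mul_pow_of_isIntegral
    (.of_mem_of_fg _ hgint.fg_adjoin_singleton _ (aeval_mem_adjoin_singleton ℤ g (p := Q)))
    (fun h0 => hQ (by rw [← hQα, h0, map_zero])) hB hconj σ
  have hval : σ (aeval g Q) = ((aeval α Q : ℝ) : ℂ) := by
    rw [← hQα]
    rfl
  rw [hval, Complex.norm_real] at hnorm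
  exact hnorm.trans (mul_le_mul_of_nonneg_left (pow_le_pow_right₀ hB hdeg) (abs_nonneg _))

end Liouville

section ReducedForm

/-- The element `ξ` is a combination of `1, α, …, α ^ (k - 1)` with integer coefficients bounded by
`B`. This is the form in which algebraic integers enter Siegel's lemma. -/
def HasReducedForm {R : Type*} [CommRing R] (k : ℕ) (α ξ : R) (B : ℤ) : Prop :=
  ∃ c : ℕ → ℤ, (∀ i, |c i| ≤ B) ∧ ξ = ∑ i ∈ range k, (c i : R) * α ^ i

namespace HasReducedForm

variable {R : Type*} [CommRing R] {k : ℕ} {α ξ η : R} {A B : ℤ}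

lemma one (hk : 1 ≤ k) (α : R) : HasReducedForm k α 1 1 :=
  ⟨fun i => if i = 0 then 1 else 0, fun i => by dsimp only; split_ifs <;> simp,
    by simp [Nat.one_le_iff_ne_zero.1 hk]⟩

lemma add (hξ : HasReducedForm k α ξ A) (hη : HasReducedForm k α η B) :
    HasReducedForm k α (ξ + η) (A + B) := by
  obtain ⟨c, hc, rfl⟩ := hξ
  obtain ⟨e, he, rfl⟩ := hη
  refine ⟨c + e, fun i => (abs_add_le _ _).trans (add_le_add (hc i) (he i)), ?_⟩
  simp only [← sum_add_distrib, Pi.add_apply, Int.cast_add, add_mul]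

lemma intCast_mul (hξ : HasReducedForm k α ξ A) (m : ℤ) :
    HasReducedForm k α (m * ξ) (|m| * A) := by
  obtain ⟨c, hc, rfl⟩ := hξ
  refine ⟨fun i => m * c i, fun i => ?_, ?_⟩
  · rw [abs_mul]
    exact mul_le_mul_of_nonneg_left (hc i) (abs_nonneg _)
  · simp only [mul_sum, Int.cast_mul, mul_assoc]

lemma mono (hξ : HasReducedForm k α ξ A) (h : A ≤ B) : HasReducedForm k α ξ B :=
  let ⟨c, hc, hsum⟩ := hξ
  ⟨c, fun i => (hc i).trans h, hsum⟩

lemma nonneg (hξ : HasReducedForm k α ξ A) : 0 ≤ A :=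
  let ⟨_, hc, _⟩ := hξ
  (abs_nonneg _).trans (hc 0)

lemma root_mul (hα : α ^ k = ∑ i ∈ range k, α ^ i) (hξ : HasReducedForm k α ξ A) :
    HasReducedForm k α (α * ξ) (2 * A) := by
  have hA := hξ.nonneg
  obtain ⟨c, hc, rfl⟩ := hξ
  rcases k with _ | k
  · exact ⟨0, by simpa using hA, by simp⟩
  refine ⟨fun i => (if i = 0 then 0 else c (i - 1)) + c k, fun i => ?_, ?_⟩
  · have hshift : |if i = 0 then 0 else c (i - 1)| ≤ A := by
      split_ifs
      · rwa [abs_zero]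
      · exact hc _
    rw [two_mul]
    exact (abs_add_le _ _).trans (add_le_add hshift (hc k))
  · rw [sum_range_succ, mul_add, mul_left_comm, ← pow_succ', hα]
    simp only [Int.cast_add, add_mul, sum_add_distrib, ← mul_sum]
    rw [sum_range_succ' fun i => ((if i = 0 then 0 else c (i - 1) : ℤ) : R) * α ^ i, mul_sum]
    simp only [Nat.succ_ne_zero, if_false, Nat.add_sub_cancel, if_true, Int.cast_zero, zero_mul,
      add_zero, pow_succ', mul_left_comm]

lemma pow_mul_of_forall {ω : R} {U : ℤ}
    (hω : ∀ ξ A, HasReducedForm k α ξ A → HasReducedForm k α (ω * ξ) (U * A))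
    (hξ : HasReducedForm k α ξ A) (m : ℕ) : HasReducedForm k α (ω ^ m * ξ) (U ^ m * A) := by
  induction m with
  | zero => simpa only [pow_zero, one_mul] using hξ
  | succ m ih => simpa only [pow_succ', mul_assoc] using hω _ _ ih

end HasReducedForm

lemma exists_ne_zero_int_vec_abs_le {ι κ : Type*} [Fintype ι] [Fintype κ] (M : Matrix κ ι ℤ)
    {A : ℤ} (hA : 1 ≤ A) (hM : ∀ e l, |M e l| ≤ A) (hκ : 0 < Fintype.card κ)
    (hcard : 2 * Fintype.card κ ≤ Fintype.card ι) :
    ∃ t : ι → ℤ, t ≠ 0 ∧ (∀ l, |t l| ≤ Fintype.card ι * A) ∧ M.mulVec t = 0 := by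
  classical
  let _ : SeminormedAddCommGroup (Matrix κ ι ℤ) := Matrix.seminormedAddCommGroup
  obtain ⟨t, ht0, hker, ht⟩ := Int.Matrix.exists_ne_zero_int_vec_norm_le M (by lia) hκ
  refine ⟨t, ht0, fun l => ?_, hker⟩
  have hA' : (1 : ℝ) ≤ A := mod_cast hA
  have hι : (1 : ℝ) ≤ Fintype.card ι := mod_cast (by lia : 1 ≤ Fintype.card ι)
  have hnorm : ‖M‖ ≤ A := (Matrix.norm_le_iff (by linarith)).2 fun e l => by
    rw [Int.norm_eq_abs]
    exact_mod_cast hM e l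
  have hcard' : (2 : ℝ) * Fintype.card κ ≤ Fintype.card ι := mod_cast hcard
  have hexponent : (Fintype.card κ / (Fintype.card ι - Fintype.card κ) : ℝ) ≤ 1 := by
    have hκ' : (0 : ℝ) < Fintype.card κ := mod_cast hκ
    rw [div_le_one (by linarith)]
    linarith
  have hle : ‖t l‖ ≤ Fintype.card ι * A := calc
    ‖t l‖ ≤ ‖t‖ := norm_le_pi_norm t l
    _ ≤ (Fintype.card ι * max 1 ‖M‖) ^ (1 : ℝ) :=
      ht.trans (Real.rpow_le_rpow_of_exponent_le
        (one_le_mul_of_one_le_of_one_le hι (le_max_left _ _)) hexponent)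
    _ ≤ Fintype.card ι * A := by
      rw [Real.rpow_one]
      gcongr
      exact max_le hA' hnorm
  rw [Int.norm_eq_abs] at hle
  exact_mod_cast hle

theorem exists_ne_zero_int_vec_of_hasReducedForm {R : Type*} [CommRing R] {ι κ : Type*} [Fintype ι]
    [Fintype κ] {k : ℕ} (hk : 1 ≤ k) {α : R} {μ : κ → ι → R} {A : ℤ} (hA : 1 ≤ A)
    (hμ : ∀ e l, HasReducedForm k α (μ e l) A) (hκ : 0 < Fintype.card κ)
    (hcard : 2 * (Fintype.card κ * k) ≤ Fintype.card ι) :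
    ∃ p : ι → ℤ, p ≠ 0 ∧ (∀ l, |p l| ≤ Fintype.card ι * A) ∧ ∀ e, ∑ l, (p l : R) * μ e l = 0 := by
  choose c hc hsum using hμ
  have hprod : Fintype.card (κ × Fin k) = Fintype.card κ * k := by simp
  obtain ⟨p, hp0, hp, hker⟩ := exists_ne_zero_int_vec_abs_le
    (Matrix.of fun (e : κ × Fin k) l => c e.1 l e.2) hA (fun e l => hc _ _ _)
    (hprod ▸ Nat.mul_pos hκ hk) (hprod ▸ hcard)
  refine ⟨p, hp0, hp, fun e => ?_⟩
  have hcoeff : ∀ i : Fin k, ∑ l, (p l : R) * c e l i = 0 := fun i => by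
    have := congrFun hker (e, i)
    simp only [Matrix.mulVec, dotProduct, Matrix.of_apply, Pi.zero_apply, mul_comm (c _ _ _)]
      at this
    exact_mod_cast congrArg (Int.cast : ℤ → R) this
  simp only [hsum, Finset.sum_range, mul_sum, ← mul_assoc]
  rw [sum_comm]
  exact sum_eq_zero fun i _ => by rw [← sum_mul, hcoeff, zero_mul]

end ReducedForm

section Vandermonde

variable {ι R : Type*} [Fintype ι] [CommRing R] {p x Z : ι → R}

lemma sum_mul_eval_mul_eval_eq_zero {M T : ℕ}
    (h : ∀ m < M, ∀ z < T, ∑ l, p l * x l ^ m * Z l ^ z = 0) {f g : R[X]} (hf : f.natDegree < M)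
    (hg : g.natDegree < T) : ∑ l, p l * f.eval (x l) * g.eval (Z l) = 0 := by
  have hexpand : ∀ l, p l * f.eval (x l) * g.eval (Z l) =
      ∑ m ∈ range M, ∑ z ∈ range T, f.coeff m * g.coeff z * (p l * x l ^ m * Z l ^ z) := fun l => by
    rw [eval_eq_sum_range' hf, eval_eq_sum_range' hg, mul_assoc, sum_mul_sum, mul_sum]
    exact sum_congr rfl fun m _ => by
      rw [mul_sum]
      exact sum_congr rfl fun z _ => by ring
  simp only [hexpand]
  rw [sum_comm]
  refine sum_eq_zero fun m hm => ?_
  rw [sum_comm]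
  refine sum_eq_zero fun z hz => ?_
  rw [← mul_sum, h m (mem_range.1 hm) z (mem_range.1 hz), mul_zero]

/-- Evaluate against the product of the polynomial vanishing at the other values of `Z` and the
polynomial vanishing at the other values of `x` on the fibre of `Z`. -/
theorem eq_zero_of_sum_mul_pow_mul_pow_eq_zero [IsDomain R] [DecidableEq R] {M : ℕ}
    (h : ∀ m < M, ∀ z < Fintype.card ι, ∑ l, p l * x l ^ m * Z l ^ z = 0)
    (hfibre : ∀ l, #{l' | Z l' = Z l} ≤ M) (hinj : ∀ l l', Z l = Z l' → x l = x l' → l = l')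
    (l : ι) : p l = 0 := by
  classical
  let f := Lagrange.nodal ((univ.filter fun l' => Z l' = Z l).erase l) x
  let g := Lagrange.nodal ((univ.image Z).erase (Z l)) id
  have hlmem : l ∈ univ.filter fun l' => Z l' = Z l := by simp
  have hf : f.natDegree < M := by
    rw [Lagrange.natDegree_nodal]
    exact (card_erase_lt_of_mem hlmem).trans_le (hfibre l)
  have hg : g.natDegree < Fintype.card ι := by
    rw [Lagrange.natDegree_nodal]
    exact (card_erase_lt_of_mem (mem_image_of_mem _ (mem_univ l))).trans_le card_image_le
  have hsum := sum_mul_eval_mul_eval_eq_zero h hf hg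
  have hf0 : f.eval (x l) ≠ 0 := Lagrange.eval_nodal_not_at_node fun l' hl' hx =>
    (mem_erase.1 hl').1 (hinj _ _ (mem_filter.1 (mem_erase.1 hl').2).2 hx.symm)
  have hg0 : g.eval (Z l) ≠ 0 := Lagrange.eval_nodal_not_at_node fun ζ hζ =>
    (ne_of_mem_erase hζ).symm
  rw [sum_eq_single_of_mem l (mem_univ l)] at hsum
  · simpa [hf0, hg0] using hsum
  · intro l' _ hne
    by_cases hZ : Z l' = Z l
    · rw [Lagrange.eval_nodal_at_node (by simp [hne, hZ]), mul_zero, zero_mul]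
    · have hg0 : g.eval (Z l') = 0 :=
        Lagrange.eval_nodal_at_node (v := id) (mem_erase.2 ⟨hZ, mem_image_of_mem _ (mem_univ l')⟩)
      rw [hg0, mul_zero]

end Vandermonde


section CharacteristicPolynomial

variable {k : ℕ}

/-- The characteristic polynomial of the `k`-generalized Lucas recurrence. -/
noncomputable def lucasCharpoly (k : ℕ) : ℤ[X] := X ^ k - ∑ i ∈ range k, X ^ i

lemma degree_sum_X_pow_lt (k : ℕ) : (∑ i ∈ range k, X ^ i : ℤ[X]).degree < k := by
  rw [degree_lt_iff_coeff_zero]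
  intro m hm
  rw [finsetSum_coeff]
  exact sum_eq_zero fun i hi => by rw [coeff_X_pow, if_neg (by grind)]

lemma monic_lucasCharpoly (k : ℕ) : (lucasCharpoly k).Monic :=
  monic_X_pow_sub (degree_sum_X_pow_lt k)

lemma natDegree_lucasCharpoly (k : ℕ) : (lucasCharpoly k).natDegree = k := by
  refine natDegree_eq_of_degree_eq_some ?_
  rw [lucasCharpoly, degree_sub_eq_left_of_degree_lt] <;> rw [degree_X_pow]
  exact degree_sum_X_pow_lt k

lemma aeval_lucasCharpoly {R : Type*} [CommRing R] (k : ℕ) (x : R) :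
    aeval x (lucasCharpoly k) = x ^ k - ∑ i ∈ range k, x ^ i := by
  simp only [lucasCharpoly, map_sub, map_sum, map_pow, aeval_X]

lemma norm_le_two_of_aeval_lucasCharpoly_eq_zero {z : ℂ} (hz : aeval z (lucasCharpoly k) = 0) :
    ‖z‖ ≤ 2 := by
  by_contra! h
  rw [aeval_lucasCharpoly, sub_eq_zero] at hz
  have hle : ‖z‖ ^ k ≤ ∑ i ∈ range k, ‖z‖ ^ i := by
    rw [← norm_pow, hz]
    exact norm_sum_le_of_le _ fun i _ => (norm_pow z i).le
  have hgeom := geom_sum_mul ‖z‖ k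
  nlinarith [pow_pos (zero_lt_two.trans h) k]

end CharacteristicPolynomial

section AuxiliaryTerms

/-- Exponents `(λ₁, λ₂, λ₃)` of the monomials `α ^ λ₁ * 10 ^ λ₂ * γ ^ λ₃` of the auxiliary
function. -/
abbrev AuxIndex (L : ℕ) : Type := Fin (L + 1) × Fin (L + 1) × Fin (L + 1)

variable {k L n d : ℕ} {b : ℤ} {α : ℝ}

/-- The coefficient of `log α` in `λ₁ log α + λ₂ log 10 + λ₃ (n log α - d log 10)`. -/
def logRootCoeff (n : ℕ) (l : AuxIndex L) : ℤ := l.1 + l.2.2 * n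

/-- The coefficient of `log 10` in `λ₁ log α + λ₂ log 10 + λ₃ (n log α - d log 10)`. -/
def logTenCoeff (d : ℕ) (l : AuxIndex L) : ℤ := l.2.1 - l.2.2 * d

/-- The monomial `α ^ λ₁ * 10 ^ λ₂ * γ ^ λ₃`. -/
def auxMonomial (α γ : ℝ) (l : AuxIndex L) : ℝ :=
  α ^ (l.1 : ℕ) * 10 ^ (l.2.1 : ℕ) * γ ^ (l.2.2 : ℕ)

/-- The algebraic number `γ` that `α ^ n / 10 ^ d` approximates when `L_n^{(k)} = b * 10 ^ d`. -/
noncomputable def lucasRatio (k : ℕ) (b : ℤ) (α : ℝ) : ℝ := b * lucasDen k α / lucasNum α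

/-- The `z`-th power of `auxMonomial α (lucasRatio k b α)`, made integral by the factor
`lucasNum x ^ (L * z)`. -/
def clearedMonomial {R : Type*} [CommRing R] (k : ℕ) (b : ℤ) (z : ℕ) (l : AuxIndex L) (x : R) : R :=
  x ^ (l.1 * z : ℕ) * (10 ^ (l.2.1 * z : ℕ) * ((b * lucasDen k x) ^ (l.2.2 * z : ℕ) *
    lucasNum x ^ ((L - l.2.2) * z)))

lemma map_clearedMonomial {R S : Type*} [CommRing R] [CommRing S] (f : R →+* S) (z : ℕ)
    (l : AuxIndex L) (x : R) :
    f (clearedMonomial k b z l x) = clearedMonomial k b z l (f x) := by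
  simp only [clearedMonomial, map_mul, map_pow, map_intCast, map_ofNat, map_lucasDen, map_lucasNum]

lemma lucasNum_pow_mul_auxMonomial_pow (hα : lucasNum α ≠ 0) (z : ℕ) (l : AuxIndex L) :
    lucasNum α ^ (L * z) * auxMonomial α (lucasRatio k b α) l ^ z = clearedMonomial k b z l α := by
  have hsplit : lucasNum α ^ (L * z) =
      lucasNum α ^ (l.2.2 * z : ℕ) * lucasNum α ^ ((L - l.2.2) * z) := by
    rw [← pow_add, ← add_mul, Nat.add_sub_cancel' (by lia)]
  rw [hsplit, auxMonomial, lucasRatio, clearedMonomial, mul_pow, mul_pow, ← pow_mul, ← pow_mul,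
    ← pow_mul, div_pow]
  field_simp

lemma two_pow_mul_ten_pow_mul_le {R : Type*} [CommRing R] [LinearOrder R]
    [IsStrictOrderedRing R] {c : R} (hc : 1 ≤ c) (z : ℕ) (l : AuxIndex L) :
    2 ^ (l.1 * z : ℕ) * (10 ^ (l.2.1 * z : ℕ) * (c ^ (l.2.2 * z : ℕ) * c ^ ((L - l.2.2) * z))) ≤
      (20 * c) ^ (L * z) := by
  have : 0 ≤ c := zero_le_one.trans hc
  rw [← pow_add, ← add_mul, Nat.add_sub_cancel' (by lia)]
  calc _ ≤ 2 ^ (L * z) * (10 ^ (L * z) * c ^ (L * z)) := by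
        gcongr
        · norm_num
        · lia
        · norm_num
        · lia
    _ = (20 * c) ^ (L * z) := by rw [← mul_pow, ← mul_pow, ← mul_assoc]; norm_num

lemma norm_intCast_mul_lucasDen_le (hk : 1 ≤ k) (hb : |b| ≤ 9) {ζ : ℂ} (hζ : ‖ζ‖ ≤ 2) :
    ‖b * lucasDen k ζ‖ ≤ 108 * k := by
  have hk' : (1 : ℝ) ≤ k := mod_cast hk
  have hb' : |(b : ℝ)| ≤ 9 := mod_cast hb
  have hlin : ‖((k : ℂ) + 1) * ζ - 2 * k‖ ≤ (k + 1) * 2 + 2 * k := by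
    refine (norm_sub_le _ _).trans ?_
    rw [norm_mul, norm_mul, ← Nat.cast_add_one, Complex.norm_natCast, Complex.norm_natCast,
      Complex.norm_ofNat]
    push_cast
    gcongr
  rw [lucasDen, norm_mul, norm_mul, Complex.norm_intCast]
  calc |(b : ℝ)| * (‖ζ‖ * ‖((k : ℂ) + 1) * ζ - 2 * k‖) ≤ 9 * (2 * ((k + 1) * 2 + 2 * k)) := by
        gcongr
    _ ≤ 108 * k := by linarith

lemma norm_lucasNum_le {ζ : ℂ} (hζ : ‖ζ‖ ≤ 2) : ‖lucasNum ζ‖ ≤ 15 := by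
  have hfst : ‖2 * ζ - 1‖ ≤ 5 := (norm_sub_le _ _).trans <| by
    rw [norm_mul, Complex.norm_ofNat, norm_one]
    linarith
  have hsnd : ‖ζ - 1‖ ≤ 3 := (norm_sub_le _ _).trans <| by
    rw [norm_one]
    linarith
  rw [lucasNum, norm_mul]
  exact (mul_le_mul hfst hsnd (norm_nonneg _) (by norm_num)).trans (by norm_num)

lemma norm_clearedMonomial_le (hk : 1 ≤ k) (hb : |b| ≤ 9) (z : ℕ) (l : AuxIndex L) {ζ : ℂ}
    (hζ : ‖ζ‖ ≤ 2) : ‖clearedMonomial k b z l ζ‖ ≤ (2160 * k) ^ (L * z) := by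
  have hk' : (1 : ℝ) ≤ k := mod_cast hk
  simp only [clearedMonomial, norm_mul, norm_pow, Complex.norm_ofNat]
  rw [← norm_mul]
  calc _ ≤ (2 : ℝ) ^ (l.1 * z : ℕ) * (10 ^ (l.2.1 * z : ℕ) * ((108 * k) ^ (l.2.2 * z : ℕ) *
        (108 * k) ^ ((L - l.2.2) * z))) := by
        gcongr
        · exact norm_intCast_mul_lucasDen_le hk hb hζ
        · exact (norm_lucasNum_le hζ).trans (by linarith)
    _ ≤ (20 * (108 * k)) ^ (L * z) := two_pow_mul_ten_pow_mul_le (by linarith) z l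
    _ = (2160 * k) ^ (L * z) := by rw [← mul_assoc]; norm_num

namespace HasReducedForm

variable {ξ : ℝ} {A : ℤ}

lemma lucasDen_mul (hk : 1 ≤ k) (hb : |b| ≤ 9) (hα : α ^ k = ∑ i ∈ range k, α ^ i)
    (hξ : HasReducedForm k α ξ A) :
    HasReducedForm k α (b * lucasDen k α * ξ) (108 * k * A) := by
  have : (1 : ℤ) ≤ k := mod_cast hk
  have hA := hξ.nonneg
  have hform := ((((hξ.root_mul hα).intCast_mul (k + 1)).add
    (hξ.intCast_mul (-(2 * k)))).root_mul hα).intCast_mul b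
  rw [abs_neg, abs_of_nonneg (by lia : (0 : ℤ) ≤ k + 1), abs_of_nonneg (by lia : (0 : ℤ) ≤ 2 * k)]
    at hform
  convert hform.mono (B := 108 * k * A) ?_ using 1
  · rw [lucasDen]
    push_cast
    ring
  · calc |b| * (2 * ((k + 1) * (2 * A) + 2 * k * A)) ≤
          9 * (2 * ((k + 1) * (2 * A) + 2 * k * A)) := by gcongr
      _ ≤ 108 * k * A := by nlinarith

lemma lucasNum_mul (hk : 1 ≤ k) (hα : α ^ k = ∑ i ∈ range k, α ^ i)
    (hξ : HasReducedForm k α ξ A) : HasReducedForm k α (lucasNum α * ξ) (108 * k * A) := by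
  have : (1 : ℤ) ≤ k := mod_cast hk
  have hA := hξ.nonneg
  have hform := ((((hξ.root_mul hα).root_mul hα).intCast_mul 2).add
    ((hξ.root_mul hα).intCast_mul (-3))).add hξ
  convert hform.mono (B := 108 * k * A) ?_ using 1
  · rw [lucasNum]
    push_cast
    ring
  · rw [abs_neg, Nat.abs_ofNat, Nat.abs_ofNat]
    nlinarith

lemma clearedMonomial (hk : 1 ≤ k) (hb : |b| ≤ 9) (hα : α ^ k = ∑ i ∈ range k, α ^ i) (z : ℕ)
    (l : AuxIndex L) :
    HasReducedForm k α (_root_.clearedMonomial k b z l α) ((2160 * k) ^ (L * z)) := by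
  have hten : ∀ ξ A, HasReducedForm k α ξ A → HasReducedForm k α (10 * ξ) (10 * A) :=
    fun ξ A hξ => by simpa using hξ.intCast_mul 10
  have hform := (((((one hk α).pow_mul_of_forall (fun _ _ h => h.lucasNum_mul hk hα)
    ((L - l.2.2) * z)).pow_mul_of_forall (fun _ _ h => h.lucasDen_mul hk hb hα)
    (l.2.2 * z)).pow_mul_of_forall hten (l.2.1 * z)).pow_mul_of_forall
    (fun _ _ h => h.root_mul hα) (l.1 * z))
  simp only [mul_one] at hform
  refine hform.mono ((two_pow_mul_ten_pow_mul_le (by lia : (1 : ℤ) ≤ 108 * k) z l).trans_eq ?_)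
  rw [← mul_assoc]
  norm_num

end HasReducedForm

end AuxiliaryTerms

section AuxiliaryFunction

variable {k L n d m₁ m₂ z S : ℕ} {b : ℤ} {α γ : ℝ} {p : AuxIndex L → ℤ}

/-- The auxiliary function with coefficients `p`: the algebraic counterpart of the `z`-th value of
a derivative of `∑ l, p l * exp ((λ₁ log α + λ₂ log 10 + λ₃ (n log α - d log 10)) * z)`. -/
def auxSum (p : AuxIndex L → ℤ) (n d : ℕ) (α γ : ℝ) (m₁ m₂ z : ℕ) : ℝ :=
  powSum (fun l => (p l : ℝ)) (fun l => (logRootCoeff n l : ℝ)) (fun l => (logTenCoeff d l : ℝ))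
    (auxMonomial α γ) m₁ m₂ z

/-- The integer polynomial in `α` obtained from `auxSum` by clearing denominators. -/
noncomputable def auxPoly (p : AuxIndex L → ℤ) (k : ℕ) (b : ℤ) (n d m₁ m₂ z : ℕ) : ℤ[X] :=
  ∑ l, C (p l * logRootCoeff n l ^ m₁ * logTenCoeff d l ^ m₂) * clearedMonomial k b z l X

lemma aeval_auxPoly {R : Type*} [CommRing R] (p : AuxIndex L → ℤ) (x : R) :
    aeval x (auxPoly p k b n d m₁ m₂ z) =
      ∑ l, ((p l * logRootCoeff n l ^ m₁ * logTenCoeff d l ^ m₂ : ℤ) : R) *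
        clearedMonomial k b z l x := by
  have hmap : ∀ l : AuxIndex L, aeval x (clearedMonomial k b z l (X : ℤ[X])) =
      clearedMonomial k b z l x := fun l =>
    (map_clearedMonomial (aeval (R := ℤ) x : ℤ[X] →+* R) z l X).trans
      (congrArg _ (aeval_X (R := ℤ) x))
  rw [auxPoly, map_sum]
  exact sum_congr rfl fun l _ => by rw [map_mul, aeval_C, hmap, algebraMap_int_eq, eq_intCast]

lemma aeval_auxPoly_eq_mul_auxSum (hα : lucasNum α ≠ 0) :
    aeval α (auxPoly p k b n d m₁ m₂ z) =
      lucasNum α ^ (L * z) * auxSum p n d α (lucasRatio k b α) m₁ m₂ z := by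
  rw [aeval_auxPoly, auxSum, powSum, mul_sum]
  refine sum_congr rfl fun l _ => ?_
  rw [← lucasNum_pow_mul_auxMonomial_pow hα]
  push_cast
  ring

variable {P Y : ℝ}

lemma norm_aeval_auxPoly_le (hk : 1 ≤ k) (hb : |b| ≤ 9) (hY : 1 ≤ Y) (hP : ∀ l, |(p l : ℝ)| ≤ P)
    (hx : ∀ l : AuxIndex L, |(logRootCoeff n l : ℝ)| ≤ Y)
    (hy : ∀ l : AuxIndex L, |(logTenCoeff d l : ℝ)| ≤ Y) (hm : m₁ + m₂ ≤ S) {ζ : ℂ}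
    (hζ : ‖ζ‖ ≤ 2) :
    ‖aeval ζ (auxPoly p k b n d m₁ m₂ z)‖ ≤ (L + 1) ^ 3 * (P * Y ^ S * (2160 * k) ^ (L * z)) := by
  rw [aeval_auxPoly]
  refine (norm_sum_le_of_le _ fun l _ => ?_).trans_eq (b := ∑ _l : AuxIndex L,
    P * Y ^ S * (2160 * k) ^ (L * z)) ?_
  · have hcoeff := abs_mul_pow_mul_pow_le hY (hP l) (hx l) (hy l) hm
    rw [norm_mul, Complex.norm_intCast]
    push_cast
    exact mul_le_mul hcoeff (norm_clearedMonomial_le hk hb z l hζ) (norm_nonneg _)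
      ((abs_nonneg _).trans hcoeff)
  · simp only [sum_const, card_univ, Fintype.card_prod, Fintype.card_fin, nsmul_eq_mul]
    push_cast
    ring

namespace IsDominantRoot

lemma one_le_abs_auxSum_mul (h : IsDominantRoot k α) (hb : |b| ≤ 9) (hP1 : 1 ≤ P) (hY : 1 ≤ Y)
    (hP : ∀ l, |(p l : ℝ)| ≤ P) (hx : ∀ l : AuxIndex L, |(logRootCoeff n l : ℝ)| ≤ Y)
    (hy : ∀ l : AuxIndex L, |(logTenCoeff d l : ℝ)| ≤ Y) (hm : m₁ + m₂ ≤ S)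
    (hne : auxSum p n d α (lucasRatio k b α) m₁ m₂ z ≠ 0) :
    1 ≤ 3 ^ (L * z) * |auxSum p n d α (lucasRatio k b α) m₁ m₂ z| *
      ((L + 1) ^ 3 * (P * Y ^ S * (2160 * k) ^ (L * z))) ^ k := by
  have hk : 1 ≤ k := by linarith [h.three_le]
  have hk' : (1 : ℝ) ≤ k := mod_cast hk
  have heval := aeval_auxPoly_eq_mul_auxSum (k := k) (b := b) (n := n) (d := d) (m₁ := m₁)
    (m₂ := m₂) (z := z) (p := p) h.lucasNum_pos.ne'
  have hbound : (1 : ℝ) ≤ (L + 1) ^ 3 * (P * Y ^ S * (2160 * k) ^ (L * z)) :=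
    one_le_mul_of_one_le_of_one_le (one_le_pow₀ (by simp)) <| one_le_mul_of_one_le_of_one_le
      (one_le_mul_of_one_le_of_one_le hP1 (one_le_pow₀ hY)) (one_le_pow₀ (by linarith))
  have hroot : aeval α (lucasCharpoly k) = 0 := by
    rw [aeval_lucasCharpoly, h.pow_eq_geom_sum, sub_self]
  have hliouville := one_le_abs_aeval_mul_pow (monic_lucasCharpoly k) hroot hbound
    (fun ζ hζ => norm_aeval_auxPoly_le hk hb hY hP hx hy hm
      (norm_le_two_of_aeval_lucasCharpoly_eq_zero hζ))
    (by rw [heval]; exact mul_ne_zero (pow_pos h.lucasNum_pos _).ne' hne)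
  rw [natDegree_lucasCharpoly, heval, abs_mul, abs_of_pos (pow_pos h.lucasNum_pos _)] at hliouville
  refine hliouville.trans ?_
  gcongr
  · exact h.lucasNum_pos.le
  · exact h.lucasNum_le_three

end IsDominantRoot

theorem IsDominantRoot.exists_auxSum_eq_zero (h : IsDominantRoot k α) (hb : |b| ≤ 9) {Y : ℤ}
    {R : ℕ} (hY : 1 ≤ Y)
    (hx : ∀ l : AuxIndex L, |logRootCoeff n l| ≤ Y) (hy : ∀ l : AuxIndex L, |logTenCoeff d l| ≤ Y)
    (hS : 1 ≤ S) (hR : 1 ≤ R) (hcard : 2 * (S * (S * R) * k) ≤ (L + 1) ^ 3) :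
    ∃ p : AuxIndex L → ℤ, p ≠ 0 ∧
      (∀ l, |p l| ≤ (L + 1) ^ 3 * (Y ^ (2 * S) * (2160 * k) ^ (L * R))) ∧
      ∀ m₁ < S, ∀ m₂ < S, ∀ z < R, auxSum p n d α (lucasRatio k b α) m₁ m₂ z = 0 := by
  have hk : 1 ≤ k := by linarith [h.three_le]
  have : (1 : ℤ) ≤ k := mod_cast hk
  have hcardι : Fintype.card (AuxIndex L) = (L + 1) ^ 3 := by
    simp only [Fintype.card_prod, Fintype.card_fin]
    ring
  have hform : ∀ (e : Fin S × Fin S × Fin R) (l : AuxIndex L), HasReducedForm k α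
      (((logRootCoeff n l ^ (e.1 : ℕ) * logTenCoeff d l ^ (e.2.1 : ℕ) : ℤ) : ℝ) *
        clearedMonomial k b e.2.2 l α) (Y ^ (2 * S) * (2160 * k) ^ (L * R)) := fun e l => by
    refine ((HasReducedForm.clearedMonomial hk hb h.pow_eq_geom_sum e.2.2 l).intCast_mul _).mono ?_
    rw [abs_mul, abs_pow, abs_pow]
    calc _ ≤ Y ^ (e.1 : ℕ) * Y ^ (e.2.1 : ℕ) * (2160 * k) ^ (L * e.2.2) := by
          gcongr
          · exact hx l
          · exact hy l
      _ ≤ Y ^ (2 * S) * (2160 * k) ^ (L * R) := by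
          rw [← pow_add]
          gcongr
          · lia
          · lia
          · exact e.2.2.2.le
  obtain ⟨p, hp0, hp, hzero⟩ := exists_ne_zero_int_vec_of_hasReducedForm hk
    (one_le_mul_of_one_le_of_one_le (one_le_pow₀ hY) (one_le_pow₀ (by lia))) hform
    (by simp only [Fintype.card_prod, Fintype.card_fin]; positivity)
    (by simpa only [hcardι, Fintype.card_prod, Fintype.card_fin] using hcard)
  refine ⟨p, hp0, fun l => ?_, fun m₁ hm₁ m₂ hm₂ z hz => ?_⟩
  · simpa [hcardι] using hp l
  · refine (mul_eq_zero.1 ?_).resolve_left (pow_pos h.lucasNum_pos (L * z)).ne'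
    rw [← aeval_auxPoly_eq_mul_auxSum h.lucasNum_pos.ne', aeval_auxPoly,
      ← hzero (⟨m₁, hm₁⟩, ⟨m₂, hm₂⟩, ⟨z, hz⟩)]
    refine sum_congr rfl fun l _ => ?_
    push_cast
    ring

end AuxiliaryFunction


section MultiplicativeIndependence

variable {k n L : ℕ} {α γ : ℝ}

namespace IsDominantRoot

lemma isIntegral_inv (h : IsDominantRoot k α) : IsIntegral ℤ α⁻¹ := by
  have hα := h.pos.ne'
  refine ⟨X ^ (k + 1) - (C 2 * X - C 1), monic_X_pow_sub ?_, ?_⟩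
  · have hdeg : (C 2 * X - C 1 : ℤ[X]).degree ≤ 1 := by compute_degree
    exact hdeg.trans_lt (mod_cast Nat.lt_succ_of_lt (by linarith [h.three_le] : 1 < k))
  · have hinv : α⁻¹ ^ (k + 1) = 2 * α⁻¹ - 1 := by
      rw [inv_pow, pow_succ]
      field_simp
      linear_combination -h.root
    simp [hinv]

/-- Otherwise `10⁻¹` would be a product of powers of the algebraic integers `α⁻¹` and `10`. -/
lemma pow_ne_ten_pow (h : IsDominantRoot k α) {a : ℕ} (ha : a ≠ 0) (b : ℕ) : α ^ a ≠ 10 ^ b := by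
  intro hab
  rcases b with _ | b
  · exact (one_lt_pow₀ h.one_lt ha).ne' (hab.trans (pow_zero 10))
  have hten : algebraMap ℚ ℝ 10⁻¹ = α⁻¹ ^ a * algebraMap ℤ ℝ (10 ^ b) := by
    rw [inv_pow, hab, pow_succ]
    simp
  have hint : IsIntegral ℤ (10⁻¹ : ℚ) := by
    rw [← isIntegral_algebraMap_iff (algebraMap ℚ ℝ).injective, hten]
    exact (h.isIntegral_inv.pow a).mul isIntegral_algebraMap
  obtain ⟨N, hN⟩ := IsIntegrallyClosed.isIntegral_iff.1 hint
  have hN' : (N : ℚ) * 10 = 1 := by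
    rw [← eq_intCast (algebraMap ℤ ℚ) N, hN]
    norm_num
  have : N * 10 = 1 := mod_cast hN'
  lia

lemma le_of_pow_mul_ten_pow_eq (h : IsDominantRoot k α) {a b a' b' : ℕ}
    (heq : α ^ a * 10 ^ b = α ^ a' * 10 ^ b') : a' ≤ a := by
  by_contra! hlt
  obtain ⟨c, rfl⟩ := Nat.exists_eq_add_of_lt hlt
  have hcancel : (10 : ℝ) ^ b = α ^ (c + 1) * 10 ^ b' := by
    rw [add_assoc, pow_add, mul_assoc] at heq
    exact mul_left_cancel₀ (pow_pos h.pos a).ne' heq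
  have hb : b' ≤ b := by
    rw [← pow_le_pow_iff_right₀ (by norm_num : (1 : ℝ) < 10), hcancel]
    exact le_mul_of_one_le_left (by positivity) (one_le_pow₀ h.one_lt.le)
  refine h.pow_ne_ten_pow c.succ_ne_zero (b - b') ?_
  rw [pow_sub₀ _ (by norm_num) hb, hcancel, mul_inv_cancel_right₀ (by positivity)]

lemma eq_and_eq_of_pow_mul_ten_pow_eq (h : IsDominantRoot k α) {a b a' b' : ℕ}
    (heq : α ^ a * 10 ^ b = α ^ a' * 10 ^ b') : a = a' ∧ b = b' := by
  obtain rfl := le_antisymm (h.le_of_pow_mul_ten_pow_eq heq.symm) (h.le_of_pow_mul_ten_pow_eq heq)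
  exact ⟨rfl, pow_right_injective₀ (by norm_num : (0 : ℝ) < 10) (by norm_num)
    (mul_left_cancel₀ (pow_pos h.pos a).ne' heq)⟩

lemma eq_of_auxMonomial_eq (h : IsDominantRoot k α) (hγ : γ ≠ 0) {l l' : AuxIndex L}
    (heq : auxMonomial α γ l = auxMonomial α γ l') (h₃ : l.2.2 = l'.2.2) : l = l' := by
  rw [auxMonomial, auxMonomial, h₃] at heq
  obtain ⟨h₁, h₂⟩ := h.eq_and_eq_of_pow_mul_ten_pow_eq (mul_right_cancel₀ (pow_ne_zero _ hγ) heq)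
  exact Prod.ext (Fin.ext h₁) (Prod.ext (Fin.ext h₂) h₃)

end IsDominantRoot

lemma snd_snd_eq_of_logRootCoeff_eq (hL : L < n) {l l' : AuxIndex L}
    (h : logRootCoeff n l = logRootCoeff n l') : l.2.2 = l'.2.2 := by
  have hdiv : ∀ l : AuxIndex L, (l.1 + l.2.2 * n : ℕ) / n = l.2.2 := fun l => by
    rw [Nat.add_mul_div_right _ _ (by lia), Nat.div_eq_of_lt (by lia), zero_add]
  have hnat : (l.1 + l.2.2 * n : ℕ) = l'.1 + l'.2.2 * n := by
    unfold logRootCoeff at h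
    exact_mod_cast h
  exact Fin.ext (by rw [← hdiv l, hnat, hdiv l'])

lemma IsDominantRoot.eq_zero_of_auxSum_eq_zero (h : IsDominantRoot k α) (hL : L < n) (hγ : γ ≠ 0)
    {p : AuxIndex L → ℤ} {d : ℕ}
    (hzero : ∀ m < L + 1, ∀ z < (L + 1) ^ 3, auxSum p n d α γ m 0 z = 0) : p = 0 := by
  have hcard : Fintype.card (AuxIndex L) = (L + 1) ^ 3 := by
    simp only [Fintype.card_prod, Fintype.card_fin]
    ring
  have hp : ∀ l, (p l : ℝ) = 0 := by
    refine eq_zero_of_sum_mul_pow_mul_pow_eq_zero (x := fun l => (logRootCoeff n l : ℝ))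
      (Z := auxMonomial α γ) (M := L + 1) (fun m hm z hz => ?_) (fun l => ?_) (fun l l' hZ hx => ?_)
    · simpa only [auxSum, powSum, pow_zero, mul_one] using hzero m hm z (hcard ▸ hz)
    · calc _ ≤ #(univ : Finset (Fin (L + 1))) :=
            card_le_card_of_injOn (fun l' => l'.2.2) (fun _ _ => mem_univ _) fun a ha c hc hac => by
              simp only [coe_filter, mem_univ, true_and, Set.mem_ofPred_eq] at ha hc
              exact h.eq_of_auxMonomial_eq hγ (ha.trans hc.symm) hac
        _ = L + 1 := card_fin _
    · exact h.eq_of_auxMonomial_eq hγ hZ (snd_snd_eq_of_logRootCoeff_eq hL (mod_cast hx))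
  exact funext fun l => mod_cast hp l

end MultiplicativeIndependence

section MonomialApproximation

variable {L n d : ℕ} {α γ γ' δ : ℝ}

lemma exp_logRootCoeff_mul_log_add_mul (hα : 0 < α) (l : AuxIndex L) (z : ℕ) :
    Real.exp ((logRootCoeff n l * Real.log α + logTenCoeff d l * Real.log 10) * z) =
      auxMonomial α (α ^ n / 10 ^ d) l ^ z := by
  have hpos : 0 < auxMonomial α (α ^ n / 10 ^ d) l := by
    unfold auxMonomial
    positivity
  have hlog : logRootCoeff n l * Real.log α + logTenCoeff d l * Real.log 10 =
      Real.log (auxMonomial α (α ^ n / 10 ^ d) l) := by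
    rw [auxMonomial, Real.log_mul (by positivity) (by positivity),
      Real.log_mul (by positivity) (by positivity), Real.log_pow, Real.log_pow, Real.log_pow,
      Real.log_div (by positivity) (by positivity), Real.log_pow, Real.log_pow]
    simp only [logRootCoeff, logTenCoeff]
    push_cast
    ring
  rw [hlog, mul_comm, Real.exp_nat_mul, Real.exp_log hpos]

lemma abs_auxMonomial_pow_sub_le (hα0 : 0 ≤ α) (hα : α ≤ 2) (hγ : |γ| ≤ 20) (hγ' : |γ'| ≤ 20)
    (hδ : |γ - γ'| ≤ δ) {l : AuxIndex L} {z N : ℕ} (hN : L * z ≤ N) :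
    |auxMonomial α γ l ^ z - auxMonomial α γ' l ^ z| ≤ 400 ^ N * (N * δ) := by
  have hle : ∀ i : Fin (L + 1), i * z ≤ N := fun i =>
    (Nat.mul_le_mul_right z i.is_le).trans hN
  have hdiff : |γ ^ (l.2.2 * z : ℕ) - γ' ^ (l.2.2 * z : ℕ)| ≤ δ * N * 20 ^ N := by
    refine (abs_pow_sub_pow_le _ _ _).trans ?_
    have hpow : max |γ| |γ'| ^ (l.2.2 * z - 1 : ℕ) ≤ 20 ^ N :=
      (pow_le_pow_left₀ (by positivity) (max_le hγ hγ') _).trans <|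
        pow_le_pow_right₀ (by norm_num) ((Nat.sub_le _ _).trans (hle _))
    have hδ0 := (abs_nonneg _).trans hδ
    gcongr
    exact hle _
  have hcoeff : α ^ (l.1 * z : ℕ) * 10 ^ (l.2.1 * z : ℕ) ≤ 20 ^ N :=
    calc _ ≤ (2 : ℝ) ^ N * 10 ^ N := by
          gcongr ?_ * ?_
          · exact (pow_le_pow_left₀ hα0 hα _).trans (pow_le_pow_right₀ one_le_two (hle _))
          · exact pow_le_pow_right₀ (by norm_num) (hle _)
      _ = 20 ^ N := by rw [← mul_pow]; norm_num
  have hfactor : auxMonomial α γ l ^ z - auxMonomial α γ' l ^ z =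
      α ^ (l.1 * z : ℕ) * 10 ^ (l.2.1 * z : ℕ) *
        (γ ^ (l.2.2 * z : ℕ) - γ' ^ (l.2.2 * z : ℕ)) := by
    simp only [auxMonomial, mul_pow, ← pow_mul]
    ring
  rw [hfactor, abs_mul, abs_of_nonneg (by positivity)]
  calc _ ≤ (20 : ℝ) ^ N * (δ * N * 20 ^ N) :=
        mul_le_mul hcoeff hdiff (abs_nonneg _) (by positivity)
    _ = 400 ^ N * (N * δ) := by
        rw [show (400 : ℝ) = 20 * 20 by norm_num, mul_pow]
        ring

end MonomialApproximation


section ApproximateEquation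

/-- The approximate equation `b * lucasDen k α * 10 ^ d ≈ lucasNum α * α ^ n` that follows from
`L_n^{(k)} = b * 10 ^ d` when `α` is the dominant root. -/
structure ApproxLucasEq (k n d : ℕ) (b : ℤ) (α : ℝ) : Prop where
  root : IsDominantRoot k α
  one_le : 1 ≤ b
  le_nine : b ≤ 9
  abs_sub_le : |b * lucasDen k α * 10 ^ d - lucasNum α * α ^ n| ≤ 12

namespace ApproxLucasEq

variable {k n d L : ℕ} {b : ℤ} {α : ℝ}

lemma of_lucasL_eq (h : IsDominantRoot k α) (hb1 : 1 ≤ b) (hb9 : b ≤ 9)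
    (hL : lucasL k n = b * 10 ^ d) : ApproxLucasEq k n d b α := by
  refine ⟨h, hb1, hb9, ?_⟩
  have hdist := h.abs_lucasDen_mul_lucasL_sub_le n
  rw [hL] at hdist
  push_cast at hdist
  rwa [mul_comm (b : ℝ), mul_assoc]

lemma abs_le_nine (h : ApproxLucasEq k n d b α) : |b| ≤ 9 :=
  abs_le.2 ⟨by linarith [h.one_le], h.le_nine⟩

lemma one_le_mul_lucasDen (h : ApproxLucasEq k n d b α) : 1 ≤ b * lucasDen k α :=
  one_le_mul_of_one_le_of_one_le (mod_cast h.one_le) h.root.one_le_lucasDen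

lemma mul_lucasDen_le (h : ApproxLucasEq k n d b α) : b * lucasDen k α ≤ 36 :=
  calc (b : ℝ) * lucasDen k α ≤ 9 * 4 :=
        mul_le_mul (mod_cast h.le_nine) h.root.lucasDen_le_four
          (zero_le_one.trans h.root.one_le_lucasDen) (by norm_num)
    _ = 36 := by norm_num

lemma one_third_le_lucasRatio (h : ApproxLucasEq k n d b α) : 1 / 3 ≤ lucasRatio k b α := by
  rw [lucasRatio, le_div_iff₀ h.root.lucasNum_pos]
  linarith [h.one_le_mul_lucasDen, h.root.lucasNum_le_three]

lemma lucasRatio_le (h : ApproxLucasEq k n d b α) : lucasRatio k b α ≤ 18 := by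
  rw [lucasRatio, div_le_iff₀ h.root.lucasNum_pos]
  linarith [h.mul_lucasDen_le, h.root.two_lt_lucasNum]

lemma abs_div_sub_lucasRatio_le (h : ApproxLucasEq k n d b α) :
    |α ^ n / 10 ^ d - lucasRatio k b α| ≤ 6 / 10 ^ d := by
  have hpos := h.root.lucasNum_pos
  have hdiff : lucasRatio k b α - α ^ n / 10 ^ d =
      (b * lucasDen k α * 10 ^ d - lucasNum α * α ^ n) / (lucasNum α * 10 ^ d) := by
    rw [lucasRatio]
    field_simp
  rw [abs_sub_comm, hdiff, abs_div, abs_of_pos (by positivity : 0 < lucasNum α * 10 ^ d),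
    div_le_div_iff₀ (by positivity) (by positivity), ← mul_assoc]
  refine mul_le_mul_of_nonneg_right (h.abs_sub_le.trans ?_) (by positivity)
  linarith [h.root.two_lt_lucasNum]

lemma abs_div_sub_lucasRatio_le_of_three_le (h : ApproxLucasEq k n d b α) (hd : 3 ≤ d) :
    |α ^ n / 10 ^ d - lucasRatio k b α| ≤ 1 / 100 := by
  have hpow : (10 : ℝ) ^ 3 ≤ 10 ^ d := pow_le_pow_right₀ (by norm_num) hd
  refine h.abs_div_sub_lucasRatio_le.trans ?_
  rw [div_le_div_iff₀ (by positivity) (by norm_num)]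
  linarith

lemma exponent_le (h : ApproxLucasEq k n d b α) (hn : 100 ≤ n) : d ≤ n := by
  by_contra! hd
  have hα : lucasNum α * α ^ n ≤ 3 * 2 ^ n :=
    mul_le_mul h.root.lucasNum_le_three (pow_le_pow_left₀ h.root.pos.le h.root.upper.le n)
      (pow_nonneg h.root.pos.le n) (by norm_num)
  have hten : (10 : ℝ) ^ d ≤ b * lucasDen k α * 10 ^ d :=
    le_mul_of_one_le_left (by positivity) h.one_le_mul_lucasDen
  have hsplit : (2 : ℝ) ^ n * 5 ^ n ≤ 10 ^ d := by
    rw [← mul_pow]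
    norm_num
    exact pow_le_pow_right₀ (by norm_num) hd.le
  have hfive : (5 : ℝ) ^ 100 ≤ 5 ^ n := pow_le_pow_right₀ (by norm_num) hn
  have htwo : (1 : ℝ) ≤ 2 ^ n := one_le_pow₀ one_le_two
  nlinarith [(abs_le.1 h.abs_sub_le).2]

lemma le_eight_mul_exponent (h : ApproxLucasEq k n d b α) (hn : 100 ≤ n) : n ≤ 8 * d := by
  by_contra! hd
  have hα : 2 * (9 / 5) ^ n ≤ lucasNum α * α ^ n :=
    mul_le_mul h.root.two_lt_lucasNum.le (pow_le_pow_left₀ (by norm_num) h.root.lower.le n)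
      (by positivity) h.root.lucasNum_pos.le
  have hsplit : ((9 / 5 : ℝ) ^ 4) ^ d * (9 / 5) ^ 50 ≤ (9 / 5) ^ n := by
    rw [← pow_mul, ← pow_add]
    exact pow_le_pow_right₀ (by norm_num) (by lia)
  have hten : (10 : ℝ) ^ d ≤ ((9 / 5) ^ 4) ^ d := pow_le_pow_left₀ (by norm_num) (by norm_num) d
  have hone : (1 : ℝ) ≤ 10 ^ d := one_le_pow₀ (by norm_num)
  have hupper : b * lucasDen k α * 10 ^ d ≤ 36 * 10 ^ d :=
    mul_le_mul_of_nonneg_right h.mul_lucasDen_le (by positivity)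
  nlinarith [(abs_le.1 h.abs_sub_le).1]

end ApproxLucasEq

lemma twenty_le_exp_three : (20 : ℝ) ≤ Real.exp 3 := by
  have hexp : Real.exp 3 = Real.exp 1 ^ 3 := by
    rw [← Real.exp_nat_mul]
    norm_num
  rw [hexp]
  exact le_trans (by norm_num) (pow_le_pow_left₀ (by norm_num) Real.exp_one_gt_d9.le 3)

lemma log_ten_le_three : Real.log 10 ≤ 3 := by
  rw [Real.log_le_iff_le_exp (by norm_num)]
  linarith [twenty_le_exp_three]

lemma IsDominantRoot.log_le_one {k : ℕ} {α : ℝ} (h : IsDominantRoot k α) : Real.log α ≤ 1 := by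
  rw [Real.log_le_iff_le_exp h.pos]
  linarith [Real.exp_one_gt_d9, h.upper]

namespace ApproxLucasEq

variable {k n d L : ℕ} {b : ℤ} {α : ℝ}

lemma abs_mul_log_sub_mul_log_le (h : ApproxLucasEq k n d b α) (hd : 3 ≤ d) :
    |n * Real.log α - d * Real.log 10| ≤ 3 := by
  obtain ⟨hlow, hup⟩ := abs_le.1 (h.abs_div_sub_lucasRatio_le_of_three_le hd)
  have hpos := pow_pos h.root.pos n
  have hlog : n * Real.log α - d * Real.log 10 = Real.log (α ^ n / 10 ^ d) := by
    rw [Real.log_div hpos.ne' (by positivity), Real.log_pow, Real.log_pow]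
  rw [hlog, abs_le]
  constructor
  · rw [Real.le_log_iff_exp_le (by positivity), Real.exp_neg]
    calc (Real.exp 3)⁻¹ ≤ 20⁻¹ := inv_anti₀ (by norm_num) twenty_le_exp_three
      _ ≤ α ^ n / 10 ^ d := by linarith [h.one_third_le_lucasRatio]
  · rw [Real.log_le_iff_le_exp (by positivity)]
    linarith [h.lucasRatio_le, twenty_le_exp_three]

lemma abs_frequency_le (h : ApproxLucasEq k n d b α) (hd : 3 ≤ d) (l : AuxIndex L) :
    |logRootCoeff n l * Real.log α + logTenCoeff d l * Real.log 10| ≤ 7 * L := by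
  have hle : ∀ i : Fin (L + 1), |(i : ℝ)| ≤ L := fun i => by
    rw [Nat.abs_cast]
    exact mod_cast i.is_le
  have hα := h.root.log_le_one
  have hα0 := Real.log_nonneg h.root.one_lt.le
  have hten0 : 0 ≤ Real.log 10 := Real.log_nonneg (by norm_num)
  have hsplit : logRootCoeff n l * Real.log α + logTenCoeff d l * Real.log 10 =
      l.1 * Real.log α + l.2.1 * Real.log 10 + l.2.2 * (n * Real.log α - d * Real.log 10) := by
    simp only [logRootCoeff, logTenCoeff]
    push_cast
    ring
  rw [hsplit]
  calc _ ≤ |(l.1 : ℝ) * Real.log α| + |(l.2.1 : ℝ) * Real.log 10| +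
        |(l.2.2 : ℝ) * (n * Real.log α - d * Real.log 10)| := abs_add_three _ _ _
    _ ≤ L * 1 + L * 3 + L * 3 := by
        rw [abs_mul, abs_mul, abs_mul, abs_of_nonneg hα0, abs_of_nonneg hten0]
        gcongr
        · exact hle _
        · exact hle _
        · exact log_ten_le_three
        · exact hle _
        · exact h.abs_mul_log_sub_mul_log_le hd
    _ = 7 * L := by ring

lemma abs_exp_frequency_mul_sub_le (h : ApproxLucasEq k n d b α) (hd : 3 ≤ d) (l : AuxIndex L)
    {z N : ℕ} (hN : L * z ≤ N) :
    |Real.exp ((logRootCoeff n l * Real.log α + logTenCoeff d l * Real.log 10) * z) -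
      auxMonomial α (lucasRatio k b α) l ^ z| ≤ 400 ^ N * (N * (6 / 10 ^ d)) := by
  obtain ⟨hlow, hup⟩ := abs_le.1 (h.abs_div_sub_lucasRatio_le_of_three_le hd)
  rw [exp_logRootCoeff_mul_log_add_mul h.root.pos]
  refine abs_auxMonomial_pow_sub_le h.root.pos.le h.root.upper.le ?_ ?_
    h.abs_div_sub_lucasRatio_le hN <;> rw [abs_le] <;>
    constructor <;> linarith [h.lucasRatio_le, h.one_third_le_lucasRatio]

end ApproxLucasEq

end ApproximateEquation


section ParameterNumerics

variable {ℓ k L z M N : ℕ} {A F K η : ℝ}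

lemma two_pow_mul_pow_le_two_pow (hℓ : 512 ≤ ℓ) : 2 ^ 80 * ℓ ^ 48 ≤ 2 ^ ℓ := by
  induction ℓ, hℓ using Nat.le_induction with
  | base =>
    have heq : 2 ^ 80 * 512 ^ 48 = 2 ^ 512 := by
      rw [show 512 = 2 ^ 9 by norm_num, ← pow_mul, ← pow_add]; norm_num
    exact heq.le
  | succ ℓ hℓ ih =>
    have hratio : (512 * (ℓ + 1)) ^ 48 ≤ (513 * ℓ) ^ 48 := Nat.pow_le_pow_left (by lia) 48
    have hstep : (ℓ + 1) ^ 48 ≤ 2 * ℓ ^ 48 := by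
      rw [mul_pow, mul_pow] at hratio
      refine Nat.le_of_mul_le_mul_left (hratio.trans ?_) (by norm_num : 0 < 512 ^ 48)
      rw [mul_left_comm, ← mul_assoc]
      exact Nat.mul_le_mul_right _ (by norm_num)
    calc 2 ^ 80 * (ℓ + 1) ^ 48 ≤ 2 ^ 80 * (2 * ℓ ^ 48) := Nat.mul_le_mul_left _ hstep
      _ = 2 * (2 ^ 80 * ℓ ^ 48) := mul_left_comm ..
      _ ≤ 2 * 2 ^ ℓ := Nat.mul_le_mul_left _ ih
      _ = 2 ^ (ℓ + 1) := (pow_succ' ..).symm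

lemma two_pow_mul_pow_le_two_pow_of_le (hℓ : 512 ≤ ℓ) {a c : ℕ} (ha : a ≤ 80) (hc : c ≤ 48) :
    2 ^ a * ℓ ^ c ≤ 2 ^ ℓ := by
  refine le_trans ?_ (two_pow_mul_pow_le_two_pow hℓ)
  gcongr
  · exact one_le_two
  · lia

lemma geom_sum_le_two_mul_pow (hK : 1 ≤ K) (N : ℕ) : ∑ i ∈ range N, K ^ i ≤ (2 * K) ^ N :=
  calc ∑ i ∈ range N, K ^ i ≤ ∑ _i ∈ range N, K ^ N :=
        sum_le_sum fun i hi => pow_le_pow_right₀ hK (mem_range.1 hi).le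
    _ = N * K ^ N := by rw [sum_const, card_range, nsmul_eq_mul]
    _ ≤ 2 ^ N * K ^ N := by
        gcongr
        exact mod_cast Nat.lt_two_pow_self.le
    _ = (2 * K) ^ N := (mul_pow _ _ _).symm

lemma one_le_two_pow_mul_of_liouville_bound (hℓ : 4 ≤ ℓ) (hk : k ≤ 4 * ℓ)
    (hk' : (2160 * k : ℝ) ≤ 2 ^ ℓ) (hA0 : 0 ≤ A) (hA : A ≤ 2 ^ (5 * ℓ * M)) (hF : 0 ≤ F)
    (hz : L * z ≤ 2 * M) (h : 1 ≤ 3 ^ (L * z) * F * (A * (2160 * k) ^ (L * z)) ^ k) :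
    1 ≤ 2 ^ (29 * ℓ ^ 2 * M) * F := by
  have hthree : (3 : ℝ) ^ (L * z) ≤ 2 ^ (4 * M) :=
    calc (3 : ℝ) ^ (L * z) ≤ 4 ^ (L * z) := pow_le_pow_left₀ (by norm_num) (by norm_num) _
      _ ≤ 4 ^ (2 * M) := pow_le_pow_right₀ (by norm_num) hz
      _ = 2 ^ (4 * M) := by rw [show (4 : ℝ) = 2 ^ 2 by norm_num, ← pow_mul]; ring_nf
  have hbase : A * (2160 * k) ^ (L * z) ≤ 2 ^ (7 * ℓ * M) :=
    calc A * (2160 * k) ^ (L * z) ≤ 2 ^ (5 * ℓ * M) * (2 ^ ℓ) ^ (2 * M) := by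
          refine mul_le_mul hA ?_ (by positivity) (by positivity)
          exact (pow_le_pow_left₀ (by positivity) hk' _).trans
            (pow_le_pow_right₀ (one_le_pow₀ one_le_two) hz)
      _ = 2 ^ (7 * ℓ * M) := by rw [← pow_mul, ← pow_add]; ring_nf
  have hpow : (A * (2160 * k) ^ (L * z)) ^ k ≤ 2 ^ (28 * ℓ ^ 2 * M) :=
    calc (A * (2160 * k) ^ (L * z)) ^ k ≤ (2 ^ (7 * ℓ * M)) ^ k :=
          pow_le_pow_left₀ (by positivity) hbase k
      _ ≤ (2 ^ (7 * ℓ * M)) ^ (4 * ℓ) := pow_le_pow_right₀ (one_le_pow₀ one_le_two) hk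
      _ = 2 ^ (28 * ℓ ^ 2 * M) := by rw [← pow_mul]; ring_nf
  calc 1 ≤ _ := h
    _ ≤ 2 ^ (4 * M) * F * 2 ^ (28 * ℓ ^ 2 * M) := by gcongr
    _ = 2 ^ (4 * M + 28 * ℓ ^ 2 * M) * F := by rw [pow_add]; ring
    _ ≤ 2 ^ (29 * ℓ ^ 2 * M) * F := by
        gcongr
        · exact one_le_two
        · linarith [Nat.mul_le_mul_right M (hℓ.trans (Nat.le_self_pow two_ne_zero ℓ))]

lemma exp_two_le_eight : Real.exp 2 ≤ 2 ^ 3 := by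
  have hexp : Real.exp 2 = Real.exp 1 ^ 2 := by
    rw [← Real.exp_nat_mul]
    norm_num
  rw [hexp]
  exact (pow_le_pow_left₀ (Real.exp_pos 1).le Real.exp_one_lt_d9.le 2).trans (by norm_num)

lemma mul_exp_mul_one_div_pow_le (hℓ : 512 ≤ ℓ) (hA : A ≤ 2 ^ (5 * ℓ * M)) :
    A * Real.exp (7 * (2049 * M)) * (1 / 256) ^ (4 * ℓ ^ 2 * M) ≤ 1 / 2 ^ (31 * ℓ ^ 2 * M) := by
  have hexp : Real.exp (7 * (2049 * M)) ≤ 2 ^ (22000 * M) :=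
    calc Real.exp (7 * (2049 * M)) ≤ Real.exp ((7172 * M : ℕ) * 2) := by
          refine Real.exp_le_exp.2 ?_
          push_cast
          linarith [(Nat.cast_nonneg M : (0 : ℝ) ≤ M)]
      _ = Real.exp 2 ^ (7172 * M) := Real.exp_nat_mul _ _
      _ ≤ (2 ^ 3) ^ (7172 * M) := pow_le_pow_left₀ (Real.exp_pos 2).le exp_two_le_eight _
      _ = 2 ^ (3 * (7172 * M)) := (pow_mul _ _ _).symm
      _ ≤ 2 ^ (22000 * M) := pow_le_pow_right₀ one_le_two (by lia)
  have hsmall : (1 / 256 : ℝ) ^ (4 * ℓ ^ 2 * M) = 1 / 2 ^ (32 * ℓ ^ 2 * M) := by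
    rw [div_pow, one_pow, show (256 : ℝ) = 2 ^ 8 by norm_num, ← pow_mul]
    ring_nf
  have hexponent : 5 * ℓ * M + 22000 * M + 31 * ℓ ^ 2 * M ≤ 32 * ℓ ^ 2 * M := by
    have hsq : 5 * ℓ + 22000 ≤ ℓ ^ 2 := by nlinarith
    linarith [Nat.mul_le_mul_right M hsq]
  rw [hsmall, mul_one_div, div_le_div_iff₀ (by positivity) (by positivity), one_mul]
  calc A * Real.exp (7 * (2049 * M)) * 2 ^ (31 * ℓ ^ 2 * M) ≤
        2 ^ (5 * ℓ * M) * 2 ^ (22000 * M) * 2 ^ (31 * ℓ ^ 2 * M) := by gcongr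
    _ = 2 ^ (5 * ℓ * M + 22000 * M + 31 * ℓ ^ 2 * M) := by rw [pow_add, pow_add]
    _ ≤ 2 ^ (32 * ℓ ^ 2 * M) := pow_le_pow_right₀ one_le_two hexponent

lemma approximation_error_le {d : ℕ} (hd : 9 * ℓ ^ 3 * M ≤ d) :
    400 ^ (2 * M) * ((2 * M : ℕ) * (6 / 10 ^ d)) ≤ (2 ^ (38 * M) / 2 ^ (27 * ℓ ^ 3 * M) : ℝ) := by
  have hten : (2 : ℝ) ^ (27 * ℓ ^ 3 * M) ≤ 10 ^ d :=
    calc (2 : ℝ) ^ (27 * ℓ ^ 3 * M) = (2 ^ 3) ^ (9 * ℓ ^ 3 * M) := by rw [← pow_mul]; ring_nf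
      _ ≤ (2 ^ 3) ^ d := pow_le_pow_right₀ (by norm_num) hd
      _ ≤ 10 ^ d := pow_le_pow_left₀ (by norm_num) (by norm_num) d
  have hlin : ((2 * M : ℕ) * 6 : ℝ) ≤ 2 ^ (20 * M) := by
    have hlt : ((20 * M : ℕ) : ℝ) ≤ 2 ^ (20 * M) := mod_cast Nat.lt_two_pow_self.le
    push_cast at hlt ⊢
    linarith [(Nat.cast_nonneg M : (0 : ℝ) ≤ M)]
  calc 400 ^ (2 * M) * ((2 * M : ℕ) * (6 / 10 ^ d)) =
        (400 ^ (2 * M) * ((2 * M : ℕ) * 6) / 10 ^ d : ℝ) := by ring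
    _ ≤ (2 ^ 9) ^ (2 * M) * 2 ^ (20 * M) / 2 ^ (27 * ℓ ^ 3 * M) := by
        gcongr
        norm_num
    _ = 2 ^ (38 * M) / 2 ^ (27 * ℓ ^ 3 * M) := by rw [← pow_mul, ← pow_add]; ring_nf

lemma one_add_four_pow_mul_geom_sum_le {s : ℕ} (hK : 1 ≤ K) (hK' : K ≤ 2 ^ ℓ) :
    1 + 4 ^ s * ∑ i ∈ range N, K ^ i ≤ 2 ^ (1 + 2 * s + (ℓ + 1) * N) := by
  have hsum : ∑ i ∈ range N, K ^ i ≤ 2 ^ ((ℓ + 1) * N) :=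
    calc ∑ i ∈ range N, K ^ i ≤ (2 * K) ^ N := geom_sum_le_two_mul_pow hK N
      _ ≤ (2 * 2 ^ ℓ) ^ N := by gcongr
      _ = 2 ^ ((ℓ + 1) * N) := by rw [← pow_succ', ← pow_mul]
  have hone : (1 : ℝ) ≤ 2 ^ (2 * s + (ℓ + 1) * N) := one_le_pow₀ one_le_two
  calc 1 + 4 ^ s * ∑ i ∈ range N, K ^ i ≤ 1 + 2 ^ (2 * s) * 2 ^ ((ℓ + 1) * N) := by
        rw [show (4 : ℝ) = 2 ^ 2 by norm_num, ← pow_mul]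
        gcongr
    _ = 1 + 2 ^ (2 * s + (ℓ + 1) * N) := by rw [pow_add]
    _ ≤ 2 * 2 ^ (2 * s + (ℓ + 1) * N) := by linarith
    _ = 2 ^ (1 + 2 * s + (ℓ + 1) * N) := by rw [← pow_succ']; ring_nf

lemma interpolation_error_le {s : ℕ} (hℓ : 512 ≤ ℓ) (hM : 1 ≤ M) (hs : s ≤ 4 * ℓ ^ 2 * M)
    (hA : A ≤ 2 ^ (5 * ℓ * M)) (hη0 : 0 ≤ η)
    (hη : η ≤ 2 ^ (38 * M) / 2 ^ (27 * ℓ ^ 3 * M)) (hK : 1 ≤ K) (hK' : K ≤ 2 ^ ℓ) :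
    A * η + 4 ^ s * (A * η) * ∑ i ∈ range (4 * ℓ ^ 2 * M), K ^ i ≤ 1 / 2 ^ (31 * ℓ ^ 2 * M) := by
  have hexponent : 5 * ℓ * M + 38 * M + (1 + 2 * s + (ℓ + 1) * (4 * ℓ ^ 2 * M)) +
      31 * ℓ ^ 2 * M ≤ 27 * ℓ ^ 3 * M := by
    have hcube : 512 * (ℓ ^ 2 * M) ≤ ℓ * (ℓ ^ 2 * M) := Nat.mul_le_mul_right _ hℓ
    have hsq : 512 * (ℓ * M) ≤ ℓ * (ℓ * M) := Nat.mul_le_mul_right _ hℓ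
    have hlin : 512 * M ≤ ℓ * M := Nat.mul_le_mul_right _ hℓ
    nlinarith
  rw [le_div_iff₀ (by positivity)]
  calc _ = A * η * (1 + 4 ^ s * ∑ i ∈ range (4 * ℓ ^ 2 * M), K ^ i) * 2 ^ (31 * ℓ ^ 2 * M) := by
        ring
    _ ≤ 2 ^ (5 * ℓ * M) * (2 ^ (38 * M) / 2 ^ (27 * ℓ ^ 3 * M)) *
        2 ^ (1 + 2 * s + (ℓ + 1) * (4 * ℓ ^ 2 * M)) * 2 ^ (31 * ℓ ^ 2 * M) := by
        gcongr
        exact one_add_four_pow_mul_geom_sum_le hK hK'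
    _ = 2 ^ (5 * ℓ * M + 38 * M + (1 + 2 * s + (ℓ + 1) * (4 * ℓ ^ 2 * M)) + 31 * ℓ ^ 2 * M) /
        2 ^ (27 * ℓ ^ 3 * M) := by
        rw [pow_add _ _ (31 * ℓ ^ 2 * M), pow_add _ _ (1 + 2 * s + (ℓ + 1) * (4 * ℓ ^ 2 * M)),
          pow_add _ _ (38 * M)]
        ring
    _ ≤ 1 := (div_le_one (by positivity)).2 (pow_le_pow_right₀ one_le_two hexponent)

end ParameterNumerics


section Parameters

/-- The degree of the auxiliary function in each of `α`, `10` and `γ`, for `n` of bit length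
about `ℓ`. -/
def auxDegree (ℓ : ℕ) : ℕ := 8192 * ℓ ^ 10

/-- The number of derivatives given up at each extrapolation step. -/
def orderDrop (ℓ : ℕ) : ℕ := 4 * ℓ ^ 2 * auxDegree ℓ

/-- The number of derivatives that vanish at the points `z < initialPoints ℓ`. -/
def initialOrder (ℓ : ℕ) : ℕ := 8 * ℓ ^ 3 * auxDegree ℓ

/-- The number of points at which the auxiliary function vanishes by construction. -/
def initialPoints (ℓ : ℕ) : ℕ := 16 * ℓ ^ 3

/-- The binary logarithm of the bound for the coefficients of the auxiliary function. -/
def coeffExponent (ℓ : ℕ) : ℕ := ℓ + 4 * ℓ * initialOrder ℓ + ℓ * auxDegree ℓ * initialPoints ℓ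

variable {ℓ k n d R : ℕ}

lemma one_le_auxDegree (hℓ : 1 ≤ ℓ) : 1 ≤ auxDegree ℓ :=
  Nat.mul_pos (by norm_num) (Nat.pow_pos hℓ)

lemma two_le_initialPoints (hℓ : 1 ≤ ℓ) : 2 ≤ initialPoints ℓ :=
  Nat.mul_le_mul (by norm_num : 2 ≤ 16) (Nat.pow_pos hℓ)

lemma two_le_auxDegree_mul (hℓ : 1 ≤ ℓ) (hR : initialPoints ℓ ≤ R) : 2 ≤ auxDegree ℓ * R :=
  Nat.mul_le_mul (one_le_auxDegree hℓ) ((two_le_initialPoints hℓ).trans hR)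

lemma one_le_initialOrder (hℓ : 1 ≤ ℓ) : 1 ≤ initialOrder ℓ :=
  Nat.mul_pos (Nat.mul_pos (by norm_num) (Nat.pow_pos hℓ)) (one_le_auxDegree hℓ)

lemma auxDegree_add_one_pow_three_le (hℓ : 1 ≤ ℓ) : (auxDegree ℓ + 1) ^ 3 ≤ 2 ^ 42 * ℓ ^ 30 := by
  have hle : auxDegree ℓ + 1 ≤ 2 ^ 14 * ℓ ^ 10 := by
    have := Nat.pow_pos (n := 10) hℓ
    unfold auxDegree
    lia
  calc (auxDegree ℓ + 1) ^ 3 ≤ (2 ^ 14 * ℓ ^ 10) ^ 3 := Nat.pow_le_pow_left hle 3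
    _ = 2 ^ 42 * ℓ ^ 30 := by ring

lemma auxDegree_add_one_pow_three_le_two_pow (hℓ : 512 ≤ ℓ) : (auxDegree ℓ + 1) ^ 3 ≤ 2 ^ ℓ :=
  (auxDegree_add_one_pow_three_le (by lia)).trans
    (two_pow_mul_pow_le_two_pow_of_le hℓ (by norm_num) (by norm_num))

lemma auxDegree_mul_add_le (hℓ : 512 ≤ ℓ) (hn : n < 2 ^ (ℓ + 1)) :
    auxDegree ℓ * n + auxDegree ℓ * n ≤ 2 ^ (2 * ℓ) := by
  have hle : 2 ^ 15 * ℓ ^ 10 ≤ 2 ^ ℓ :=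
    two_pow_mul_pow_le_two_pow_of_le hℓ (by norm_num) (by norm_num)
  calc auxDegree ℓ * n + auxDegree ℓ * n = 2 ^ 14 * ℓ ^ 10 * n := by
        unfold auxDegree
        ring
    _ ≤ 2 ^ 14 * ℓ ^ 10 * 2 ^ (ℓ + 1) := Nat.mul_le_mul_left _ hn.le
    _ = 2 ^ 15 * ℓ ^ 10 * 2 ^ ℓ := by ring
    _ ≤ 2 ^ ℓ * 2 ^ ℓ := Nat.mul_le_mul_right _ hle
    _ = 2 ^ (2 * ℓ) := by ring

lemma add_mul_le_auxDegree_mul_add (hn : 1 ≤ n) (hd : d ≤ n) (i j : Fin (auxDegree ℓ + 1)) :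
    (i + j * d : ℕ) ≤ auxDegree ℓ * n + auxDegree ℓ * n :=
  add_le_add (i.is_le.trans (Nat.le_mul_of_pos_right _ hn)) (Nat.mul_le_mul j.is_le hd)

lemma abs_logRootCoeff_le (hℓ : 512 ≤ ℓ) (hn1 : 1 ≤ n) (hn : n < 2 ^ (ℓ + 1))
    (l : AuxIndex (auxDegree ℓ)) : |logRootCoeff n l| ≤ 2 ^ (2 * ℓ) := by
  have hle := (add_mul_le_auxDegree_mul_add hn1 le_rfl l.1 l.2.2).trans (auxDegree_mul_add_le hℓ hn)
  rw [logRootCoeff, abs_of_nonneg (by positivity)]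
  exact_mod_cast hle

lemma abs_logTenCoeff_le (hℓ : 512 ≤ ℓ) (hn1 : 1 ≤ n) (hn : n < 2 ^ (ℓ + 1)) (hd : d ≤ n)
    (l : AuxIndex (auxDegree ℓ)) : |logTenCoeff d l| ≤ 2 ^ (2 * ℓ) := by
  have hle : ((l.2.1 + l.2.2 * d : ℕ) : ℤ) ≤ 2 ^ (2 * ℓ) := by
    exact_mod_cast (add_mul_le_auxDegree_mul_add hn1 hd l.2.1 l.2.2).trans
      (auxDegree_mul_add_le hℓ hn)
  push_cast at hle
  refine (abs_sub _ _).trans ?_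
  rwa [abs_of_nonneg (by positivity), abs_of_nonneg (by positivity)]

lemma two_mul_initialOrder_sq_mul_le (hk : k ≤ 4 * ℓ) :
    2 * (initialOrder ℓ * (initialOrder ℓ * initialPoints ℓ) * k) ≤ (auxDegree ℓ + 1) ^ 3 :=
  calc _ ≤ 2 * (initialOrder ℓ * (initialOrder ℓ * initialPoints ℓ) * (4 * ℓ)) := by gcongr
    _ = auxDegree ℓ ^ 3 := by
        simp only [initialOrder, initialPoints, auxDegree]
        ring
    _ ≤ (auxDegree ℓ + 1) ^ 3 := Nat.pow_le_pow_left (Nat.le_succ _) 3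

lemma mul_le_two_pow_of_le_four_mul (hℓ : 512 ≤ ℓ) (hk : k ≤ 4 * ℓ) : 2160 * k ≤ 2 ^ ℓ := by
  have hle := two_pow_mul_pow_le_two_pow_of_le hℓ (a := 14) (c := 1) (by norm_num) (by norm_num)
  rw [pow_one] at hle
  lia

lemma orderDrop_mul (ℓ R : ℕ) : orderDrop ℓ * R = 4 * ℓ ^ 2 * (auxDegree ℓ * R) := by
  rw [orderDrop, mul_assoc]

lemma initialOrder_eq (ℓ : ℕ) : initialOrder ℓ = ℓ * orderDrop ℓ + ℓ * orderDrop ℓ := by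
  unfold initialOrder orderDrop
  ring

lemma mul_two_pow_coeffExponent_mul_le (hℓ : 512 ≤ ℓ) (hR : initialPoints ℓ ≤ R) :
    ((auxDegree ℓ + 1) ^ 3 * 2 ^ coeffExponent ℓ * (2 ^ (2 * ℓ)) ^ initialOrder ℓ : ℝ) ≤
      2 ^ (5 * ℓ * (auxDegree ℓ * R)) := by
  have hpoints : auxDegree ℓ * initialPoints ℓ ≤ auxDegree ℓ * R := Nat.mul_le_mul_left _ hR
  have horder : 2 * initialOrder ℓ = auxDegree ℓ * initialPoints ℓ := by
    unfold initialOrder initialPoints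
    ring
  have htwo := two_le_auxDegree_mul (by lia) hR
  have hexponent : ℓ + coeffExponent ℓ + 2 * ℓ * initialOrder ℓ ≤ 5 * ℓ * (auxDegree ℓ * R) := by
    have := Nat.mul_le_mul_left ℓ hpoints
    have := Nat.mul_le_mul_left ℓ htwo
    unfold coeffExponent
    nlinarith
  calc ((auxDegree ℓ + 1) ^ 3 * 2 ^ coeffExponent ℓ * (2 ^ (2 * ℓ)) ^ initialOrder ℓ : ℝ) ≤
        2 ^ ℓ * 2 ^ coeffExponent ℓ * (2 ^ (2 * ℓ)) ^ initialOrder ℓ := by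
        gcongr
        exact_mod_cast auxDegree_add_one_pow_three_le_two_pow hℓ
    _ = 2 ^ (ℓ + coeffExponent ℓ + 2 * ℓ * initialOrder ℓ) := by
        rw [← pow_mul, ← pow_add, ← pow_add]
    _ ≤ 2 ^ (5 * ℓ * (auxDegree ℓ * R)) := pow_le_pow_right₀ one_le_two hexponent

lemma four_mul_mul_orderDrop_add_one_le (hℓ : 512 ≤ ℓ) (hR : R ≤ 2 ^ 46 * ℓ ^ 33) :
    4 * R * (orderDrop ℓ + 1) ≤ 2 ^ ℓ := by
  have hs : orderDrop ℓ + 1 ≤ 2 ^ 16 * ℓ ^ 12 := by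
    have hpos := Nat.pow_pos (n := 12) (by lia : 0 < ℓ)
    have heq : orderDrop ℓ = 2 ^ 15 * ℓ ^ 12 := by
      unfold orderDrop auxDegree
      ring
    lia
  calc 4 * R * (orderDrop ℓ + 1) ≤ 4 * (2 ^ 46 * ℓ ^ 33) * (2 ^ 16 * ℓ ^ 12) := by gcongr
    _ = 2 ^ 64 * ℓ ^ 45 := by ring
    _ ≤ 2 ^ ℓ := two_pow_mul_pow_le_two_pow_of_le hℓ (by norm_num) (by norm_num)

lemma nine_mul_mul_auxDegree_mul_le (hℓ : 512 ≤ ℓ) (hR : R ≤ 2 ^ 46 * ℓ ^ 33)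
    (hd : 2 ^ ℓ ≤ 8 * d) : 9 * ℓ ^ 3 * (auxDegree ℓ * R) ≤ d := by
  have hle : 8 * (9 * ℓ ^ 3 * (auxDegree ℓ * R)) ≤ 8 * d :=
    calc 8 * (9 * ℓ ^ 3 * (auxDegree ℓ * R)) ≤
          8 * (9 * ℓ ^ 3 * (auxDegree ℓ * (2 ^ 46 * ℓ ^ 33))) := by gcongr
      _ = 9 * 2 ^ 62 * ℓ ^ 46 := by
          unfold auxDegree
          ring
      _ ≤ 2 ^ 66 * ℓ ^ 46 := Nat.mul_le_mul_right _ (by norm_num)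
      _ ≤ 2 ^ ℓ := two_pow_mul_pow_le_two_pow_of_le hℓ (by norm_num) (by norm_num)
      _ ≤ 8 * d := hd
  lia

end Parameters

section Extrapolation

namespace ApproxLucasEq

variable {k n d ℓ R S₁ m₁ m₂ z : ℕ} {b : ℤ} {α : ℝ} {p : AuxIndex (auxDegree ℓ) → ℤ}

lemma two_pow_le_eight_mul_exponent (h : ApproxLucasEq k n d b α) (hℓ : 512 ≤ ℓ) (hlo : 2 ^ ℓ ≤ n) :
    2 ^ ℓ ≤ 8 * d :=
  hlo.trans (h.le_eight_mul_exponent (by linarith [Nat.lt_two_pow_self (n := ℓ)]))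

lemma exponent_le_of_two_pow_le (h : ApproxLucasEq k n d b α) (hℓ : 512 ≤ ℓ) (hlo : 2 ^ ℓ ≤ n) :
    d ≤ n :=
  h.exponent_le (by linarith [Nat.lt_two_pow_self (n := ℓ)])

theorem exists_auxSum_eq_zero (h : ApproxLucasEq k n d b α) (hℓ : 512 ≤ ℓ) (hk : k ≤ 4 * ℓ)
    (hlo : 2 ^ ℓ ≤ n) (hhi : n < 2 ^ (ℓ + 1)) :
    ∃ p : AuxIndex (auxDegree ℓ) → ℤ, p ≠ 0 ∧ (∀ l, |(p l : ℝ)| ≤ 2 ^ coeffExponent ℓ) ∧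
      ∀ m₁ < initialOrder ℓ, ∀ m₂ < initialOrder ℓ, ∀ z < initialPoints ℓ,
        auxSum p n d α (lucasRatio k b α) m₁ m₂ z = 0 := by
  have hn1 : 1 ≤ n := Nat.one_le_two_pow.trans hlo
  obtain ⟨p, hp0, hp, hzero⟩ := h.root.exists_auxSum_eq_zero h.abs_le_nine
    (one_le_pow₀ one_le_two) (abs_logRootCoeff_le hℓ hn1 hhi)
    (abs_logTenCoeff_le hℓ hn1 hhi (h.exponent_le_of_two_pow_le hℓ hlo))
    (one_le_initialOrder (by lia)) (one_le_two.trans (two_le_initialPoints (by lia)))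
    (two_mul_initialOrder_sq_mul_le hk)
  refine ⟨p, hp0, fun l => ?_, hzero⟩
  have hcard : ((auxDegree ℓ : ℤ) + 1) ^ 3 ≤ 2 ^ ℓ :=
    mod_cast auxDegree_add_one_pow_three_le_two_pow hℓ
  have hbase : (2160 * k : ℤ) ≤ 2 ^ ℓ := mod_cast mul_le_two_pow_of_le_four_mul hℓ hk
  have hle : |p l| ≤ 2 ^ coeffExponent ℓ :=
    calc |p l| ≤ 2 ^ ℓ * ((2 ^ (2 * ℓ)) ^ (2 * initialOrder ℓ) *
          (2 ^ ℓ) ^ (auxDegree ℓ * initialPoints ℓ)) := (hp l).trans (by gcongr)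
      _ = 2 ^ coeffExponent ℓ := by
          rw [← pow_mul, ← pow_mul, ← pow_add, ← pow_add, coeffExponent]
          ring_nf
  exact_mod_cast hle

lemma abs_auxSum_le (h : ApproxLucasEq k n d b α) (hℓ : 512 ≤ ℓ) (hlo : 2 ^ ℓ ≤ n)
    (hhi : n < 2 ^ (ℓ + 1)) (hp : ∀ l, |(p l : ℝ)| ≤ 2 ^ coeffExponent ℓ)
    (hR : initialPoints ℓ ≤ R) (hR' : R ≤ 2 ^ 46 * ℓ ^ 33) (hS : S₁ ≤ initialOrder ℓ)
    (hzero : ∀ m₁ m₂, m₁ + m₂ < S₁ → ∀ z < R, auxSum p n d α (lucasRatio k b α) m₁ m₂ z = 0)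
    (hm : m₁ + m₂ + orderDrop ℓ ≤ S₁) (hz : z < 2 * R) :
    |auxSum p n d α (lucasRatio k b α) m₁ m₂ z| ≤ 2 / 2 ^ (31 * ℓ ^ 2 * (auxDegree ℓ * R)) := by
  have hd := h.exponent_le_of_two_pow_le hℓ hlo
  have hd' := h.two_pow_le_eight_mul_exponent hℓ hlo
  have hn1 : 1 ≤ n := Nat.one_le_two_pow.trans hlo
  have hd3 : 3 ≤ d := by linarith [Nat.lt_two_pow_self (n := ℓ)]
  have hR1 : 1 ≤ R := one_le_two.trans ((two_le_initialPoints (by lia)).trans hR)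
  have hx : ∀ l : AuxIndex (auxDegree ℓ), |(logRootCoeff n l : ℝ)| ≤ 2 ^ (2 * ℓ) := fun l =>
    mod_cast abs_logRootCoeff_le hℓ hn1 hhi l
  have hy : ∀ l : AuxIndex (auxDegree ℓ), |(logTenCoeff d l : ℝ)| ≤ 2 ^ (2 * ℓ) := fun l =>
    mod_cast abs_logTenCoeff_le hℓ hn1 hhi hd l
  have hbound := abs_powSum_le_of_powSum_eq_zero (fun l => rfl) (Real.log_nonneg h.root.one_lt.le)
    (Real.log_nonneg (by norm_num)) (by linarith [h.root.log_le_one, log_ten_le_three])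
    (by positivity) (one_le_pow₀ one_le_two) (by positivity) hp hx hy (h.abs_frequency_le hd3) hR1
    hS (fun l z hz => h.abs_exp_frequency_mul_sub_le hd3 l
      (N := 2 * (auxDegree ℓ * R)) (by linarith [Nat.mul_le_mul_left (auxDegree ℓ) hz.le]))
    hzero hm hz
  have hA := mul_two_pow_coeffExponent_mul_le hℓ hR
  have hgeom : (4 * R * (orderDrop ℓ + 1) : ℝ) ≤ 2 ^ ℓ :=
    mod_cast four_mul_mul_orderDrop_add_one_le hℓ hR'
  have hinterp := interpolation_error_le (s := orderDrop ℓ) hℓ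
    (one_le_two.trans (two_le_auxDegree_mul (by lia) hR))
    (by rw [← orderDrop_mul]; exact Nat.le_mul_of_pos_right _ hR1)
    hA (by positivity) (approximation_error_le (nine_mul_mul_auxDegree_mul_le hℓ hR' hd'))
    (by norm_cast; exact Nat.mul_pos (by lia) (by lia)) hgeom
  have hcauchy := mul_exp_mul_one_div_pow_le hℓ hA
  rw [← orderDrop_mul] at hinterp hcauchy
  rw [auxSum]
  refine hbound.trans ?_
  have hcard : (Fintype.card (AuxIndex (auxDegree ℓ)) : ℝ) = (auxDegree ℓ + 1) ^ 3 := by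
    simp only [Fintype.card_prod, Fintype.card_fin]
    push_cast
    ring
  rw [hcard, ← add_halves (2 / _ : ℝ), div_right_comm, div_self two_ne_zero]
  refine add_le_add hinterp (le_trans (le_of_eq ?_) hcauchy)
  push_cast
  ring_nf

/-- The analytic upper bound contradicts the Liouville lower bound for a nonzero value. -/
theorem auxSum_eq_zero_of_lt_two_mul (h : ApproxLucasEq k n d b α) (hℓ : 512 ≤ ℓ)
    (hk : k ≤ 4 * ℓ) (hlo : 2 ^ ℓ ≤ n) (hhi : n < 2 ^ (ℓ + 1))
    (hp : ∀ l, |(p l : ℝ)| ≤ 2 ^ coeffExponent ℓ) (hR : initialPoints ℓ ≤ R)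
    (hR' : R ≤ 2 ^ 46 * ℓ ^ 33) (hS : S₁ ≤ initialOrder ℓ)
    (hzero : ∀ m₁ m₂, m₁ + m₂ < S₁ → ∀ z < R, auxSum p n d α (lucasRatio k b α) m₁ m₂ z = 0)
    (hm : m₁ + m₂ + orderDrop ℓ ≤ S₁) (hz : z < 2 * R) :
    auxSum p n d α (lucasRatio k b α) m₁ m₂ z = 0 := by
  by_contra hne
  have hn1 : 1 ≤ n := Nat.one_le_two_pow.trans hlo
  have hLiouville := h.root.one_le_abs_auxSum_mul (S := initialOrder ℓ) h.abs_le_nine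
    (one_le_pow₀ one_le_two) (one_le_pow₀ one_le_two) hp
    (fun l => mod_cast abs_logRootCoeff_le hℓ hn1 hhi l)
    (fun l => mod_cast abs_logTenCoeff_le hℓ hn1 hhi (h.exponent_le_of_two_pow_le hℓ hlo) l)
    (by lia) hne
  have hlower := one_le_two_pow_mul_of_liouville_bound (M := auxDegree ℓ * R) (by lia) hk
    (mod_cast mul_le_two_pow_of_le_four_mul hℓ hk) (by positivity)
    (mul_two_pow_coeffExponent_mul_le hℓ hR) (abs_nonneg _)
    (L := auxDegree ℓ) (z := z) (by linarith [Nat.mul_le_mul_left (auxDegree ℓ) hz.le])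
    (by simpa only [mul_assoc] using hLiouville)
  have hupper := h.abs_auxSum_le hℓ hlo hhi hp hR hR' hS hzero hm hz
  have hlt : (2 : ℝ) ^ (29 * ℓ ^ 2 * (auxDegree ℓ * R)) * 2 <
      2 ^ (31 * ℓ ^ 2 * (auxDegree ℓ * R)) := by
    rw [← pow_succ]
    have hsq := Nat.mul_le_mul (Nat.pow_le_pow_left hℓ 2) (two_le_auxDegree_mul (by lia) hR)
    exact pow_lt_pow_right₀ one_lt_two (by nlinarith)
  have := calc (1 : ℝ) ≤ _ := hlower
    _ ≤ 2 ^ (29 * ℓ ^ 2 * (auxDegree ℓ * R)) * (2 / 2 ^ (31 * ℓ ^ 2 * (auxDegree ℓ * R))) := by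
        gcongr
    _ < 1 := by rwa [← mul_div_assoc, div_lt_one (by positivity)]
  exact lt_irrefl _ this

lemma auxSum_eq_zero_of_lt_mul_two_pow (h : ApproxLucasEq k n d b α) (hℓ : 512 ≤ ℓ)
    (hk : k ≤ 4 * ℓ) (hlo : 2 ^ ℓ ≤ n) (hhi : n < 2 ^ (ℓ + 1))
    (hp : ∀ l, |(p l : ℝ)| ≤ 2 ^ coeffExponent ℓ)
    (hinit : ∀ m₁ < initialOrder ℓ, ∀ m₂ < initialOrder ℓ, ∀ z < initialPoints ℓ,
      auxSum p n d α (lucasRatio k b α) m₁ m₂ z = 0) (j : ℕ)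
    (hj : 2 ^ j ≤ 2 ^ 43 * ℓ ^ 30) (hm : m₁ + m₂ + j * orderDrop ℓ < initialOrder ℓ)
    (hz : z < initialPoints ℓ * 2 ^ j) : auxSum p n d α (lucasRatio k b α) m₁ m₂ z = 0 := by
  induction j generalizing m₁ m₂ z with
  | zero => exact hinit _ (by lia) _ (by lia) _ (by simpa using hz)
  | succ j ih =>
    rw [pow_succ] at hj hz
    rw [add_one_mul] at hm
    refine h.auxSum_eq_zero_of_lt_two_mul (S₁ := initialOrder ℓ - j * orderDrop ℓ)
      (R := initialPoints ℓ * 2 ^ j) hℓ hk hlo hhi hp (Nat.le_mul_of_pos_right _ (by positivity))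
      ?_ (Nat.sub_le _ _) (fun m₁ m₂ hm z hz => ih (by lia) (by lia) hz) (by lia) (by lia)
    calc initialPoints ℓ * 2 ^ j ≤ 16 * ℓ ^ 3 * (2 ^ 42 * ℓ ^ 30) := by
          unfold initialPoints
          gcongr
          lia
      _ = 2 ^ 46 * ℓ ^ 33 := by ring

end ApproxLucasEq

theorem not_approxLucasEq_of_two_pow_le {k n d ℓ : ℕ} {b : ℤ} {α : ℝ} (hℓ : 512 ≤ ℓ)
    (hk : k ≤ 4 * ℓ) (hlo : 2 ^ ℓ ≤ n) (hhi : n < 2 ^ (ℓ + 1)) : ¬ ApproxLucasEq k n d b α := by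
  intro h
  obtain ⟨p, hp0, hp, hinit⟩ := h.exists_auxSum_eq_zero hℓ hk hlo hhi
  have hcard := auxDegree_add_one_pow_three_le (by lia : 1 ≤ ℓ)
  set J := Nat.clog 2 ((auxDegree ℓ + 1) ^ 3)
  have hL1 := one_le_auxDegree (by lia : 1 ≤ ℓ)
  have hJ : (auxDegree ℓ + 1) ^ 3 ≤ 2 ^ J := Nat.le_pow_clog one_lt_two _
  have hJℓ : J ≤ ℓ := Nat.clog_le_of_le_pow (auxDegree_add_one_pow_three_le_two_pow hℓ)
  have hJ' : 2 ^ J ≤ 2 ^ 43 * ℓ ^ 30 := by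
    have hlt : 2 ^ J.pred < (auxDegree ℓ + 1) ^ 3 :=
      Nat.pow_pred_clog_lt_self one_lt_two (Nat.one_lt_pow three_ne_zero (by linarith))
    calc 2 ^ J ≤ 2 ^ (J.pred + 1) := Nat.pow_le_pow_right two_pos (Nat.le_add_of_sub_le le_rfl)
      _ = 2 * 2 ^ J.pred := pow_succ' ..
      _ ≤ 2 * (2 ^ 42 * ℓ ^ 30) := by gcongr; exact hlt.le.trans hcard
      _ = 2 ^ 43 * ℓ ^ 30 := by ring
  have hL : auxDegree ℓ + 1 ≤ orderDrop ℓ := by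
    have := Nat.mul_le_mul_right (auxDegree ℓ) (Nat.pow_le_pow_left hℓ 2)
    unfold orderDrop
    linarith
  refine hp0 (h.root.eq_zero_of_auxSum_eq_zero ?_ ?_ fun m hm z hz =>
    h.auxSum_eq_zero_of_lt_mul_two_pow hℓ hk hlo hhi hp hinit J hJ' ?_ ?_)
  · calc auxDegree ℓ < auxDegree ℓ + 1 := Nat.lt_succ_self _
      _ ≤ (auxDegree ℓ + 1) ^ 3 := Nat.le_self_pow three_ne_zero _
      _ ≤ n := (auxDegree_add_one_pow_three_le_two_pow hℓ).trans hlo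
  · linarith [h.one_third_le_lucasRatio]
  · have := Nat.mul_le_mul_right (orderDrop ℓ) hJℓ
    have := Nat.mul_le_mul_right (orderDrop ℓ) hℓ
    rw [initialOrder_eq]
    lia
  · have hpos : 0 < initialPoints ℓ := by linarith [two_le_initialPoints (by lia : 1 ≤ ℓ)]
    exact hz.trans_le (hJ.trans (Nat.le_mul_of_pos_left _ hpos))

end Extrapolation


section FixedPoint

/-- `f x`, in a form for which kernel reduction brings `x` to a numeral before substituting it. -/
def eager {α : Type} (x : ℕ) (f : ℕ → α) : α := Nat.rec (f 0) (fun n _ => f n.succ) x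

lemma eager_eq {α : Type} (x : ℕ) (f : ℕ → α) : eager x f = f x := by
  cases x <;> rfl

/-- The natural number `a` represents the real number `x` in units of `1 / S`, with an error of at
most `δ` units. -/
def IsFixedApprox (S : ℕ) (δ : ℝ) (a : ℕ) (x : ℝ) : Prop := |(a : ℝ) - S * x| ≤ δ

namespace IsFixedApprox

variable {S a b : ℕ} {δ ε x y : ℝ}

lemma mono (h : IsFixedApprox S δ a x) (hδ : δ ≤ ε) : IsFixedApprox S ε a x := h.trans hδ

lemma congr (h : IsFixedApprox S δ a x) (hδ : δ ≤ ε) (hxy : x = y) : IsFixedApprox S ε a y :=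
  hxy ▸ h.mono hδ

lemma nonneg (h : IsFixedApprox S δ a x) : 0 ≤ δ := (abs_nonneg _).trans h

lemma add (ha : IsFixedApprox S δ a x) (hb : IsFixedApprox S ε b y) :
    IsFixedApprox S (δ + ε) (a + b) (x + y) := by
  have hsplit : ((a + b : ℕ) : ℝ) - S * (x + y) = a - S * x + (b - S * y) := by
    push_cast
    ring
  rw [IsFixedApprox, hsplit]
  exact (abs_add_le _ _).trans (add_le_add ha hb)

lemma sub (ha : IsFixedApprox S δ a x) (hb : IsFixedApprox S ε b y) (hle : b ≤ a) :
    IsFixedApprox S (δ + ε) (a - b) (x - y) := by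
  have hsplit : ((a - b : ℕ) : ℝ) - S * (x - y) = a - S * x - (b - S * y) := by
    push_cast [hle]
    ring
  rw [IsFixedApprox, hsplit]
  exact (abs_sub _ _).trans (add_le_add ha hb)

lemma mul_left (h : IsFixedApprox S δ a x) (m : ℕ) :
    IsFixedApprox S (m * δ) (m * a) (m * x) := by
  have hsplit : ((m * a : ℕ) : ℝ) - S * (m * x) = m * (a - S * x) := by
    push_cast
    ring
  rw [IsFixedApprox, hsplit, abs_mul, Nat.abs_cast]
  exact mul_le_mul_of_nonneg_left h m.cast_nonneg

lemma div (h : IsFixedApprox S δ a x) {m : ℕ} (hm : 0 < m) :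
    IsFixedApprox S (δ + 1) (a / m) (x / m) := by
  have hm' : (1 : ℝ) ≤ m := mod_cast hm
  have hfloor : |((a / m : ℕ) : ℝ) - a / m| ≤ 1 := by
    rw [← Nat.floor_div_eq_div (K := ℝ), abs_sub_comm]
    exact Nat.abs_sub_floor_le (by positivity)
  have hquot : |(a : ℝ) / m - S * (x / m)| ≤ δ := by
    rw [← mul_div_assoc, ← sub_div, abs_div, Nat.abs_cast]
    exact (div_le_self (abs_nonneg _) hm').trans h
  calc |((a / m : ℕ) : ℝ) - S * (x / m)|
      ≤ |((a / m : ℕ) : ℝ) - a / m| + |(a : ℝ) / m - S * (x / m)| := abs_sub_le _ _ _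
    _ ≤ δ + 1 := by linarith

end IsFixedApprox

lemma isFixedApprox_self (S : ℕ) : IsFixedApprox S 0 S 1 := by
  simp [IsFixedApprox]

/-- Fixed-point value of `(x / S) ^ k` by binary powering, rounded down after every multiplication
if `c = 0` and up if `c = 1`; it requires `k < 2 ^ fuel`. -/
def roundedPow (S c x : ℕ) : ℕ → ℕ → ℕ
  | 0, _ => S
  | fuel + 1, k =>
    bif k.beq 0 then S else
      eager (roundedPow S c x fuel (k / 2)) fun y =>
      eager (y * y / S + c) fun z => match k % 2 with
      | 0 => z
      | _ => z * x / S + c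

lemma roundedPow_zero_right (S c x fuel : ℕ) : roundedPow S c x fuel 0 = S := by
  cases fuel <;> rfl

lemma roundedPow_two_mul {j : ℕ} (hj : j ≠ 0) (S c x fuel : ℕ) :
    roundedPow S c x (fuel + 1) (2 * j) =
      roundedPow S c x fuel j * roundedPow S c x fuel j / S + c := by
  simp [roundedPow, eager_eq, cond_eq_ite, hj]

lemma roundedPow_two_mul_add_one (j S c x fuel : ℕ) :
    roundedPow S c x (fuel + 1) (2 * j + 1) =
      (roundedPow S c x fuel j * roundedPow S c x fuel j / S + c) * x / S + c := by
  have hdiv : (2 * j + 1) / 2 = j := by lia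
  simp [roundedPow, eager_eq, cond_eq_ite, hdiv]

variable {S x : ℕ}

lemma cast_mul_div_div_le (S a b : ℕ) : ((a * b / S : ℕ) : ℝ) / S ≤ a / S * (b / S) := by
  rw [div_mul_div_comm, ← div_div]
  gcongr
  exact_mod_cast Nat.cast_div_le (α := ℝ)

lemma mul_le_cast_mul_div_add_one_div (hS : 0 < S) (a b : ℕ) :
    (a / S * (b / S) : ℝ) ≤ ((a * b / S + 1 : ℕ) : ℝ) / S := by
  rw [div_mul_div_comm, ← div_div]
  gcongr
  rw [div_le_iff₀ (mod_cast hS)]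
  exact_mod_cast (Nat.lt_mul_of_div_lt (Nat.lt_succ_self _) hS).le

lemma roundedPow_zero_div_le (hS : 0 < S) {fuel : ℕ} :
    ∀ {k : ℕ}, k < 2 ^ fuel → (roundedPow S 0 x fuel k : ℝ) / S ≤ (x / S) ^ k := by
  have hS' : (S : ℝ) ≠ 0 := mod_cast hS.ne'
  induction fuel with
  | zero => simp [roundedPow, hS']
  | succ fuel ih =>
    intro k hk
    have hsquare : ∀ {j}, j < 2 ^ fuel →
        ((roundedPow S 0 x fuel j * roundedPow S 0 x fuel j / S : ℕ) : ℝ) / S ≤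
          (x / S) ^ (2 * j) := fun hj => by
      rw [two_mul, pow_add]
      exact (cast_mul_div_div_le S _ _).trans
        (mul_le_mul (ih hj) (ih hj) (by positivity) (by positivity))
    rcases Nat.even_or_odd' k with ⟨j, rfl | rfl⟩
    · rcases eq_or_ne j 0 with rfl | hj
      · simp [roundedPow_zero_right, hS']
      · rw [roundedPow_two_mul hj, add_zero]
        exact hsquare (by lia)
    · rw [roundedPow_two_mul_add_one, add_zero, add_zero, pow_succ]
      exact (cast_mul_div_div_le S _ _).trans
        (mul_le_mul_of_nonneg_right (hsquare (by lia)) (by positivity))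

lemma le_roundedPow_one_div (hS : 0 < S) {fuel : ℕ} :
    ∀ {k : ℕ}, k < 2 ^ fuel → ((x : ℝ) / S) ^ k ≤ roundedPow S 1 x fuel k / S := by
  have hS' : (S : ℝ) ≠ 0 := mod_cast hS.ne'
  induction fuel with
  | zero => simp [roundedPow, hS']
  | succ fuel ih =>
    intro k hk
    have hsquare : ∀ {j}, j < 2 ^ fuel → ((x : ℝ) / S) ^ (2 * j) ≤
        ((roundedPow S 1 x fuel j * roundedPow S 1 x fuel j / S + 1 : ℕ) : ℝ) / S := fun hj => by
      rw [two_mul, pow_add]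
      exact (mul_le_mul (ih hj) (ih hj) (by positivity) (by positivity)).trans
        (mul_le_cast_mul_div_add_one_div hS _ _)
    rcases Nat.even_or_odd' k with ⟨j, rfl | rfl⟩
    · rcases eq_or_ne j 0 with rfl | hj
      · simp [roundedPow_zero_right, hS']
      · rw [roundedPow_two_mul hj]
        exact hsquare (by lia)
    · rw [roundedPow_two_mul_add_one, pow_succ]
      exact (mul_le_mul_of_nonneg_right (hsquare (by lia)) (by positivity)).trans
        (mul_le_cast_mul_div_add_one_div hS _ _)

/-- The loop of `negLog`: adds to `s` the `fuel` fixed-point terms `(t / S) ^ j / j` with `j ≥ i`,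
where `p` represents `(t / S) ^ i`. -/
def negLogLoop (S t : ℕ) : ℕ → ℕ → ℕ → ℕ → ℕ
  | 0, _, _, s => s
  | fuel + 1, i, p, s =>
    match p with
    | 0 => s
    | p + 1 =>
      eager (i + 1) fun i' =>
      eager (((p + 1).mul t).div S) fun p' =>
      eager (s.add ((p + 1).div i)) fun s' =>
        negLogLoop S t fuel i' p' s'

/-- Fixed-point value of `-log (1 - t / S)`, from 1300 terms of the power series of the
logarithm. -/
def negLog (S t : ℕ) : ℕ := eager t fun t => negLogLoop S t 1300 1 t 0

lemma negLogLoop_zero_right (S t fuel i s : ℕ) : negLogLoop S t fuel i 0 s = s := by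
  cases fuel <;> rfl

lemma negLogLoop_succ (S t fuel i p s : ℕ) :
    negLogLoop S t (fuel + 1) i p s =
      negLogLoop S t fuel (i + 1) (p * t / S) (s + p / i) := by
  cases p with
  | zero => simp [negLogLoop_zero_right]
  | succ p =>
    simp only [negLogLoop, eager_eq]
    rfl

variable {t : ℕ} {X R : ℝ}

lemma IsFixedApprox.mul_div {p : ℕ} {Y : ℝ} (hS : 0 < S) (ht : 2 * t ≤ S) (hY : |Y| ≤ 1 / 2)
    (htX : IsFixedApprox S R t X) (hp : IsFixedApprox S (R + 2) p Y) :
    IsFixedApprox S (R + 2) (p * t / S) (Y * X) := by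
  have hS' : (0 : ℝ) < S := mod_cast hS
  have hfloor : |((p * t / S : ℕ) : ℝ) - p * t / S| ≤ 1 := by
    rw [← Nat.floor_div_eq_div (K := ℝ), abs_sub_comm, Nat.cast_mul]
    exact Nat.abs_sub_floor_le (by positivity)
  have hhalf : (t : ℝ) / S ≤ 1 / 2 := by
    rw [div_le_div_iff₀ hS' two_pos]
    exact_mod_cast (by lia : t * 2 ≤ 1 * S)
  have hsplit : (p * t / S : ℝ) - S * (Y * X) = (p - S * Y) * (t / S) + Y * (t - S * X) := by
    field_simp
    ring
  have hprod : |(p * t / S : ℝ) - S * (Y * X)| ≤ R + 1 := by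
    rw [hsplit]
    calc _ ≤ |(p : ℝ) - S * Y| * (t / S) + |Y| * |t - S * X| := by
          refine (abs_add_le _ _).trans (le_of_eq ?_)
          rw [abs_mul, abs_mul, abs_of_nonneg (by positivity : (0 : ℝ) ≤ t / S)]
      _ ≤ (R + 2) * (1 / 2) + 1 / 2 * R := by
          gcongr
          · exact hp.nonneg
          · exact hp
          · exact htX
      _ = R + 1 := by ring
  calc |((p * t / S : ℕ) : ℝ) - S * (Y * X)|
      ≤ |((p * t / S : ℕ) : ℝ) - p * t / S| + |(p * t / S : ℝ) - S * (Y * X)| := abs_sub_le _ _ _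
    _ ≤ R + 2 := by linarith

lemma isFixedApprox_negLogLoop (hS : 0 < S) (ht : 2 * t ≤ S) (hX : |X| ≤ 1 / 2)
    (htX : IsFixedApprox S R t X) {fuel : ℕ} : ∀ {i p s : ℕ} {y δ : ℝ}, 0 < i →
    IsFixedApprox S (R + 2) p (X ^ i) → IsFixedApprox S δ s y →
    IsFixedApprox S (δ + fuel * (R + 3)) (negLogLoop S t fuel i p s)
      (y + ∑ j ∈ range fuel, X ^ (i + j) / ((i + j : ℕ) : ℝ)) := by
  induction fuel with
  | zero => simp [negLogLoop]
  | succ fuel ih =>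
    intro i p s y δ hi hp hs
    have hpow : |X ^ i| ≤ 1 / 2 := by
      rw [abs_pow]
      exact (pow_le_of_le_one (abs_nonneg X) (by linarith) hi.ne').trans hX
    have hnext := ih i.succ_pos (by simpa [pow_succ] using htX.mul_div hS ht hpow hp)
      (hs.add (hp.div hi))
    rw [negLogLoop_succ, sum_range_succ', add_comm (∑ _ ∈ _, _), ← add_assoc]
    convert hnext using 1
    · push_cast
      ring
    · simp only [add_zero, add_assoc, Nat.succ_eq_add_one, add_comm 1]

lemma isFixedApprox_negLog (hS : 0 < S) (hS' : S ≤ 2 ^ 1300) (ht : 2 * t ≤ S) (hX : |X| ≤ 1 / 2)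
    (htX : IsFixedApprox S R t X) :
    IsFixedApprox S (1300 * (R + 4)) (negLog S t) (-Real.log (1 - X)) := by
  have hloop : IsFixedApprox S (0 + (1300 : ℕ) * (R + 3)) (negLogLoop S t 1300 1 t 0) _ :=
    isFixedApprox_negLogLoop hS ht hX htX (y := 0) one_pos
      (by simpa using htX.mono (by linarith)) (by simp [IsFixedApprox])
  have htail : |∑ i ∈ range 1300, X ^ (i + 1) / (i + 1) + Real.log (1 - X)| ≤ 1 / 2 ^ 1300 := by
    refine (Real.abs_log_sub_add_sum_range_le (by linarith) 1300).trans ?_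
    rw [div_le_iff₀ (by linarith)]
    calc |X| ^ 1301 ≤ (1 / 2) ^ 1301 := pow_le_pow_left₀ (abs_nonneg X) hX _
      _ = 1 / 2 ^ 1300 * (1 / 2) := by rw [pow_succ, one_div_pow]
      _ ≤ 1 / 2 ^ 1300 * (1 - |X|) := mul_le_mul_of_nonneg_left (by linarith) (by positivity)
  have hscaled : |(S : ℝ) * (∑ i ∈ range 1300, X ^ (i + 1) / (i + 1) + Real.log (1 - X))| ≤ 1 := by
    rw [abs_mul, Nat.abs_cast]
    calc (S : ℝ) * _ ≤ 2 ^ 1300 * (1 / 2 ^ 1300) :=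
          mul_le_mul (mod_cast hS') htail (abs_nonneg _) (by positivity)
      _ = 1 := mul_one_div_cancel (by positivity)
  rw [IsFixedApprox] at hloop ⊢
  rw [negLog, eager_eq]
  simp only [zero_add, add_comm 1, Nat.cast_add, Nat.cast_one] at hloop
  have hR := htX.nonneg
  rw [abs_le] at hloop hscaled ⊢
  push_cast at hloop
  constructor <;> linarith [hloop.1, hloop.2, hscaled.1, hscaled.2]

attribute [irreducible] negLog

end FixedPoint


section RootGap

lemma mul_one_sub_pow_lt_mul_one_sub_pow {k : ℕ} {x y : ℝ} (hx : 0 ≤ x) (hxy : x < y)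
    (hy : (k + 1) * y ≤ 1) : x * (1 - x) ^ k < y * (1 - y) ^ k := by
  have : k * y ≤ 1 - y := by linarith
  have hky : 0 ≤ k * y := mul_nonneg k.cast_nonneg (hx.trans hxy.le)
  have hx1 : 0 < 1 - x := by linarith
  have hratio : 1 + -((y - x) / (1 - x)) = (1 - y) / (1 - x) := by
    field_simp
    ring
  have hbernoulli : 1 - k * ((y - x) / (1 - x)) ≤ ((1 - y) / (1 - x)) ^ k := by
    have hle : -2 ≤ -((y - x) / (1 - x)) := by
      rw [neg_le_neg_iff, div_le_iff₀ hx1]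
      linarith
    have hpow := one_add_mul_le_pow hle k
    rw [hratio] at hpow
    linarith
  have hloss : k * y * (y - x) / (1 - x) < y - x := by
    rw [div_lt_iff₀ hx1]
    nlinarith
  calc x * (1 - x) ^ k < (y - k * y * (y - x) / (1 - x)) * (1 - x) ^ k :=
        mul_lt_mul_of_pos_right (by linarith) (pow_pos hx1 k)
    _ = y * (1 - k * ((y - x) / (1 - x))) * (1 - x) ^ k := by ring
    _ ≤ y * ((1 - y) / (1 - x)) ^ k * (1 - x) ^ k := by
        gcongr
        exact hx.trans hxy.le
    _ = y * (1 - y) ^ k := by rw [mul_assoc, ← mul_pow, div_mul_cancel₀ _ hx1.ne']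

namespace IsDominantRoot

variable {k : ℕ} {α : ℝ}

lemma two_pow_mul_halfGap_mul_pow (h : IsDominantRoot k α) :
    2 ^ (k + 1) * ((1 - α / 2) * (1 - (1 - α / 2)) ^ k) = 1 := by
  calc _ = 2 ^ k * (α / 2) ^ k * (2 - α) := by ring
    _ = 1 := by rw [← mul_pow, mul_div_cancel₀ α two_ne_zero, h.root]

end IsDominantRoot

variable {S k E : ℕ} {α : ℝ}

lemma IsDominantRoot.le_halfGap (h : IsDominantRoot k α) (hk : k < 2 ^ 12) (hS : 0 < S) (hE : E ≤ S)
    (hgap : (k + 1) * E ≤ S)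
    (hlow : 2 ^ (k + 1) * E * roundedPow S 1 (S - E) 12 k ≤ S * S) :
    (E : ℝ) ≤ S * (1 - α / 2) := by
  have hS' : (0 : ℝ) < S := mod_cast hS
  by_contra! hlt
  have hlt' : 1 - α / 2 < E / S := by rwa [lt_div_iff₀ hS', mul_comm]
  have hmono : (1 - α / 2) * (1 - (1 - α / 2)) ^ k < E / S * (1 - E / S) ^ k :=
    mul_one_sub_pow_lt_mul_one_sub_pow (by linarith [h.upper]) hlt' <| by
      rw [← mul_div_assoc, div_le_one hS']
      exact_mod_cast hgap
  have hpow : (1 - E / S : ℝ) ^ k ≤ roundedPow S 1 (S - E) 12 k / S := by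
    have := le_roundedPow_one_div (x := S - E) hS hk
    rwa [Nat.cast_sub hE, sub_div, div_self hS'.ne'] at this
  have hone : 2 ^ (k + 1) * (E / S * (roundedPow S 1 (S - E) 12 k / S) : ℝ) ≤ 1 := by
    rw [div_mul_div_comm, ← mul_div_assoc, div_le_one (by positivity), ← mul_assoc]
    exact_mod_cast hlow
  have hbound : 2 ^ (k + 1) * (E / S * (1 - E / S) ^ k : ℝ) ≤ 1 := le_trans (by gcongr) hone
  have := h.two_pow_mul_halfGap_mul_pow
  have : (0 : ℝ) < 2 ^ (k + 1) := by positivity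
  nlinarith

lemma IsDominantRoot.halfGap_le (h : IsDominantRoot k α) (hk : k < 2 ^ 12) (hS : 0 < S) (hE : E ≤ S)
    (hup : S * S ≤ 2 ^ (k + 1) * E * roundedPow S 0 (S - E) 12 k) :
    S * (1 - α / 2) ≤ E := by
  have hS' : (0 : ℝ) < S := mod_cast hS
  by_contra! hlt
  have hlt' : E / S < 1 - α / 2 := by rwa [div_lt_iff₀ hS', mul_comm]
  have hmono : E / S * (1 - E / S : ℝ) ^ k < (1 - α / 2) * (1 - (1 - α / 2)) ^ k :=
    mul_one_sub_pow_lt_mul_one_sub_pow (by positivity) hlt' <| by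
      linarith [h.add_one_mul_two_sub_le]
  have hpow : (roundedPow S 0 (S - E) 12 k / S : ℝ) ≤ (1 - E / S) ^ k := by
    have := roundedPow_zero_div_le (x := S - E) hS hk
    rwa [Nat.cast_sub hE, sub_div, div_self hS'.ne'] at this
  have hone : 1 ≤ 2 ^ (k + 1) * (E / S * (roundedPow S 0 (S - E) 12 k / S) : ℝ) := by
    rw [div_mul_div_comm, ← mul_div_assoc, one_le_div (by positivity), ← mul_assoc]
    exact_mod_cast hup
  have hbound : 1 ≤ 2 ^ (k + 1) * (E / S * (1 - E / S) ^ k : ℝ) := hone.trans (by gcongr)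
  have := h.two_pow_mul_halfGap_mul_pow
  have : (0 : ℝ) < 2 ^ (k + 1) := by positivity
  nlinarith

/-- The fixed-point scale of the computation. Powers of two are avoided because the kernel hashes
large numerals by their low-order bits, so that many multiples of a large power of two collide. -/
def scale : ℕ := 3 ^ 757

lemma scale_pos : 0 < scale := by
  rw [scale]
  positivity

set_option exponentiation.threshold 800 in
lemma scale_le_three_pow : scale ≤ 3 ^ 800 := Nat.pow_le_pow_right (by norm_num) (by norm_num)

lemma scale_le_two_pow : scale ≤ 2 ^ 1300 :=
  calc scale ≤ 3 ^ 800 := scale_le_three_pow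
    _ = (3 ^ 8) ^ 100 := by rw [← pow_mul]
    _ ≤ (2 ^ 13) ^ 100 := Nat.pow_le_pow_left (by norm_num) 100
    _ = 2 ^ 1300 := by rw [← pow_mul]

attribute [irreducible] scale

/-- The fixed-point solution `h` of `2 ^ (k + 1) * h * (1 - h) ^ k = 1` near `2 ^ (-k - 1)`, found
by fixed-point iteration. The equation for `h = 1 - α / 2` is that of the dominant root `α`. -/
def rootHalfGap (k : ℕ) : ℕ → ℕ → ℕ
  | 0, E => E
  | m + 1, E =>
    eager (scale * scale / (2 ^ (k + 1) * roundedPow scale 0 (scale - E) 12 k)) (rootHalfGap k m)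

/-- Sufficient test for `E` to represent the half gap `1 - α / 2` of the dominant root `α`, with an
error of at most `1024` units. -/
def isRootHalfGap (k E : ℕ) : Bool :=
  Nat.ble ((k + 1) * (2 * (E + 1024))) scale &&
  Nat.ble (2 ^ (k + 1) * (E - 1024) * roundedPow scale 1 (scale - (E - 1024)) 12 k)
    (scale * scale) &&
  Nat.ble (scale * scale)
    (2 ^ (k + 1) * (E + 1024) * roundedPow scale 0 (scale - (E + 1024)) 12 k)

lemma two_mul_add_one_mul_le_of_isRootHalfGap (h : isRootHalfGap k E) :
    2 * ((k + 1) * E) ≤ scale := by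
  simp only [isRootHalfGap, Bool.and_eq_true, Nat.ble_eq] at h
  lia

lemma IsDominantRoot.isFixedApprox_halfGap (h : IsDominantRoot k α) (hk : k < 2 ^ 12)
    (hE : isRootHalfGap k E) : IsFixedApprox scale 1024 E (1 - α / 2) := by
  simp only [isRootHalfGap, Bool.and_eq_true, Nat.ble_eq] at hE
  obtain ⟨⟨hgap, hlow⟩, hup⟩ := hE
  have htwo : 2 * (E + 1024) ≤ scale := (Nat.le_mul_of_pos_left _ k.succ_pos).trans hgap
  have hle : E + 1024 ≤ scale := by lia
  have hlow' := h.le_halfGap hk scale_pos (by lia)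
    ((Nat.mul_le_mul_left (k + 1) (by lia)).trans hgap) hlow
  have hup' := h.halfGap_le hk scale_pos hle hup
  have hsub : (E : ℝ) ≤ ((E - 1024 : ℕ) : ℝ) + 1024 := mod_cast le_tsub_add
  push_cast at hup'
  rw [IsFixedApprox, abs_le]
  constructor <;> linarith

end RootGap


section Exclusion

/-- Denominator of the first convergent of `r' / r` to exceed `Q`, by the Euclidean algorithm. -/
def convergentDenom (Q : ℕ) : ℕ → ℕ → ℕ → ℕ → ℕ → ℕ
  | 0, _, _, _, q => q
  | fuel + 1, r, r', q, q' =>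
    bif Q.ble q' then q' else
      eager (r.mod r') fun r'' =>
      eager (((r.div r').mul q').add q) fun q'' =>
        convergentDenom Q fuel r' r'' q' q''

/-- No multiple of `T` lies within `B` of `x`. -/
def isFarFromMultiples (T B x : ℕ) : Bool :=
  eager (x % T) fun r => Nat.blt B r && Nat.blt (r + B) T

/-- Test excluding all solutions `n < N` of `|n * A - d * T - C| ≤ D`, where `p / q` is close to
`A / T` and `B` is at least `q * D + N * |q * A - p * T|`. The second alternative takes care of `C`
very close to `c * A`, with almost a solution for `n = c` and `d = 0`. -/
def isExcluded (N A T B C p q c : ℕ) : Bool :=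
  isFarFromMultiples T B (q * C) ||
    (Nat.beq (Nat.gcd p q) 1 && Nat.ble N q && Nat.blt (q * Nat.dist C (c * A) + B) T)

lemma intCast_dist (a b : ℕ) : (Nat.dist a b : ℤ) = |(a : ℤ) - b| := by
  rcases le_total a b with h | h
  · rw [Nat.dist_eq_sub_of_le h, abs_sub_comm, abs_of_nonneg (by lia), Nat.cast_sub h]
  · rw [Nat.dist_eq_sub_of_le_right h, abs_of_nonneg (by lia), Nat.cast_sub h]

variable {A T B C D N p q c n d : ℕ}

lemma lt_abs_mul_sub_of_isFarFromMultiples {x : ℕ} (h : isFarFromMultiples T B x) (w : ℤ) :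
    (B : ℤ) < |T * w - x| := by
  simp only [isFarFromMultiples, eager_eq, Bool.and_eq_true, Nat.blt_eq] at h
  obtain ⟨hlow, hup⟩ := h
  have hdiv : (T : ℤ) * w - x = T * (w - (x / T : ℕ)) - (x % T : ℕ) := by
    conv_lhs => rw [← Nat.div_add_mod x T]
    push_cast
    ring
  rw [hdiv, lt_abs]
  rcases le_or_gt (w - (x / T : ℕ) : ℤ) 0 with hw | hw
  · right
    have : (T : ℤ) * (w - (x / T : ℕ)) ≤ 0 := mul_nonpos_of_nonneg_of_nonpos (by lia) hw
    lia
  · left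
    have : (T : ℤ) ≤ T * (w - (x / T : ℕ)) := le_mul_of_one_le_right (by lia) hw
    lia

lemma abs_convergent_form_le {A T C D N n d p q : ℤ} (hq : 0 ≤ q) (hn : |n| ≤ N)
    (h : |n * A - d * T - C| ≤ D) :
    |T * (n * p - d * q) - q * C| ≤ q * D + N * |q * A - p * T| := by
  have hsplit : T * (n * p - d * q) - q * C = q * (n * A - d * T - C) - n * (q * A - p * T) := by
    ring
  calc |T * (n * p - d * q) - q * C| ≤ |q * (n * A - d * T - C)| + |n * (q * A - p * T)| := by
        rw [hsplit]
        exact abs_sub _ _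
    _ ≤ q * D + N * |q * A - p * T| := by
        rw [abs_mul, abs_mul, abs_of_nonneg hq]
        gcongr

lemma dvd_of_abs_convergent_form_add_lt {T n d p q x : ℤ} (hcop : IsCoprime q p)
    (h : |T * (n * p - d * q) - x| + |x| < T) : q ∣ n := by
  have hlt : |T * (n * p - d * q)| < T :=
    lt_of_le_of_lt (by simpa using abs_add_le (T * (n * p - d * q) - x) x) h
  have hzero : n * p - d * q = 0 := by
    by_contra hne
    have hone := Int.one_le_abs hne
    rw [abs_mul] at hlt
    nlinarith [le_abs_self T, abs_nonneg T]
  exact hcop.dvd_of_dvd_mul_right ⟨d, by linarith⟩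

lemma lt_abs_of_isExcluded (h : isExcluded N A T B C p q c)
    (hB : q * D + N * Nat.dist (q * A) (p * T) ≤ B) (hcn : c < n) (hn : n < N) :
    (D : ℤ) < |(n : ℤ) * A - d * T - C| := by
  by_contra! hle
  have hB' : (q : ℤ) * D + N * |(q : ℤ) * A - p * T| ≤ B := by
    rw [← Nat.cast_mul q A, ← Nat.cast_mul p T, ← intCast_dist]
    exact_mod_cast hB
  simp only [isExcluded, Bool.or_eq_true, Bool.and_eq_true, Nat.beq_eq, Nat.ble_eq,
    Nat.blt_eq] at h
  rcases h with hfar | ⟨⟨hcop, hq⟩, hsmall⟩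
  · have hlow := lt_abs_mul_sub_of_isFarFromMultiples hfar (n * p - d * q)
    have hup := abs_convergent_form_le (p := p) (N := N) q.cast_nonneg
      (by rw [Nat.abs_cast]; lia) hle
    push_cast at hlow
    linarith
  · have hshift : |((n - c : ℕ) : ℤ) * A - d * T - (C - c * A)| ≤ D := by
      rwa [Nat.cast_sub hcn.le,
        (by ring : ((n : ℤ) - c) * A - d * T - (C - c * A) = n * A - d * T - C)]
    have hform := abs_convergent_form_le (p := p) (N := N) q.cast_nonneg
      (by rw [Nat.abs_cast]; lia) hshift
    have hdvd : (q : ℤ) ∣ (n - c : ℕ) := by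
      refine dvd_of_abs_convergent_form_add_lt (T := T) (d := d) (x := q * (C - c * A))
        (Nat.isCoprime_iff_coprime.2 (Nat.Coprime.symm hcop)) ?_
      have hsmall' : (q : ℤ) * |(C : ℤ) - c * A| + B < T := by
        rw [← Nat.cast_mul c A, ← intCast_dist]
        exact_mod_cast hsmall
      rw [abs_mul, Nat.abs_cast]
      linarith
    have := Nat.le_of_dvd (by lia) (Int.natCast_dvd_natCast.1 hdvd)
    lia

end Exclusion


section Certificate

/-- Fixed-point value of `log 2`. -/
def fixedLogTwo : ℕ := negLog scale (scale / 2)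

/-- Fixed-point value of `log 3`. -/
def fixedLogThree : ℕ := fixedLogTwo + negLog scale (scale / 3)

/-- Fixed-point value of `log 5`. -/
def fixedLogFive : ℕ := 2 * fixedLogTwo + negLog scale (scale / 5)

/-- Fixed-point value of `log 7`. -/
def fixedLogSeven : ℕ := 3 * fixedLogTwo - negLog scale (scale / 8)

/-- Fixed-point value of `log 10`. -/
def fixedLogTen : ℕ := fixedLogTwo + fixedLogFive

/-- Fixed-point value of `log b` for `1 ≤ b ≤ 9`. -/
def fixedLogDigit : ℕ → ℕ
  | 2 => fixedLogTwo
  | 3 => fixedLogThree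
  | 4 => 2 * fixedLogTwo
  | 5 => fixedLogFive
  | 6 => fixedLogTwo + fixedLogThree
  | 7 => fixedLogSeven
  | 8 => 3 * fixedLogTwo
  | 9 => 2 * fixedLogThree
  | _ => 0

lemma isFixedApprox_negLog_scale {t : ℕ} {X R : ℝ} (ht : 2 * t ≤ scale) (hX0 : 0 ≤ X)
    (hX : X ≤ 1 / 2) (htX : IsFixedApprox scale R t X) :
    IsFixedApprox scale (1300 * (R + 4)) (negLog scale t) (-Real.log (1 - X)) :=
  isFixedApprox_negLog scale_pos scale_le_two_pow ht (by rwa [abs_of_nonneg hX0]) htX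

lemma isFixedApprox_negLog_scale_div {m : ℕ} (hm : 2 ≤ m) :
    IsFixedApprox scale 6500 (negLog scale (scale / m)) (Real.log m - Real.log (m - 1)) := by
  have hm' : (2 : ℝ) ≤ m := mod_cast hm
  have hlog : Real.log m - Real.log (m - 1) = -Real.log (1 - 1 / m) := by
    rw [one_sub_div (by linarith), Real.log_div (by linarith) (by linarith)]
    ring
  rw [hlog]
  have hdiv : 2 * (scale / m) ≤ scale :=
    (Nat.mul_le_mul_right _ hm).trans (Nat.mul_div_le scale m)
  exact (isFixedApprox_negLog_scale hdiv (by positivity) (one_div_le_one_div_of_le two_pos hm')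
    ((isFixedApprox_self scale).div (by lia))).mono (by norm_num)

lemma log_four : Real.log 4 = 2 * Real.log 2 := by
  rw [(by norm_num : (4 : ℝ) = 2 ^ 2), Real.log_pow, Nat.cast_ofNat]

lemma log_eight : Real.log 8 = 3 * Real.log 2 := by
  rw [(by norm_num : (8 : ℝ) = 2 ^ 3), Real.log_pow, Nat.cast_ofNat]

lemma isFixedApprox_fixedLogTwo : IsFixedApprox scale 6500 fixedLogTwo (Real.log 2) :=
  (isFixedApprox_negLog_scale_div le_rfl).congr le_rfl (by norm_num)

lemma isFixedApprox_fixedLogThree : IsFixedApprox scale 13000 fixedLogThree (Real.log 3) :=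
  (isFixedApprox_fixedLogTwo.add (isFixedApprox_negLog_scale_div (m := 3) (by norm_num))).congr
    (by norm_num) (by norm_num)

lemma isFixedApprox_fixedLogFive : IsFixedApprox scale 19500 fixedLogFive (Real.log 5) :=
  ((isFixedApprox_fixedLogTwo.mul_left 2).add
    (isFixedApprox_negLog_scale_div (m := 5) (by norm_num))).congr
    (by norm_num) (by norm_num [log_four])

lemma isFixedApprox_fixedLogSeven : IsFixedApprox scale 26000 fixedLogSeven (Real.log 7) :=
  ((isFixedApprox_fixedLogTwo.mul_left 3).sub
    (isFixedApprox_negLog_scale_div (m := 8) (by norm_num)) (by decide +kernel)).congr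
    (by norm_num) (by norm_num [log_eight])

lemma isFixedApprox_fixedLogTen : IsFixedApprox scale 26000 fixedLogTen (Real.log 10) :=
  (isFixedApprox_fixedLogTwo.add isFixedApprox_fixedLogFive).congr (by norm_num) <| by
    rw [← Real.log_mul (by norm_num) (by norm_num)]
    norm_num

lemma isFixedApprox_fixedLogDigit {b : ℕ} (hb1 : 1 ≤ b) (hb9 : b ≤ 9) :
    IsFixedApprox scale 26000 (fixedLogDigit b) (Real.log b) := by
  have hnine : Real.log 9 = 2 * Real.log 3 := by
    rw [(by norm_num : (9 : ℝ) = 3 ^ 2), Real.log_pow]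
    norm_num
  have hsix : Real.log 6 = Real.log 2 + Real.log 3 := by
    rw [← Real.log_mul (by norm_num) (by norm_num)]
    norm_num
  have h2 := isFixedApprox_fixedLogTwo
  have h3 := isFixedApprox_fixedLogThree
  interval_cases b <;> unfold fixedLogDigit <;> simp only [Nat.cast_ofNat, Nat.cast_one]
  · have hzero : IsFixedApprox scale 0 0 0 := by simp [IsFixedApprox]
    exact hzero.congr (by norm_num) Real.log_one.symm
  · exact h2.mono (by norm_num)
  · exact h3.mono (by norm_num)
  · exact (h2.mul_left 2).congr (by norm_num) log_four.symm
  · exact isFixedApprox_fixedLogFive.mono (by norm_num)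
  · exact (h2.add h3).congr (by norm_num) hsix.symm
  · exact isFixedApprox_fixedLogSeven
  · exact (h2.mul_left 3).congr (by norm_num) log_eight.symm
  · exact (h3.mul_left 2).congr (by norm_num) hnine.symm

/-- Test excluding all solutions of `|n * A - d * T - (log b + G)| ≤ 2 ^ 550`, in units of
`1 / scale`, with `1 ≤ b ≤ 9` and `4 < n < 2 ^ 512`. -/
def excludesDigits (A T G : ℕ) : Bool :=
  eager (convergentDenom (2 ^ 552) 1000 T A 0 1) fun q =>
  eager ((q * A + T / 2) / T) fun p =>
  eager (2 ^ 512 * Nat.dist (q * A) (p * T) + 2 ^ 1120) fun B =>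
    Nat.ble q (2 ^ 570) && (List.range' 1 9).all fun b =>
      -- As `k` grows, `G` tends to `log (4 / 3)`, so that `C` is close to the logarithm of `2 ^ 2`
      -- for `b = 3` and of `2 ^ 3` for `b = 6`; hence the choice of `c`.
      eager (fixedLogDigit b + G) fun C => isExcluded (2 ^ 512) A T B C p q (b / 3 + 1)

/-- Test excluding all solutions with `n < 2 ^ 512` for this `k`: computes fixed-point values of
`log α` and `log (lucasDen k α / lucasNum α)` from one of the half gap `1 - α / 2`. -/
def excludesOrder (k : ℕ) : Bool :=
  eager k fun k =>
  eager (rootHalfGap k (2000 / k + 4) 0) fun E =>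
  eager (negLog scale E) fun m =>
  eager (2 * fixedLogTwo + negLog scale (4 * E / 3) + negLog scale (2 * E)) fun X =>
  eager (fixedLogThree + m + negLog scale ((k + 1) * E)) fun Y =>
    isRootHalfGap k E && Nat.ble m fixedLogTwo && Nat.ble Y X &&
      eager (fixedLogTwo - m) fun A => eager (X - Y) fun G => excludesDigits A fixedLogTen G

variable {A T G b n d k : ℕ} {α : ℝ}

lemma two_pow_lt_abs_of_excludesDigits (h : excludesDigits A T G) (hb1 : 1 ≤ b) (hb9 : b ≤ 9)
    (hn4 : 4 < n) (hn : n < 2 ^ 512) :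
    (2 : ℤ) ^ 550 < |(n : ℤ) * A - d * T - (fixedLogDigit b + G : ℕ)| := by
  simp only [excludesDigits, eager_eq, Bool.and_eq_true, Nat.ble_eq, List.all_eq_true,
    List.mem_range'_1] at h
  obtain ⟨hq, hexcl⟩ := h
  rw [← Nat.cast_ofNat, ← Nat.cast_pow]
  refine lt_abs_of_isExcluded (hexcl b ⟨hb1, Nat.lt_succ_of_le hb9⟩) ?_
    ((Nat.succ_le_succ (Nat.div_le_div_right hb9)).trans_lt hn4) hn
  rw [add_comm, (by norm_num : 1120 = 570 + 550), pow_add]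
  gcongr

namespace IsDominantRoot

lemma halfGap_pos (h : IsDominantRoot k α) : 0 < 1 - α / 2 := by
  linarith [h.upper]

lemma halfGap_lt (h : IsDominantRoot k α) : 1 - α / 2 < 1 / 10 := by
  linarith [h.lower]

lemma add_one_mul_halfGap_le (h : IsDominantRoot k α) : (k + 1) * (1 - α / 2) ≤ 1 / 2 := by
  linarith [h.add_one_mul_two_sub_le]

lemma log_eq (h : IsDominantRoot k α) :
    Real.log α = Real.log 2 + Real.log (1 - (1 - α / 2)) := by
  rw [← Real.log_mul two_ne_zero (by linarith [h.pos])]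
  ring_nf

lemma log_lucasDen_div_lucasNum (h : IsDominantRoot k α) :
    Real.log (lucasDen k α / lucasNum α) =
      2 * Real.log 2 + -Real.log (1 - 4 * (1 - α / 2) / 3) + -Real.log (1 - 2 * (1 - α / 2)) -
      (Real.log 3 + -Real.log (1 - (1 - α / 2)) + -Real.log (1 - (k + 1) * (1 - α / 2))) := by
  have hden : lucasDen k α = 4 * (1 - (1 - α / 2)) * (1 - (k + 1) * (1 - α / 2)) := by
    rw [lucasDen]
    ring
  have hnum : lucasNum α = 3 * (1 - 4 * (1 - α / 2) / 3) * (1 - 2 * (1 - α / 2)) := by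
    rw [lucasNum]
    ring
  have hgap := h.halfGap_lt
  have h1 : 1 - (1 - α / 2) ≠ 0 := by linarith
  have h2 : 1 - (k + 1) * (1 - α / 2) ≠ 0 := by linarith [h.add_one_mul_halfGap_le]
  have h3 : 1 - 4 * (1 - α / 2) / 3 ≠ 0 := by linarith
  have h4 : 1 - 2 * (1 - α / 2) ≠ 0 := by linarith
  rw [hden, hnum, Real.log_div (by positivity) (by positivity), Real.log_mul (by positivity) h2,
    Real.log_mul (by norm_num) h1, Real.log_mul (by positivity) h4,
    Real.log_mul (by norm_num) h3, log_four]
  ring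

lemma exists_of_excludesOrder (h : IsDominantRoot k α) (hk : k < 2 ^ 12) (hc : excludesOrder k) :
    ∃ A G : ℕ, IsFixedApprox scale (2 ^ 35) A (Real.log α) ∧
      IsFixedApprox scale (2 ^ 35) G (Real.log (lucasDen k α / lucasNum α)) ∧
      excludesDigits A fixedLogTen G := by
  simp only [excludesOrder, eager_eq, Bool.and_eq_true, Nat.ble_eq] at hc
  set E := rootHalfGap k (2000 / k + 4) 0
  obtain ⟨⟨⟨hE, hm⟩, hYX⟩, hexcl⟩ := hc
  refine ⟨_, _, ?_, ?_, hexcl⟩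
  all_goals
    have hgap := h.isFixedApprox_halfGap hk hE
    have hsmall := two_mul_add_one_mul_le_of_isRootHalfGap hE
    have hfour : 4 * E ≤ (k + 1) * E := Nat.mul_le_mul_right E (by linarith [h.three_le])
    have hpos := h.halfGap_pos
    have hlt := h.halfGap_lt
    have hnegLog := isFixedApprox_negLog_scale (by lia) hpos.le (by linarith) hgap
  · rw [h.log_eq, ← sub_neg_eq_add]
    exact (isFixedApprox_fixedLogTwo.sub hnegLog hm).mono (by norm_num)
  · have hk' : (k : ℝ) < 2 ^ 12 := mod_cast hk
    have hnegLogDen := isFixedApprox_negLog_scale hsmall (by positivity)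
      (mod_cast h.add_one_mul_halfGap_le) (hgap.mul_left (k + 1))
    have hnegLogNum₁ := isFixedApprox_negLog_scale (by lia) (by positivity) (by push_cast; linarith)
      ((hgap.mul_left 4).div three_pos)
    have hnegLogNum₂ := isFixedApprox_negLog_scale (by lia) (by positivity) (by push_cast; linarith)
      (hgap.mul_left 2)
    have hsum := (((isFixedApprox_fixedLogTwo.mul_left 2).add hnegLogNum₁).add hnegLogNum₂).sub
      ((isFixedApprox_fixedLogThree.add hnegLog).add hnegLogDen) hYX
    push_cast at hsum
    rw [h.log_lucasDen_div_lucasNum]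
    exact hsum.mono (by linarith)

end IsDominantRoot

attribute [irreducible] fixedLogTen fixedLogDigit excludesDigits excludesOrder

end Certificate


section SmallIndex

variable {k n d : ℕ} {b : ℤ} {α : ℝ}

lemma excludesOrder_of_all {l m : ℕ} (h : (List.range' l m).all excludesOrder) (hl : l ≤ k)
    (hm : k < l + m) : excludesOrder k :=
  List.all_eq_true.1 h k (List.mem_range'_1.2 ⟨hl, hm⟩)

set_option maxHeartbeats 1000000 in
-- The kernel evaluates all 1535 tests; splitting the range bounds the memory it needs.
theorem excludesOrder_of_lt (hk3 : 3 ≤ k) (hk : k < 1538) : excludesOrder k := by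
  rcases lt_or_ge k 100 with h100 | h100
  · have h : (List.range' 3 97).all excludesOrder := by decide +kernel
    exact excludesOrder_of_all h hk3 h100
  rcases lt_or_ge k 300 with h300 | h300
  · have h : (List.range' 100 200).all excludesOrder := by decide +kernel
    exact excludesOrder_of_all h h100 h300
  rcases lt_or_ge k 600 with h600 | h600
  · have h : (List.range' 300 300).all excludesOrder := by decide +kernel
    exact excludesOrder_of_all h h300 h600
  rcases lt_or_ge k 1000 with h1000 | h1000
  · have h : (List.range' 600 400).all excludesOrder := by decide +kernel
    exact excludesOrder_of_all h h600 h1000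
  · have h : (List.range' 1000 538).all excludesOrder := by decide +kernel
    exact excludesOrder_of_all h h1000 hk

lemma log_sub_log_le_abs_sub_div {m x y : ℝ} (hm : 0 < m) (hx : 0 < x) (hy : m ≤ y) :
    Real.log x - Real.log y ≤ |x - y| / m := by
  have hy0 := hm.trans_le hy
  calc Real.log x - Real.log y = Real.log (x / y) := (Real.log_div hx.ne' hy0.ne').symm
    _ ≤ x / y - 1 := Real.log_le_sub_one_of_pos (div_pos hx hy0)
    _ = (x - y) / y := by rw [sub_div, div_self hy0.ne']
    _ ≤ |x - y| / m := div_le_div₀ (abs_nonneg _) (le_abs_self _) hm hy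

lemma abs_log_sub_log_le {m x y : ℝ} (hm : 0 < m) (hx : m ≤ x) (hy : m ≤ y) :
    |Real.log x - Real.log y| ≤ |x - y| / m :=
  abs_sub_le_iff.2 ⟨log_sub_log_le_abs_sub_div hm (hm.trans_le hx) hy,
    abs_sub_comm x y ▸ log_sub_log_le_abs_sub_div hm (hm.trans_le hy) hx⟩

set_option exponentiation.threshold 1000 in
lemma twelve_mul_scale_add_le : 12 * (scale : ℝ) + 12 ≤ 3 ^ 1000 := by
  have hscale : (scale : ℝ) ≤ 3 ^ 800 := mod_cast scale_le_three_pow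
  have : (1 : ℝ) ≤ 3 ^ 800 := one_le_pow₀ (by norm_num)
  calc 12 * (scale : ℝ) + 12 ≤ 3 ^ 3 * 3 ^ 800 := by linarith
    _ = 3 ^ 803 := (pow_add 3 3 800).symm
    _ ≤ 3 ^ 1000 := pow_le_pow_right₀ (by norm_num) (by norm_num)

lemma IsDominantRoot.three_pow_le_pow (h : IsDominantRoot k α) (hn : 2000 ≤ n) :
    3 ^ 1000 ≤ α ^ n :=
  calc (3 : ℝ) ^ 1000 ≤ (α ^ 2) ^ 1000 := by
        gcongr
        nlinarith [h.lower]
    _ = α ^ 2000 := (pow_mul α 2 1000).symm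
    _ ≤ α ^ n := pow_le_pow_right₀ h.one_lt.le hn

namespace ApproxLucasEq

lemma abs_linear_form_log_le (h : ApproxLucasEq k n d b α) (hn : 2000 ≤ n) :
    |n * Real.log α - d * Real.log 10 -
      (Real.log b + Real.log (lucasDen k α / lucasNum α))| ≤ 1 / scale := by
  have hscale : (0 : ℝ) < scale := mod_cast scale_pos
  have hb : (0 : ℝ) < b := mod_cast one_pos.trans_le h.one_le
  have hden : 0 < lucasDen k α := one_pos.trans_le h.root.one_le_lucasDen
  have hnum := h.root.lucasNum_pos
  have hα := h.root.pos
  have hrhs : 12 * (scale : ℝ) + 12 ≤ lucasNum α * α ^ n :=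
    (twelve_mul_scale_add_le.trans (h.root.three_pow_le_pow hn)).trans
      (le_mul_of_one_le_left (by positivity) (by linarith [h.root.two_lt_lucasNum]))
  have hlhs : 12 * (scale : ℝ) ≤ b * lucasDen k α * 10 ^ d := by
    linarith [(abs_le.1 h.abs_sub_le).1]
  have hexpand : n * Real.log α - d * Real.log 10 -
      (Real.log b + Real.log (lucasDen k α / lucasNum α)) =
      Real.log (lucasNum α * α ^ n) - Real.log (b * lucasDen k α * 10 ^ d) := by
    rw [Real.log_mul hnum.ne' (by positivity), Real.log_mul (by positivity) (by positivity),
      Real.log_mul hb.ne' hden.ne', Real.log_div hden.ne' hnum.ne', Real.log_pow, Real.log_pow]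
    ring
  rw [hexpand, abs_sub_comm]
  calc _ ≤ _ := abs_log_sub_log_le (by positivity) hlhs (by linarith)
    _ ≤ 12 / (12 * scale) := by gcongr; exact h.abs_sub_le
    _ = 1 / scale := by field_simp

end ApproxLucasEq

lemma IsFixedApprox.abs_linear_form_le {S A T C N : ℕ} {x y z δ : ℝ} (hS : 0 < S)
    (hA : IsFixedApprox S δ A x) (hT : IsFixedApprox S δ T y) (hC : IsFixedApprox S δ C z)
    (hN : 1 ≤ N) (hδ : 1 ≤ δ) (hn : n ≤ N) (hd : d ≤ n) (h : |n * x - d * y - z| ≤ 1 / S) :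
    |(n : ℝ) * A - d * T - C| ≤ 4 * (N * δ) := by
  have hS' : (0 : ℝ) < S := mod_cast hS
  have hN' : (1 : ℝ) ≤ N := mod_cast hN
  have hsplit : (n : ℝ) * A - d * T - C =
      n * (A - S * x) - d * (T - S * y) - (C - S * z) + S * (n * x - d * y - z) := by
    ring
  calc |(n : ℝ) * A - d * T - C|
      ≤ n * |A - S * x| + d * |T - S * y| + |C - S * z| + S * |n * x - d * y - z| := by
        rw [hsplit, ← Nat.abs_cast n, ← Nat.abs_cast d, ← Nat.abs_cast S, ← abs_mul, ← abs_mul,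
          ← abs_mul, Nat.abs_cast, Nat.abs_cast, Nat.abs_cast]
        refine (abs_add_le _ _).trans (add_le_add_left ?_ _)
        exact (abs_sub _ _).trans (add_le_add_left (abs_sub _ _) _)
    _ ≤ N * δ + N * δ + δ + S * (1 / S) := by
        gcongr
        exacts [hA, hd.trans hn, hT, hC]
    _ ≤ 4 * (N * δ) := by
        rw [mul_one_div_cancel hS'.ne']
        nlinarith

set_option exponentiation.threshold 550 in
theorem not_approxLucasEq_of_lt_two_pow (hk : k < 1538) (hn : 2000 ≤ n) (hn' : n < 2 ^ 512) :
    ¬ApproxLucasEq k n d b α := by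
  intro h
  lift b to ℕ using zero_le_one.trans h.one_le
  have hb1 : 1 ≤ b := mod_cast h.one_le
  have hb9 : b ≤ 9 := mod_cast h.le_nine
  obtain ⟨A, G, hA, hG, hexcl⟩ :=
    h.root.exists_of_excludesOrder (by lia) (excludesOrder_of_lt h.root.three_le hk)
  have hlow : (2 : ℝ) ^ 550 < |(n : ℝ) * A - d * fixedLogTen - (fixedLogDigit b + G : ℕ)| := by
    have hlt := Int.cast_lt (R := ℝ).2 <|
      two_pow_lt_abs_of_excludesDigits (d := d) hexcl hb1 hb9 (by lia) hn'
    rwa [Int.cast_pow, Int.cast_abs, Int.cast_sub, Int.cast_sub, Int.cast_mul, Int.cast_mul] at hlt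
  refine hlow.not_ge ?_
  have hC := (isFixedApprox_fixedLogDigit hb1 hb9).add hG
  have hup := IsFixedApprox.abs_linear_form_le scale_pos (δ := 2 ^ 36) (hA.mono (by norm_num))
    (isFixedApprox_fixedLogTen.mono (by norm_num)) (hC.mono (by norm_num))
    Nat.one_le_two_pow (one_le_pow₀ one_le_two) hn'.le (h.exponent_le (by linarith))
    (mod_cast h.abs_linear_form_log_le hn)
  rw [Nat.cast_pow, Nat.cast_ofNat, (by norm_num : (4 : ℝ) = 2 ^ 2), ← pow_add, ← pow_add] at hup
  exact hup

end SmallIndex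


section MainBound

variable {k n d ℓ : ℕ}

lemma lt_of_two_pow_succ_le_six_mul_pow (h : 2 ^ (k + 1) ≤ 6 * n ^ 3) (hn : n < 2 ^ ℓ) :
    k < 3 * ℓ + 2 := by
  have hlt : 2 ^ (k + 1) < 2 ^ (3 * ℓ + 3) :=
    calc 2 ^ (k + 1) ≤ 6 * n ^ 3 := h
      _ < 8 * (2 ^ ℓ) ^ 3 :=
        Nat.mul_lt_mul_of_lt_of_le (by norm_num) (Nat.pow_le_pow_left hn.le 3) (by positivity)
      _ = 2 ^ (3 * ℓ + 3) := by ring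
  have := (Nat.pow_lt_pow_iff_right one_lt_two).1 hlt
  lia

lemma max_le_mul_pow_four_mul_log_pow_four (hk : 2 ≤ k) :
    ((max 2000 (16 * k) : ℕ) : ℝ) ≤ 2.1 * 10 ^ 17 * k ^ 4 * Real.log k ^ 4 := by
  have hk' : (2 : ℝ) ≤ k := mod_cast hk
  have hlog : 1 / 2 ≤ Real.log k := by
    linarith [Real.log_two_gt_d9, Real.log_le_log two_pos hk']
  push_cast
  calc max 2000 (16 * k : ℝ) ≤ 2.1 * 10 ^ 17 * k * (1 / 2) ^ 4 :=
        max_le (by linarith) (by linarith)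
    _ ≤ 2.1 * 10 ^ 17 * k ^ 4 * Real.log k ^ 4 := by
      gcongr
      exact le_self_pow₀ (by linarith) four_ne_zero

set_option exponentiation.threshold 512 in
theorem n_bound_b_pow_ten_general {b : ℤ} (hk : 2 ≤ k) (hb1 : 1 ≤ b) (hb9 : b ≤ 9) (hd : d ≠ 0)
    (heq : lucasL k n = b * 10 ^ d) : n < max 2000 (16 * k) := by
  by_contra! hn
  obtain ⟨hn2000, hnk⟩ := max_le_iff.1 hn
  rcases hk.eq_or_lt with rfl | hk3
  · exact not_five_dvd_lucasL_two n (heq ▸ (dvd_pow (by norm_num) hd).mul_left b)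
  obtain ⟨α, hα⟩ := exists_isDominantRoot hk3
  have happrox : ApproxLucasEq k n d b α := .of_lucasL_eq hα hb1 hb9 heq
  have hdk : 2 * k ≤ d := by linarith [happrox.le_eight_mul_exponent (by linarith)]
  have hkn : 2 ^ (k + 1) ≤ 6 * n ^ 3 := by
    refine two_pow_succ_le_of_two_pow_dvd_lucasL hk3 (by linarith) (heq ▸ Dvd.dvd.mul_left ?_ b)
    exact (pow_dvd_pow 2 hdk).trans (pow_dvd_pow_of_dvd (by norm_num) d)
  rcases lt_or_ge (Nat.log 2 n) 512 with hsmall | hlarge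
  · have hlt := Nat.lt_pow_of_log_lt one_lt_two hsmall
    exact not_approxLucasEq_of_lt_two_pow (lt_of_two_pow_succ_le_six_mul_pow hkn hlt) hn2000 hlt
      happrox
  · have hlt : n < 2 ^ (Nat.log 2 n + 1) := Nat.lt_pow_succ_log_self one_lt_two n
    have := lt_of_two_pow_succ_le_six_mul_pow hkn hlt
    exact not_approxLucasEq_of_two_pow_le hlarge (by linarith)
      (Nat.pow_log_le_self 2 (by linarith)) hlt happrox

end MainBound

/-- If `L_n^{(k)} = b·10^d` with `1 ≤ b ≤ 9` and `d ≥ 2`, then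
`n < 2.1·10^{17} k^4 (log k)^4`. -/
theorem n_bound_b_pow_ten (k n d : ℕ) (b : ℤ) (hk : 2 ≤ k) (hn : 5 < n)
    (hb1 : 1 ≤ b) (hb9 : b ≤ 9) (hd : 2 ≤ d)
    (heq : lucasL k n = b * 10 ^ d) :
    (n : ℝ) < 2.1 * 10 ^ 17 * (k : ℝ) ^ 4 * Real.log k ^ 4 := by
  have hlt := n_bound_b_pow_ten_general hk hb1 hb9 (by lia) heq
  exact (Nat.cast_lt.2 hlt).trans_le (max_le_mul_pow_four_mul_log_pow_four hk)
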